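/- arXiv:1410.8260 — 2 statements merged into one kernel-verified Lean document; each statement's English description precedes it below -/
import Mathlib

section
/- Fix k ∈ {1,…,p−1} and let Λ̃_k = ⟨U_k V_kᵀ, B⟩ = U_kᵀ B V_k, where U_k and V_k are the k-th columns of U and V. Then the statistic S_{k,Λ̃_k} = (∫_{d_k}^{d_{k−1}} e^{−(z−Λ̃_k)²/(2σ²)} z^{N−p} ∏_{j≤p, j≠k} |z² − d_j²| dz) / (∫_{d_{k+1}}^{d_{k−1}} e^{−(z−Λ̃_k)²/(2σ²)} z^{N−p} ∏_{j≤p, j≠k} |z² − d_j²| dz) is uniformly distributed on (0,1). -/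
open MeasureTheory ProbabilityTheory Matrix

namespace CSV

lemma oneD_deriv (G : Set ℝ) (hGo : IsOpen G) (f : ℝ → ℝ) (hf : Continuous f)
    (hInt : IntegrableOn f G) (z : ℝ) (hz : z ∈ G) :
    HasDerivAt (fun z => ∫ t in G ∩ Set.Ioi z, f t) (-f z) z := by
  have hm : MeasurableSet G := hGo.measurableSet
  have hi : Integrable (G.indicator f) := hInt.integrable_indicator hm
  have e1 : ∀ x, ∫ t in G ∩ Set.Ioi x, f t = (∫ t in Set.Ioi z, G.indicator f t) -
      ∫ t in z..x, G.indicator f t := by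
    intro x
    have h1 : ∫ t in G ∩ Set.Ioi x, f t = ∫ t in Set.Ioi x, G.indicator f t := by
      rw [integral_indicator hm, Measure.restrict_restrict hm]
    rw [h1]
    have := intervalIntegral.integral_Ioi_sub_Ioi' (f := G.indicator f) (a := z) (b := x)
      (μ := volume) hi.integrableOn hi.integrableOn
    linarith
  simp_rw [e1]
  have hnear : ∀ᶠ x in nhds z, G.indicator f x = f x := by
    filter_upwards [hGo.mem_nhds hz] with x hx
    simp [hx]
  have hc : ContinuousAt (G.indicator f) z := by
    refine hf.continuousAt.congr ?_
    filter_upwards [hnear] with x hx using hx.symm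
  have hd := intervalIntegral.integral_hasDerivAt_right (f := G.indicator f) (a := z) (b := z)
    (by simp) (hi.aestronglyMeasurable.stronglyMeasurableAtFilter) hc
  have := hd.const_sub (∫ t in Set.Ioi z, G.indicator f t)
  simpa [hz] using this

lemma oneD_pos (H : Set ℝ) (hHo : IsOpen H) (hne : H.Nonempty) (f : ℝ → ℝ)
    (hpos : ∀ z ∈ H, 0 < f z) (hInt : IntegrableOn f H) : 0 < ∫ t in H, f t := by
  rw [setIntegral_pos_iff_support_of_nonneg_ae]
  · have : Function.support f ∩ H = H := by
      ext x; constructor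
      · exact fun h => h.2
      · exact fun h => ⟨(hpos x h).ne', h⟩
    rw [this]
    exact hHo.measure_pos volume hne
  · filter_upwards [ae_restrict_mem hHo.measurableSet] with x hx using (hpos x hx).le
  · exact hInt

lemma oneD (G : Set ℝ) (hGo : IsOpen G) (hGc : G.OrdConnected) (f : ℝ → ℝ) (hf : Continuous f)
    (hpos : ∀ z ∈ G, 0 < f z) (hInt : IntegrableOn f G) (hne : G.Nonempty)
    (A : Set ℝ) (hA : MeasurableSet A) :
    ∫⁻ z in G, ENNReal.ofReal (f z) *
      A.indicator 1 ((∫ t in G ∩ Set.Ioi z, f t) / (∫ t in G, f t))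
      = ENNReal.ofReal (∫ t in G, f t) * volume (A ∩ Set.Ioo 0 1) := by
  set C := ∫ t in G, f t with hC
  have hCpos : 0 < C := oneD_pos G hGo hne f hpos hInt
  set S : ℝ → ℝ := fun z => (∫ t in G ∩ Set.Ioi z, f t) / C with hS
  have hder : ∀ z ∈ G, HasDerivAt S (-f z / C) z := fun z hz =>
    (oneD_deriv G hGo f hf hInt z hz).div_const C
  have hm := hGo.measurableSet
  have hsplit : ∀ x y, x ∈ G → y ∈ G → x < y → S y < S x := by
    intro x y hx hy hxy
    have hsub : G ∩ Set.Ioi x = (G ∩ Set.Ioi y) ∪ (G ∩ Set.Ioc x y) := by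
      ext t; simp only [Set.mem_inter_iff, Set.mem_Ioi, Set.mem_union, Set.mem_Ioc]
      constructor
      · rintro ⟨h1, h2⟩
        rcases lt_or_ge y t with h | h
        · exact Or.inl ⟨h1, h⟩
        · exact Or.inr ⟨h1, h2, h⟩
      · rintro (⟨h1, h2⟩ | ⟨h1, h2, h3⟩)
        · exact ⟨h1, hxy.trans h2⟩
        · exact ⟨h1, h2⟩
    have : ∫ t in G ∩ Set.Ioi x, f t = (∫ t in G ∩ Set.Ioi y, f t) + ∫ t in G ∩ Set.Ioc x y, f t := by
      rw [hsub, setIntegral_union]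
      · rw [Set.disjoint_left]; rintro t ⟨_, h1⟩ ⟨_, h2⟩
        exact absurd h2.2 (not_le.2 h1)
      · exact hm.inter measurableSet_Ioc
      · exact hInt.mono_set Set.inter_subset_left
      · exact hInt.mono_set Set.inter_subset_left
    have hp : 0 < ∫ t in G ∩ Set.Ioc x y, f t := by
      have h1 : 0 < ∫ t in G ∩ Set.Ioo x y, f t := by
        refine oneD_pos _ (hGo.inter isOpen_Ioo) ?_ f (fun z hz => hpos z hz.1)
          (hInt.mono_set Set.inter_subset_left)
        obtain ⟨w, hw⟩ := exists_between hxy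
        exact ⟨w, hGc.out hx hy ⟨hw.1.le, hw.2.le⟩, hw⟩
      refine h1.trans_le ?_
      refine setIntegral_mono_set (hInt.mono_set Set.inter_subset_left) ?_ ?_
      · filter_upwards [ae_restrict_mem (hm.inter measurableSet_Ioc)] with t ht
          using (hpos t ht.1).le
      · exact (Set.inter_subset_inter_right _ Set.Ioo_subset_Ioc_self).eventuallyLE
    simp only [hS]
    rw [this]
    gcongr
    linarith
  have hinj : Set.InjOn S G := by
    intro x hx y hy hxy
    rcases lt_trichotomy x y with h | h | h
    · exact absurd hxy (hsplit x y hx hy h).ne'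
    · exact h
    · exact absurd hxy (hsplit y x hy hx h).ne
  have hmem : ∀ z ∈ G, S z ∈ Set.Ioo (0:ℝ) 1 := by
    intro z hz
    obtain ⟨ε, hε, hball⟩ := Metric.isOpen_iff.1 hGo z hz
    have h1 : z + ε / 2 ∈ G := hball (by simp [abs_of_pos hε]; exact hε)
    have h2 : z - ε / 2 ∈ G := hball (by simp [abs_of_pos hε]; exact hε)
    have h0 : ∀ w, 0 ≤ S w := fun w => by
      refine div_nonneg (setIntegral_nonneg (hm.inter measurableSet_Ioi) fun t ht => (hpos t ht.1).le) hCpos.le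
    have h3 : ∀ w, S w ≤ 1 := fun w => by
      refine div_le_one_of_le₀ ?_ hCpos.le
      refine setIntegral_mono_set hInt ?_ (Set.inter_subset_left).eventuallyLE
      filter_upwards [ae_restrict_mem hm] with t ht using (hpos t ht).le
    exact ⟨(h0 _).trans_lt (hsplit z _ hz h1 (by linarith)),
      (hsplit _ z h2 hz (by linarith)).trans_le (h3 _)⟩
  have hcov := fun g => lintegral_image_eq_lintegral_abs_deriv_mul hm
    (fun z hz => (hder z hz).hasDerivWithinAt) hinj g
  have habs : ∀ z ∈ G, ENNReal.ofReal |-f z / C| = ENNReal.ofReal (f z) / ENNReal.ofReal C := by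
    intro z hz
    rw [neg_div, abs_neg, abs_of_pos (div_pos (hpos z hz) hCpos), ENNReal.ofReal_div_of_pos hCpos]
  have hC0 : ENNReal.ofReal C ≠ 0 := by simpa using hCpos
  have hvol : volume (S '' G) = 1 := by
    have := hcov 1
    simp only [Pi.one_apply, lintegral_one, mul_one, Measure.restrict_apply_univ] at this
    rw [this, setLIntegral_congr_fun hm habs]
    simp_rw [div_eq_mul_inv]
    rw [lintegral_mul_const' _ _ (ENNReal.inv_ne_top.2 hC0),
      ← ofReal_integral_eq_lintegral_ofReal hInt
        (by filter_upwards [ae_restrict_mem hm] with t ht using (hpos t ht).le)]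
    exact ENNReal.mul_inv_cancel hC0 ENNReal.ofReal_ne_top
  have himg : MeasurableSet (S '' G) :=
    measurable_image_of_fderivWithin hm (fun z hz => (hder z hz).hasDerivWithinAt.hasFDerivWithinAt) hinj
  have hae : (S '' G : Set ℝ) =ᵐ[volume] Set.Ioo (0:ℝ) 1 := by
    refine ae_eq_of_subset_of_measure_ge (Set.image_subset_iff.2 hmem) ?_ himg.nullMeasurableSet ?_
    · simp [hvol]
    · simp
  have h1 := hcov (A.indicator 1)
  rw [Measure.restrict_congr_set hae, lintegral_indicator_one hA, Measure.restrict_apply hA] at h1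
  rw [h1, ← lintegral_const_mul' _ _ ENNReal.ofReal_ne_top]
  refine setLIntegral_congr_fun hm fun z hz => ?_
  rw [habs z hz, ← mul_assoc, ENNReal.mul_div_cancel hC0 ENNReal.ofReal_ne_top]

end CSV

namespace CSV
open scoped ENNReal

lemma lintegral_fin_prod {n : ℕ} {E : Fin n → Type*}
    {mE : ∀ i, MeasurableSpace (E i)} {μ : (i : Fin n) → Measure (E i)} [∀ i, SigmaFinite (μ i)]
    (f : (i : Fin n) → E i → ℝ≥0∞) (hf : ∀ i, Measurable (f i)) :
    ∫⁻ x : (i : Fin n) → E i, ∏ i, f i (x i) ∂(Measure.pi μ) = ∏ i, ∫⁻ x, f i x ∂(μ i) := by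
  induction n with
  | zero => simp
  | succ n n_ih =>
      have hme : Measurable (fun x : (i : Fin n) → E (Fin.succ i) =>
          ∏ i : Fin n, f (Fin.succ i) (x i)) :=
        Finset.measurable_prod _ fun i _ => (hf _).comp (measurable_pi_apply i)
      have h1 : ∫⁻ x : (i : Fin (n+1)) → E i, ∏ i, f i (x i) ∂(Measure.pi μ) =
          ∫⁻ x : E 0 × ((i : Fin n) → E (Fin.succ i)),
            f 0 x.1 * ∏ i : Fin n, f (Fin.succ i) (x.2 i)
            ∂((μ 0).prod (Measure.pi (fun i ↦ μ i.succ))) := by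
        refine Eq.trans ?_ ((measurePreserving_piFinSuccAbove μ 0).lintegral_comp
          (((hf 0).comp measurable_fst).mul (hme.comp measurable_snd)))
        refine lintegral_congr fun x => ?_
        rw [Fin.prod_univ_succ]
        rfl
      rw [h1, lintegral_prod_mul (hf 0).aemeasurable hme.aemeasurable, n_ih _ (fun i => hf _),
        Fin.prod_univ_succ]

lemma pi_withDensity {n : ℕ} {E : Fin n → Type*}
    {mE : ∀ i, MeasurableSpace (E i)} {μ : (i : Fin n) → Measure (E i)} [∀ i, SigmaFinite (μ i)]
    (f : (i : Fin n) → E i → ℝ≥0∞) (hf : ∀ i, Measurable (f i))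
    [∀ i, SigmaFinite ((μ i).withDensity (f i))] :
    Measure.pi (fun i => (μ i).withDensity (f i)) =
      (Measure.pi μ).withDensity (fun x => ∏ i, f i (x i)) := by
  refine Measure.pi_eq fun s hs => ?_
  rw [withDensity_apply _ (MeasurableSet.univ_pi hs), Measure.restrict_pi_pi,
    lintegral_fin_prod f hf]
  refine Finset.prod_congr rfl fun i _ => ?_
  rw [withDensity_apply _ (hs i)]

lemma gauss_law {N p : ℕ} (B : Fin N → Fin p → ℝ) (v : NNReal) (hv : v ≠ 0) :
    Measure.pi (fun i : Fin N => Measure.pi (fun j : Fin p => gaussianReal (B i j) v)) =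
    (volume : Measure (Fin N → Fin p → ℝ)).withDensity
      (fun Y => ∏ i, ∏ j, gaussianPDF (B i j) v (Y i j)) := by
  have h1 : ∀ i, Measure.pi (fun j : Fin p => gaussianReal (B i j) v) =
      (volume : Measure (Fin p → ℝ)).withDensity (fun y => ∏ j, gaussianPDF (B i j) v (y j)) := by
    intro i
    have this0 : ∀ j, gaussianReal (B i j) v = volume.withDensity (gaussianPDF (B i j) v) := fun j =>
      gaussianReal_of_var_ne_zero _ hv
    have : ∀ j, SigmaFinite ((volume : Measure ℝ).withDensity (gaussianPDF (B i j) v)) := by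
      intro j; rw [← this0 j]; infer_instance
    simp_rw [this0]
    rw [pi_withDensity (μ := fun _ : Fin p => (volume : Measure ℝ)) _ (fun j => measurable_gaussianPDF _ _)]
    rfl
  have : ∀ i, SigmaFinite ((volume : Measure (Fin p → ℝ)).withDensity
      (fun y => ∏ j, gaussianPDF (B i j) v (y j))) := by
    intro i; rw [← h1 i]; infer_instance
  simp_rw [h1]
  rw [pi_withDensity (μ := fun _ : Fin N => (volume : Measure (Fin p → ℝ)))
    (fun i y => ∏ j, gaussianPDF (B i j) v (y j))]
  · rfl
  · intro i
    exact Finset.measurable_prod _ fun j _ => (measurable_gaussianPDF _ _).comp (measurable_pi_apply j)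

lemma core {E : Type*} [MeasurableSpace E] (μ : Measure E) [SFinite μ] (M : Set E)
    (hM : MeasurableSet M) (Mc : ℝ → Set E)
    (hMc : MeasurableSet {x : E × ℝ | x.1 ∈ Mc x.2}) (hsub : ∀ c, Mc c ⊆ M)
    (Φ : ℝ → E → E) (hΦ : Measurable (fun x : E × ℝ => Φ x.2 x.1))
    (pd f T C : E → ℝ≥0∞) (hpd : Measurable pd) (hf : Measurable f) (hT : Measurable T)
    (hCm : Measurable C) (w : ℝ → E → ℝ≥0∞)
    (hcov : ∀ c, ∀ g : E → ℝ≥0∞,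
      ∫⁻ Y in Mc (-c), g Y ∂μ = ∫⁻ Y in Mc c, w c Y * g (Φ c Y) ∂μ)
    (hinv : ∀ c, ∀ Y ∈ Mc c, Φ (-c) (Φ c Y) = Y)
    (hCinv : ∀ c, ∀ Y ∈ Mc c, C (Φ c Y) = C Y)
    (hw : ∀ c, ∀ Y ∈ Mc c, w c Y * pd (Φ c Y) * f Y = pd Y * f (Φ c Y))
    (hC : ∀ Y ∈ M, C Y = ∫⁻ c, (Mc c).indicator (fun Y => f (Φ c Y)) Y)
    (hC0 : ∀ Y ∈ M, C Y ≠ 0) (hCt : ∀ Y ∈ M, C Y ≠ ∞) :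
    ∫⁻ Y in M, pd Y * T Y ∂μ = ∫⁻ Y in M, pd Y * (C Y)⁻¹ *
      ∫⁻ c : ℝ, (Mc c).indicator (fun Y => f (Φ c Y) * T (Φ c Y)) Y ∂volume ∂μ := by
  have hMcc : ∀ c, MeasurableSet (Mc c) := fun c =>
    hMc.preimage (measurable_id.prodMk measurable_const : Measurable fun Y : E => (Y, c))
  have hΦc : ∀ c, Measurable (Φ c) := fun c =>
    hΦ.comp (measurable_id.prodMk measurable_const : Measurable fun Y : E => (Y, c))
  have indM : ∀ (h : E × ℝ → ℝ≥0∞), Measurable h →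
      Measurable (fun x : E × ℝ => (Mc x.2).indicator (fun Y => h (Y, x.2)) x.1) := by
    intro h hh
    have : (fun x : E × ℝ => (Mc x.2).indicator (fun Y => h (Y, x.2)) x.1) =
        {x : E × ℝ | x.1 ∈ Mc x.2}.indicator h := by
      ext x; simp [Set.indicator]
    rw [this]; exact hh.indicator hMc
  have hneg : Measurable (fun x : E × ℝ => ((x.1, -x.2) : E × ℝ)) :=
    measurable_fst.prodMk measurable_snd.neg
  calc ∫⁻ Y in M, pd Y * T Y ∂μ
      = ∫⁻ Y in M, ∫⁻ c : ℝ, pd Y * T Y * (C Y)⁻¹ * (Mc (-c)).indicator (fun Y => f (Φ (-c) Y)) Y ∂volume ∂μ := by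
        refine setLIntegral_congr_fun hM fun Y hY => ?_
        have e : ∫⁻ c, (Mc (-c)).indicator (fun Y => f (Φ (-c) Y)) Y = C Y := by
          rw [hC Y hY]
          exact lintegral_neg_eq_self (μ := volume) (fun c => (Mc c).indicator (fun Y => f (Φ c Y)) Y)
        have hmm : Measurable fun c : ℝ => (Mc (-c)).indicator (fun Y => f (Φ (-c) Y)) Y :=
          ((indM _ (hf.comp hΦ)).comp hneg).comp
            (measurable_const.prodMk measurable_id : Measurable fun c : ℝ => (Y, c))
        beta_reduce
        rw [lintegral_const_mul _ hmm, e, mul_assoc, ENNReal.inv_mul_cancel (hC0 Y hY) (hCt Y hY), mul_one]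
    _ = ∫⁻ Y, ∫⁻ c, pd Y * T Y * (C Y)⁻¹ * (Mc (-c)).indicator (fun Y => f (Φ (-c) Y)) Y ∂volume ∂μ := by
        rw [← lintegral_indicator hM]
        refine lintegral_congr fun Y => ?_
        by_cases hY : Y ∈ M
        · simp [hY]
        · have : ∀ c, Y ∉ Mc c := fun c h => hY (hsub c h)
          simp [hY, this]
    _ = ∫⁻ c : ℝ, ∫⁻ Y, pd Y * T Y * (C Y)⁻¹ * (Mc (-c)).indicator (fun Y => f (Φ (-c) Y)) Y ∂μ := by
        refine lintegral_lintegral_swap ?_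
        refine Measurable.aemeasurable ?_
        exact ((hpd.mul hT).mul hCm.inv |>.comp measurable_fst).mul ((indM _ (hf.comp hΦ)).comp hneg)
    _ = ∫⁻ c : ℝ, ∫⁻ Y, pd Y * (C Y)⁻¹ * (Mc c).indicator (fun Y => f (Φ c Y) * T (Φ c Y)) Y ∂μ := by
        refine lintegral_congr fun c => ?_
        have e1 : ∫⁻ Y, pd Y * T Y * (C Y)⁻¹ * (Mc (-c)).indicator (fun Y => f (Φ (-c) Y)) Y ∂μ =
            ∫⁻ Y in Mc (-c), pd Y * T Y * (C Y)⁻¹ * f (Φ (-c) Y) ∂μ := by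
          rw [← lintegral_indicator (hMcc _)]
          refine lintegral_congr fun Y => ?_
          by_cases hY : Y ∈ Mc (-c) <;> simp [hY]
        have e2 : ∫⁻ Y, pd Y * (C Y)⁻¹ * (Mc c).indicator (fun Y => f (Φ c Y) * T (Φ c Y)) Y ∂μ =
            ∫⁻ Y in Mc c, pd Y * (C Y)⁻¹ * (f (Φ c Y) * T (Φ c Y)) ∂μ := by
          rw [← lintegral_indicator (hMcc _)]
          refine lintegral_congr fun Y => ?_
          by_cases hY : Y ∈ Mc c <;> simp [hY]
        rw [e1, e2, hcov c]
        refine setLIntegral_congr_fun (hMcc c) fun Y hY => ?_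
        beta_reduce
        rw [hinv c Y hY, hCinv c Y hY]
        calc w c Y * (pd (Φ c Y) * T (Φ c Y) * (C Y)⁻¹ * f Y)
            = (w c Y * pd (Φ c Y) * f Y) * (T (Φ c Y) * (C Y)⁻¹) := by ring
          _ = _ := by rw [hw c Y hY]; ring
    _ = ∫⁻ Y, ∫⁻ c, pd Y * (C Y)⁻¹ * (Mc c).indicator (fun Y => f (Φ c Y) * T (Φ c Y)) Y ∂volume ∂μ := by
        refine (lintegral_lintegral_swap (f := fun Y c => pd Y * (C Y)⁻¹ *
          (Mc c).indicator (fun Y => f (Φ c Y) * T (Φ c Y)) Y) ?_).symm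
        refine Measurable.aemeasurable ?_
        exact (hpd.mul hCm.inv |>.comp measurable_fst).mul
          (indM _ ((hf.comp hΦ).mul (hT.comp hΦ)))
    _ = _ := by
        rw [← lintegral_indicator hM]
        refine lintegral_congr fun Y => ?_
        have hmm : Measurable fun c : ℝ => (Mc c).indicator (fun Y => f (Φ c Y) * T (Φ c Y)) Y :=
          (indM _ ((hf.comp hΦ).mul (hT.comp hΦ))).comp
            (measurable_const.prodMk measurable_id : Measurable fun c : ℝ => (Y, c))
        rw [lintegral_const_mul _ hmm]
        by_cases hY : Y ∈ M
        · simp [hY]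
        · have : ∀ c, Y ∉ Mc c := fun c h => hY (hsub c h)
          simp [hY, this]

end CSV

namespace CSV

/-- A polynomial in the entries of `Y` that does not vanish iff the singular values of `Y` are
positive and pairwise distinct. -/
def qpoly {N p : ℕ} {R : Type*} [CommRing R] (Y : Matrix (Fin N) (Fin p) R) : R :=
  det (Matrix.of fun i j : Fin p => trace ((Yᵀ * Y) ^ ((i : ℕ) + (j : ℕ)))) * det (Yᵀ * Y)

/-- Strict singular value decomposition. -/
structure SSVD {N p : ℕ} (Y U : Matrix (Fin N) (Fin p) ℝ) (d : Fin p → ℝ)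
    (V : Matrix (Fin p) (Fin p) ℝ) : Prop where
  eq : Y = U * diagonal d * Vᵀ
  hU : Uᵀ * U = 1
  hV : Vᵀ * V = 1
  anti : StrictAnti d
  pos : ∀ i, 0 < d i

lemma gram_eq {N p : ℕ} {Y U : Matrix (Fin N) (Fin p) ℝ} {d : Fin p → ℝ}
    {V : Matrix (Fin p) (Fin p) ℝ} (h : Y = U * diagonal d * Vᵀ) (hU : Uᵀ * U = 1) :
    Yᵀ * Y = V * diagonal (fun i => d i ^ 2) * Vᵀ := by
  have e : diagonal (fun i => d i ^ 2) = diagonal d * diagonal d := by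
    rw [diagonal_mul_diagonal]; simp [sq]
  rw [h, e]
  simp only [transpose_mul, transpose_transpose, diagonal_transpose]
  calc V * (diagonal d * Uᵀ) * (U * diagonal d * Vᵀ)
      = V * diagonal d * (Uᵀ * U) * diagonal d * Vᵀ := by simp only [Matrix.mul_assoc]
    _ = _ := by rw [hU]; simp only [Matrix.mul_assoc, Matrix.one_mul]

lemma qpoly_eq {N p : ℕ} {Y : Matrix (Fin N) (Fin p) ℝ} {e : Fin p → ℝ}
    {V : Matrix (Fin p) (Fin p) ℝ} (h : Yᵀ * Y = V * diagonal e * Vᵀ) (hV : Vᵀ * V = 1) :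
    qpoly Y = (vandermonde e).det ^ 2 * ∏ i, e i := by
  have hV' : V * Vᵀ = 1 := mul_eq_one_comm.1 hV
  have hpow : ∀ m : ℕ, (Yᵀ * Y) ^ m = V * diagonal (fun i => e i ^ m) * Vᵀ := by
    intro m
    induction m with
    | zero => simp [hV']
    | succ m ih =>
      rw [pow_succ, ih, h]
      calc V * diagonal (fun i => e i ^ m) * Vᵀ * (V * diagonal e * Vᵀ)
          = V * (diagonal (fun i => e i ^ m) * (Vᵀ * V) * diagonal e) * Vᵀ := by
            simp only [Matrix.mul_assoc]
        _ = _ := by rw [hV, Matrix.mul_one, diagonal_mul_diagonal]; simp [pow_succ]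
  have htr : ∀ m : ℕ, trace ((Yᵀ * Y) ^ m) = ∑ i, e i ^ m := by
    intro m
    rw [hpow, Matrix.mul_assoc, trace_mul_comm, Matrix.mul_assoc, hV, Matrix.mul_one, trace_diagonal]
  have h1 : (Matrix.of fun i j : Fin p => trace ((Yᵀ * Y) ^ ((i : ℕ) + (j : ℕ)))) =
      (vandermonde e)ᵀ * vandermonde e := by
    ext i j
    rw [vandermonde_transpose_mul_vandermonde]
    simp [htr]
  have h2 : det (Yᵀ * Y) = ∏ i, e i := by
    rw [h, det_mul, det_mul, mul_comm, ← mul_assoc, ← det_mul, hV, det_one, one_mul, det_diagonal]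
  rw [qpoly, h1, h2, det_mul, det_transpose, sq]

lemma strict_of_qpoly {N p : ℕ} {Y U : Matrix (Fin N) (Fin p) ℝ} {d : Fin p → ℝ}
    {V : Matrix (Fin p) (Fin p) ℝ} (h : Y = U * diagonal d * Vᵀ) (hU : Uᵀ * U = 1)
    (hV : Vᵀ * V = 1) (hanti : Antitone d) (h0 : ∀ i, 0 ≤ d i) (hq : qpoly Y ≠ 0) :
    SSVD Y U d V := by
  rw [qpoly_eq (gram_eq h hU) hV] at hq
  have h1 := pow_ne_zero_iff (n := 2) (by norm_num) |>.1 (left_ne_zero_of_mul hq)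
  have h2 := right_ne_zero_of_mul hq
  rw [det_vandermonde_ne_zero_iff] at h1
  refine ⟨h, hU, hV, hanti.strictAnti_of_injective ?_, fun i => ?_⟩
  · intro i j hij
    exact h1 (by simp [hij])
  · have := Finset.prod_ne_zero_iff.1 h2 i (Finset.mem_univ _)
    exact (h0 i).lt_of_ne' (by intro h; simp [h] at this)

lemma SSVD.q {N p : ℕ} {Y U : Matrix (Fin N) (Fin p) ℝ} {d : Fin p → ℝ}
    {V : Matrix (Fin p) (Fin p) ℝ} (h : SSVD Y U d V) : qpoly Y ≠ 0 := by
  rw [qpoly_eq (gram_eq h.eq h.hU) h.hV]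
  refine mul_ne_zero (pow_ne_zero _ ?_) ?_
  · rw [det_vandermonde_ne_zero_iff]
    intro i j hij
    have := (sq_eq_sq₀ (h.pos i).le (h.pos j).le).1 hij
    exact h.anti.injective this
  · exact Finset.prod_ne_zero_iff.2 fun i _ => (pow_pos (h.pos i) 2).ne'

lemma exists_ssvd {N p : ℕ} (Y : Matrix (Fin N) (Fin p) ℝ) (hq : qpoly Y ≠ 0) :
    ∃ U d V, SSVD Y U d V := by
  have hA : (Yᵀ * Y).IsHermitian := by
    simpa using isHermitian_conjTranspose_mul_self Y
  have hpsd : (Yᵀ * Y).PosSemidef := by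
    simpa using posSemidef_conjTranspose_mul_self Y
  set V0 : Matrix (Fin p) (Fin p) ℝ := hA.eigenvectorUnitary.1 with hV0
  set e0 := hA.eigenvalues with he0
  have hV0o : V0ᵀ * V0 = 1 := by
    have := (Matrix.mem_unitaryGroup_iff').1 hA.eigenvectorUnitary.2
    simpa [star_eq_conjTranspose] using this
  have hsp : Yᵀ * Y = V0 * diagonal e0 * V0ᵀ := by
    have := hA.spectral_theorem
    simpa [Unitary.conjStarAlgAut_apply, star_eq_conjTranspose, Function.comp_def] using this
  have hq1 := hq
  rw [qpoly_eq hsp hV0o] at hq1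
  have hnz : ∀ i, e0 i ≠ 0 := fun i => Finset.prod_ne_zero_iff.1 (right_ne_zero_of_mul hq1) i (Finset.mem_univ _)
  have hpos : ∀ i, 0 < e0 i := fun i => (hpsd.eigenvalues_nonneg i).lt_of_ne' (hnz i)
  let τ : Equiv.Perm (Fin p) := Tuple.sort (fun i => -e0 i)
  have hτ : Antitone (e0 ∘ τ) := by
    intro i j hij
    have := Tuple.monotone_sort (fun i => -e0 i) hij
    simpa using this
  let V : Matrix (Fin p) (Fin p) ℝ := V0.submatrix id τ
  let d : Fin p → ℝ := fun i => Real.sqrt (e0 (τ i))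
  have hd : ∀ i, 0 < d i := fun i => Real.sqrt_pos.2 (hpos _)
  have hVo : Vᵀ * V = 1 := by
    have : Vᵀ * V = (V0ᵀ * V0).submatrix τ τ := by
      ext i j; simp [V, Matrix.mul_apply]
    rw [this, hV0o]; simp
  have hVo' : V * Vᵀ = 1 := mul_eq_one_comm.1 hVo
  have hg : Yᵀ * Y = V * diagonal (fun i => d i ^ 2) * Vᵀ := by
    rw [hsp]
    ext i j
    rw [Matrix.mul_apply, Matrix.mul_apply]
    simp only [mul_diagonal, transpose_apply, V, submatrix_apply, d, id]
    rw [← Equiv.sum_comp τ]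
    refine Finset.sum_congr rfl fun x _ => ?_
    rw [Real.sq_sqrt (hpos _).le]
  let U := Y * V * diagonal (fun i => (d i)⁻¹)
  refine ⟨U, d, V, strict_of_qpoly ?_ ?_ hVo ?_ (fun i => (hd i).le) hq⟩
  · have : diagonal (fun i => (d i)⁻¹) * diagonal d = 1 := by
      rw [diagonal_mul_diagonal]
      simp [fun i => inv_mul_cancel₀ (hd i).ne']
    simp only [U]
    rw [Matrix.mul_assoc (Y * V), this, Matrix.mul_one, Matrix.mul_assoc, hVo', Matrix.mul_one]
  · simp only [U, transpose_mul, diagonal_transpose]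
    calc diagonal (fun i => (d i)⁻¹) * (Vᵀ * Yᵀ) * (Y * V * diagonal (fun i => (d i)⁻¹))
        = diagonal (fun i => (d i)⁻¹) * Vᵀ * (Yᵀ * Y) * V * diagonal (fun i => (d i)⁻¹) := by
          simp only [Matrix.mul_assoc]
      _ = diagonal (fun i => (d i)⁻¹) * (Vᵀ * V) * diagonal (fun i => d i ^ 2) * (Vᵀ * V) *
            diagonal (fun i => (d i)⁻¹) := by
          rw [hg]; simp only [Matrix.mul_assoc]
      _ = 1 := by
          rw [hVo, Matrix.mul_one, Matrix.mul_one, diagonal_mul_diagonal, diagonal_mul_diagonal,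
            ← diagonal_one]
          congr 1; ext i
          have := (hd i).ne'
          field_simp
  · intro i j hij
    exact Real.sqrt_le_sqrt (hτ hij)

/-- rank one projection matrix `U_k V_kᵀ` -/
def rk1 {N p : ℕ} (U : Matrix (Fin N) (Fin p) ℝ) (V : Matrix (Fin p) (Fin p) ℝ) (k : Fin p) :
    Fin N → Fin p → ℝ := fun i j => U i k * V j k

lemma SSVD.unique {N p : ℕ} {Y U U' : Matrix (Fin N) (Fin p) ℝ} {d d' : Fin p → ℝ}
    {V V' : Matrix (Fin p) (Fin p) ℝ} (h : SSVD Y U d V) (h' : SSVD Y U' d' V') :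
    d = d' ∧ ∀ k, rk1 U V k = rk1 U' V' k := by
  have hVV : V * Vᵀ = 1 := mul_eq_one_comm.1 h.hV
  have hVV' : V' * V'ᵀ = 1 := mul_eq_one_comm.1 h'.hV
  set W := Vᵀ * V' with hW
  have hWW : Wᵀ * W = 1 := by
    rw [hW, transpose_mul, transpose_transpose, Matrix.mul_assoc, ← Matrix.mul_assoc V, hVV,
      Matrix.one_mul, h'.hV]
  have hWW' : W * Wᵀ = 1 := mul_eq_one_comm.1 hWW
  have hcomm : diagonal (fun i => d i ^ 2) * W = W * diagonal (fun i => d' i ^ 2) := by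
    have e := (gram_eq h.eq h.hU).symm.trans (gram_eq h'.eq h'.hU)
    calc diagonal (fun i => d i ^ 2) * W
        = (Vᵀ * V) * diagonal (fun i => d i ^ 2) * Vᵀ * V' := by
          rw [h.hV, Matrix.one_mul, Matrix.mul_assoc]
      _ = Vᵀ * (V * diagonal (fun i => d i ^ 2) * Vᵀ) * V' := by simp only [Matrix.mul_assoc]
      _ = W * diagonal (fun i => d' i ^ 2) * (V'ᵀ * V') := by rw [e]; simp only [hW, Matrix.mul_assoc]
      _ = _ := by rw [h'.hV, Matrix.mul_one]
  have hent : ∀ i j, W i j ≠ 0 → d i = d' j := by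
    intro i j hne
    have := congrFun (congrFun hcomm i) j
    rw [diagonal_mul, mul_diagonal, mul_comm] at this
    exact (sq_eq_sq₀ (h.pos i).le (h'.pos j).le).1 (mul_left_cancel₀ hne this)
  have hrange : Set.range d = Set.range d' := by
    apply Set.Subset.antisymm
    · rintro _ ⟨i, rfl⟩
      by_contra hcon
      have hz : ∀ j, W i j = 0 := fun j => by
        by_contra hne; exact hcon ⟨j, (hent i j hne).symm⟩
      have := congrFun (congrFun hWW' i) i
      simp [Matrix.mul_apply, hz] at this
    · rintro _ ⟨j, rfl⟩
      by_contra hcon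
      have hz : ∀ i, W i j = 0 := fun i => by
        by_contra hne; exact hcon ⟨i, (hent i j hne)⟩
      have := congrFun (congrFun hWW j) j
      simp [Matrix.mul_apply, hz] at this
  have hdd : d = d' := by
    have : (fun i => -d i) = fun i => -d' i := by
      refine (StrictMono.range_inj h.anti.neg h'.anti.neg).1 ?_
      have e1 : ∀ g : Fin p → ℝ, Set.range (fun i => - g i) = Neg.neg '' Set.range g := fun g => by
        rw [← Set.range_comp]; rfl
      rw [e1, e1, hrange]
    funext i
    simpa using congrFun this i
  refine ⟨hdd, fun k => ?_⟩
  subst hdd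
  have hoff : ∀ i j, i ≠ j → W i j = 0 := fun i j hij => by
    by_contra hne; exact hij (h.anti.injective (hent i j hne))
  have hkk : W k k * W k k = 1 := by
    have := congrFun (congrFun hWW k) k
    rw [Matrix.mul_apply, Finset.sum_eq_single k] at this
    · simpa using this
    · intro b _ hb; simp [hoff b k hb]
    · simp
  have hV'k : ∀ j, V' j k = V j k * W k k := by
    have e : V' = V * W := by rw [hW, ← Matrix.mul_assoc, hVV, Matrix.one_mul]
    intro j
    conv_lhs => rw [e]
    rw [Matrix.mul_apply, Finset.sum_eq_single k]
    · intro b _ hb; simp [hoff b k hb]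
    · simp
  have hYV : ∀ {U V}, SSVD Y U d V → ∀ i, (Y * V) i k = U i k * d k := by
    intro U V h i
    conv_lhs => rw [h.eq]
    rw [Matrix.mul_assoc, h.hV, Matrix.mul_one, mul_diagonal]
  have hU'k : ∀ i, U' i k = U i k * W k k := by
    intro i
    have h1 := hYV h' i
    have h2 := hYV h i
    have h3 : (Y * V') i k = (Y * V) i k * W k k := by
      simp only [Matrix.mul_apply, hV'k, Finset.sum_mul, mul_assoc]
    have := (h.pos k).ne'
    apply mul_right_cancel₀ this
    rw [← h1, h3, h2]; ring
  ext i j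
  simp only [rk1, hV'k, hU'k]
  linear_combination (-(U i k * V j k)) * hkk

end CSV

namespace CSV

lemma qpoly_map {N p : ℕ} {R S : Type*} [CommRing R] [CommRing S] (f : R →+* S)
    (Y : Matrix (Fin N) (Fin p) R) : qpoly (Y.map f) = f (qpoly Y) := by
  have h1 : (Y.map f)ᵀ * Y.map f = f.mapMatrix (Yᵀ * Y) := by
    simp [RingHom.mapMatrix_apply, Matrix.map_mul, transpose_map]
  rw [qpoly, qpoly, map_mul, RingHom.map_det, RingHom.map_det, h1]
  congr 2
  ext i j
  simp only [of_apply, RingHom.mapMatrix_apply, map_apply]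
  rw [← RingHom.mapMatrix_apply, ← map_pow]
  simp [trace]

lemma qpoly_cont {N p : ℕ} : Continuous fun Y : Fin N → Fin p → ℝ => qpoly (Matrix.of Y) := by
  unfold qpoly
  have h : Continuous fun Y : Fin N → Fin p → ℝ => (Matrix.of Y)ᵀ * Matrix.of Y := by
    have : Continuous fun Y : Fin N → Fin p → ℝ => (Matrix.of Y) := continuous_id
    exact this.matrix_transpose.matrix_mul this
  refine Continuous.mul (Continuous.matrix_det ?_) (Continuous.matrix_det h)
  refine continuous_matrix fun i j => ?_
  exact Continuous.matrix_trace (h.pow _)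

lemma exists_q_ne {N p : ℕ} (hNp : p ≤ N) : ∃ Y : Matrix (Fin N) (Fin p) ℝ, qpoly Y ≠ 0 := by
  let U : Matrix (Fin N) (Fin p) ℝ := Matrix.of fun i j => if i = Fin.castLE hNp j then 1 else 0
  have h : SSVD (U * diagonal (fun j : Fin p => (p : ℝ) - j) * (1 : Matrix (Fin p) (Fin p) ℝ)ᵀ) U
      (fun j : Fin p => (p : ℝ) - j) 1 := by
    refine ⟨rfl, ?_, by simp, ?_, ?_⟩
    · ext i j
      simp [U, Matrix.mul_apply, Matrix.one_apply, eq_comm]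
    · intro i j hij
      have : ((i : ℕ) : ℝ) < (j : ℕ) := by exact_mod_cast hij
      simp only; linarith
    · intro i
      have : ((i : ℕ) : ℝ) < p := by exact_mod_cast i.2
      linarith
  exact ⟨_, h.q⟩

lemma q_line {N p : ℕ} (Y W : Matrix (Fin N) (Fin p) ℝ) (h : qpoly Y ≠ 0) :
    {s : ℝ | qpoly (Y + s • W) = 0}.Finite := by
  let F : Matrix (Fin N) (Fin p) (Polynomial ℝ) :=
    Matrix.of fun i j => Polynomial.C (Y i j) + Polynomial.X * Polynomial.C (W i j)
  have he : ∀ s, qpoly (Y + s • W) = (qpoly F).eval s := by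
    intro s
    rw [← Polynomial.coe_evalRingHom, ← qpoly_map]
    congr 1
    ext i j
    simp [F]; ring
  have hF : qpoly F ≠ 0 := by
    intro h0
    have := he 0
    rw [h0] at this
    simp at this
    exact h this
  refine ((qpoly F).roots.toFinset.finite_toSet).subset ?_
  intro s hs
  simp only [Finset.mem_coe, Multiset.mem_toFinset]
  rw [Polynomial.mem_roots hF, Polynomial.IsRoot, ← he s]
  exact hs

lemma q_generic {N p : ℕ} (hNp : p ≤ N) :
    volume {Y : Fin N → Fin p → ℝ | qpoly (Matrix.of Y) = 0} = 0 := by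
  obtain ⟨Y0, hY0⟩ := exists_q_ne hNp
  let Y1 : Fin N → Fin p → ℝ := fun i j => Y0 i j
  set Z : Set (Fin N → Fin p → ℝ) := {W | qpoly (Matrix.of (Y1 + W)) = 0} with hZ
  have hZm : MeasurableSet Z :=
    (isClosed_eq (qpoly_cont.comp (continuous_const.add continuous_id)) continuous_const).measurableSet
  have hm : MeasurableSet {x : ℝ × (Fin N → Fin p → ℝ) | x.1 • x.2 ∈ Z} :=
    hZm.preimage (measurable_fst.smul measurable_snd)
  have hprod : (volume.prod volume) {x : ℝ × (Fin N → Fin p → ℝ) | x.1 • x.2 ∈ Z} = 0 := by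
    rw [Measure.prod_apply_symm hm]
    refine lintegral_eq_zero_of_ae_eq_zero (Filter.Eventually.of_forall fun W => ?_)
    exact (q_line Y0 (Matrix.of W) hY0).measure_zero _
  have hae := Measure.measure_ae_null_of_prod_null hprod
  have hne : ∀ᵐ s : ℝ, s ≠ 0 := by
    simp [ae_iff]
  obtain ⟨s, hs, hs0⟩ := (hae.and hne).exists
  have h1 : volume ((s • ·) ⁻¹' Z) = 0 := hs
  rw [Measure.addHaar_preimage_smul _ hs0] at h1
  have hZ0 : volume Z = 0 := by
    rcases mul_eq_zero.1 h1 with h | h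
    · exfalso
      rw [ENNReal.ofReal_eq_zero] at h
      have : 0 < |(s ^ Module.finrank ℝ (Fin N → Fin p → ℝ))⁻¹| :=
        abs_pos.2 (inv_ne_zero (pow_ne_zero _ hs0))
      linarith
    · exact h
  have h2 : Z = (fun W => Y1 + W) ⁻¹' {Y : Fin N → Fin p → ℝ | qpoly (Matrix.of Y) = 0} := rfl
  rwa [h2, measure_preimage_add] at hZ0

end CSV

namespace CSV

/-- Entrywise strict differentiability of a matrix valued map. -/
def MD {E : Type*} [NormedAddCommGroup E] [NormedSpace ℝ E] {m n : Type*}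
    (f : E → Matrix m n ℝ) (f' : E → Matrix m n ℝ) (x : E) : Prop :=
  ∀ i j, ∃ L : E →L[ℝ] ℝ, (∀ X, L X = f' X i j) ∧ HasStrictFDerivAt (fun y => f y i j) L x

section
variable {E : Type*} [NormedAddCommGroup E] [NormedSpace ℝ E] {m n l : Type*}

lemma MD.const (A : Matrix m n ℝ) (x : E) : MD (fun _ => A) (fun _ => 0) x := by
  intro i j
  exact ⟨0, by simp, hasStrictFDerivAt_const _ _⟩

lemma MD.mul [Fintype n] {f f' : E → Matrix m n ℝ} {g g' : E → Matrix n l ℝ} {x : E}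
    (hf : MD f f' x) (hg : MD g g' x) :
    MD (fun y => f y * g y) (fun X => f' X * g x + f x * g' X) x := by
  intro i j
  choose Lf hLf hLf' using hf
  choose Lg hLg hLg' using hg
  refine ⟨∑ a, (f x i a • Lg a j + g x a j • Lf i a), ?_, ?_⟩
  · intro X
    simp only [_root_.sum_apply, _root_.add_apply,
      _root_.smul_apply, smul_eq_mul, hLf, hLg, Matrix.add_apply, Matrix.mul_apply,
      Finset.sum_add_distrib]
    rw [add_comm]
    simp only [mul_comm]
  · simp only [Matrix.mul_apply]
    exact HasStrictFDerivAt.fun_sum fun a _ => (hLf' i a).mul (hLg' a j)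

lemma MD.lin [FiniteDimensional ℝ E] (A : Matrix m n ℝ) (ℓ : E →ₗ[ℝ] Matrix m n ℝ) (x : E) :
    MD (fun y => A + ℓ y) ℓ x := by
  intro i j
  let L : E →ₗ[ℝ] ℝ := (Matrix.entryLinearMap ℝ ℝ i j).comp ℓ
  refine ⟨LinearMap.toContinuousLinearMap L, fun X => rfl, ?_⟩
  simp only [Matrix.add_apply]
  exact (LinearMap.toContinuousLinearMap L).hasStrictFDerivAt.const_add (A i j)

lemma MD.transpose {f f' : E → Matrix m n ℝ} {x : E} (hf : MD f f' x) :
    MD (fun y => (f y)ᵀ) (fun X => (f' X)ᵀ) x := fun i j => hf j i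

open scoped Matrix.Norms.Operator in
lemma MD.exp [FiniteDimensional ℝ E] [Fintype n] [DecidableEq n] (ℓ : E →ₗ[ℝ] Matrix n n ℝ) :
    MD (fun y => NormedSpace.exp (ℓ y)) ℓ 0 := by
  intro i j
  let ev : Matrix n n ℝ →L[ℝ] ℝ := LinearMap.toContinuousLinearMap (Matrix.entryLinearMap ℝ ℝ i j)
  let ℓc : E →L[ℝ] Matrix n n ℝ := LinearMap.toContinuousLinearMap ℓ
  have h0 : HasStrictFDerivAt (NormedSpace.exp : Matrix n n ℝ → Matrix n n ℝ)
      (1 : Matrix n n ℝ →L[ℝ] Matrix n n ℝ) (ℓc 0) := by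
    rw [map_zero]
    exact hasStrictFDerivAt_exp_zero
  refine ⟨ev.comp ((1 : Matrix n n ℝ →L[ℝ] Matrix n n ℝ).comp ℓc), fun X => rfl, ?_⟩
  exact (ev.hasStrictFDerivAt).comp 0 (h0.comp 0 ℓc.hasStrictFDerivAt)

end

lemma exp_skew_orth {n : Type*} [Fintype n] [DecidableEq n] (A : Matrix n n ℝ) (hA : Aᵀ = -A) :
    (NormedSpace.exp A)ᵀ * NormedSpace.exp A = 1 := by
  rw [← Matrix.exp_transpose, hA, ← Matrix.exp_add_of_commute]
  · simp
  · exact (Commute.refl A).neg_left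

end CSV

namespace CSV

section
variable {p : ℕ} {κ : Type*}

/-- skew part acting on the left -/
noncomputable def skA : (Fin p ⊕ κ → Fin p → ℝ) →ₗ[ℝ] Matrix (Fin p ⊕ κ) (Fin p ⊕ κ) ℝ where
  toFun X := Matrix.of fun r r' => match r, r' with
    | Sum.inl i, Sum.inl j => (if i < j then 1 else if j < i then -1 else 0) *
        ((X (Sum.inl i) j + X (Sum.inl j) i) / 2)
    | Sum.inl i, Sum.inr b => - X (Sum.inr b) i
    | Sum.inr a, Sum.inl j => X (Sum.inr a) j
    | Sum.inr _, Sum.inr _ => 0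
  map_add' X Y := by
    ext r r'
    rcases r with i | a <;> rcases r' with j | b <;> simp <;> (try split_ifs) <;> ring
  map_smul' c X := by
    ext r r'
    rcases r with i | a <;> rcases r' with j | b <;> simp <;> (try split_ifs) <;> ring

/-- skew part acting on the right -/
noncomputable def skB : (Fin p ⊕ κ → Fin p → ℝ) →ₗ[ℝ] Matrix (Fin p) (Fin p) ℝ where
  toFun X := Matrix.of fun i j => (X (Sum.inl i) j - X (Sum.inl j) i) / 2
  map_add' X Y := by ext; simp; ring
  map_smul' c X := by ext; simp; ring

/-- diagonal part -/
def dl : (Fin p ⊕ κ → Fin p → ℝ) →ₗ[ℝ] Matrix (Fin p ⊕ κ) (Fin p) ℝ where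
  toFun X := Matrix.of fun r j => match r with
    | Sum.inl i => if i = j then X (Sum.inl j) j else 0
    | Sum.inr _ => 0
  map_add' X Y := by
    ext r j
    rcases r with i | a <;> simp
    split_ifs <;> simp
  map_smul' c X := by
    ext r j
    rcases r with i | a <;> simp

/-- tall diagonal matrix -/
def fr (κ : Type*) {p : ℕ} (D : Fin p → ℝ) : Matrix (Fin p ⊕ κ) (Fin p) ℝ :=
  Matrix.of fun r j => match r with
    | Sum.inl i => diagonal D i j
    | Sum.inr _ => 0

lemma skA_skew (X : Fin p ⊕ κ → Fin p → ℝ) : (skA X)ᵀ = - skA X := by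
  ext r r'
  rcases r with i | a <;> rcases r' with j | b <;> simp [skA]
  rcases lt_trichotomy i j with h | h | h
  · simp [h, h.not_gt]; ring
  · simp [h]
  · simp [h, h.not_gt]; ring

lemma skB_skew (X : Fin p ⊕ κ → Fin p → ℝ) : (skB X)ᵀ = - skB X := by
  ext i j
  simp [skB]; ring

set_option linter.unusedSectionVars false
variable [Fintype κ] [DecidableEq κ]

lemma fr_add (D : Fin p → ℝ) (X : Fin p ⊕ κ → Fin p → ℝ) :
    fr κ D + dl X = fr κ (fun i => D i + X (Sum.inl i) i) := by
  ext r j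
  rcases r with i | a
  · by_cases h : i = j
    · subst h; simp [fr, dl]
    · simp [fr, dl, h]
  · simp [fr, dl]

lemma fr_mul (D : Fin p → ℝ) : fr κ D = fr κ (1 : Fin p → ℝ) * diagonal D := by
  ext r j
  rw [Matrix.mul_diagonal]
  rcases r with i | a
  · by_cases h : i = j
    · subst h; simp [fr]
    · simp [fr, h]
  · simp [fr]

lemma fr_one : (fr κ (1 : Fin p → ℝ))ᵀ * fr κ (1 : Fin p → ℝ) = 1 := by
  ext i j
  simp [Matrix.mul_apply, fr, Matrix.one_apply, diagonal_apply, eq_comm]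

/-- the chart -/
noncomputable def Psi {N : ℕ} (Ut : Matrix (Fin N) (Fin p ⊕ κ) ℝ) (V : Matrix (Fin p) (Fin p) ℝ)
    (D : Fin p → ℝ) (X : Fin p ⊕ κ → Fin p → ℝ) : Fin N → Fin p → ℝ :=
  Ut * NormedSpace.exp (skA X) * (fr κ D + dl X) * (NormedSpace.exp (skB X))ᵀ * Vᵀ

/-- diagonal scaling coefficients -/
def ee (D : Fin p → ℝ) (r : Fin p ⊕ κ) (j : Fin p) : ℝ := match r with
  | Sum.inl i => if i < j then D j - D i else if j < i then D i + D j else 1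
  | Sum.inr _ => D j

/-- diagonal scaling -/
def Del (c : Fin p ⊕ κ → Fin p → ℝ) : (Fin p ⊕ κ → Fin p → ℝ) →ₗ[ℝ] (Fin p ⊕ κ → Fin p → ℝ) where
  toFun X := fun r j => c r j * X r j
  map_add' X Y := by ext; simp; ring
  map_smul' c X := by ext; simp; ring

lemma Del_det (c : Fin p ⊕ κ → Fin p → ℝ) : LinearMap.det (Del c) = ∏ r, ∏ j, c r j := by
  have := LinearMap.det_pi (R := ℝ) (fun r : Fin p ⊕ κ =>
    LinearMap.pi fun j : Fin p => (c r j • LinearMap.id : ℝ →ₗ[ℝ] ℝ).comp (LinearMap.proj j))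
  have e : Del c = LinearMap.pi (fun r : Fin p ⊕ κ =>
    (LinearMap.pi fun j : Fin p => (c r j • LinearMap.id : ℝ →ₗ[ℝ] ℝ).comp
      (LinearMap.proj j)).comp (LinearMap.proj r)) := by
    ext; simp [Del]
  rw [e, this]
  refine Finset.prod_congr rfl fun r _ => ?_
  rw [LinearMap.det_pi]
  simp

/-- recombination -/
noncomputable def Qe : (Fin p ⊕ κ → Fin p → ℝ) ≃ₗ[ℝ] (Fin p ⊕ κ → Fin p → ℝ) where
  toFun Z := fun r j => match r with
    | Sum.inl i => if i < j then (Z (Sum.inl i) j + Z (Sum.inl j) i) / 2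
        else if j < i then (Z (Sum.inl j) i - Z (Sum.inl i) j) / 2 else Z (Sum.inl i) j
    | Sum.inr a => Z (Sum.inr a) j
  invFun Z := fun r j => match r with
    | Sum.inl i => if i < j then (Z (Sum.inl i) j + Z (Sum.inl j) i)
        else if j < i then (Z (Sum.inl j) i - Z (Sum.inl i) j) else Z (Sum.inl i) j
    | Sum.inr a => Z (Sum.inr a) j
  map_add' X Y := by
    ext r j
    rcases r with i | a <;> simp
    split_ifs <;> ring
  map_smul' c X := by
    ext r j
    rcases r with i | a <;> simp
    split_ifs <;> ring
  left_inv X := by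
    ext r j
    rcases r with i | a <;> simp
    rcases lt_trichotomy i j with h | h | h
    · simp [h, h.not_gt]; ring
    · simp [h]
    · simp [h, h.not_gt]; ring
  right_inv X := by
    ext r j
    rcases r with i | a <;> simp
    rcases lt_trichotomy i j with h | h | h
    · simp [h, h.not_gt]
    · simp [h]
    · simp [h, h.not_gt]

/-- rotation -/
noncomputable def Re {N : ℕ} (Ut : Matrix (Fin N) (Fin p ⊕ κ) ℝ) (V : Matrix (Fin p) (Fin p) ℝ)
    (h1 : Utᵀ * Ut = 1) (h2 : Ut * Utᵀ = 1) (h3 : Vᵀ * V = 1) :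
    (Fin p ⊕ κ → Fin p → ℝ) ≃ₗ[ℝ] (Fin N → Fin p → ℝ) where
  toFun X := Ut * Matrix.of X * Vᵀ
  invFun Y := Utᵀ * Matrix.of Y * V
  map_add' X Y := by
    change Ut * (Matrix.of X + Matrix.of Y) * Vᵀ = _
    rw [Matrix.mul_add, Matrix.add_mul]; rfl
  map_smul' c X := by
    change Ut * (c • Matrix.of X) * Vᵀ = c • (Ut * Matrix.of X * Vᵀ)
    rw [Matrix.mul_smul, Matrix.smul_mul]
  left_inv X := by
    change Utᵀ * (Ut * Matrix.of X * Vᵀ) * V = X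
    calc Utᵀ * (Ut * Matrix.of X * Vᵀ) * V = (Utᵀ * Ut) * Matrix.of X * (Vᵀ * V) := by
          simp only [Matrix.mul_assoc]
      _ = Matrix.of X := by rw [h1, h3, Matrix.one_mul, Matrix.mul_one]
  right_inv X := by
    have h3' : V * Vᵀ = 1 := mul_eq_one_comm.1 h3
    change Ut * (Utᵀ * Matrix.of X * V) * Vᵀ = X
    calc Ut * (Utᵀ * Matrix.of X * V) * Vᵀ = (Ut * Utᵀ) * Matrix.of X * (V * Vᵀ) := by
          simp only [Matrix.mul_assoc]
      _ = Matrix.of X := by rw [h2, h3', Matrix.one_mul, Matrix.mul_one]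

lemma deriv_alg (D : Fin p → ℝ) (X : Fin p ⊕ κ → Fin p → ℝ) :
    skA X * fr κ D + dl X + fr κ D * (skB X)ᵀ = Matrix.of (Qe (Del (ee D) X)) := by
  have h1 : ∀ r j, (skA X * fr κ D) r j = skA X r (Sum.inl j) * D j := by
    intro r j
    simp [Matrix.mul_apply, fr, diagonal_apply]
  have h2 : ∀ i j, (fr κ D * (skB X)ᵀ) (Sum.inl i) j = D i * skB X j i := by
    intro i j
    simp [Matrix.mul_apply, fr, diagonal_apply]
  have h3 : ∀ a j, (fr κ D * (skB X)ᵀ) (Sum.inr a) j = 0 := by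
    intro i j
    simp [Matrix.mul_apply, fr]
  ext r j
  rw [Matrix.add_apply, Matrix.add_apply, h1]
  rcases r with i | a
  · rw [h2]
    simp only [skA, skB, dl, Qe, Del, ee, LinearMap.coe_mk, AddHom.coe_mk, Matrix.of_apply,
      LinearEquiv.coe_mk]
    rcases lt_trichotomy i j with h | h | h
    · simp [h, h.not_gt, h.ne]; ring
    · simp [h]
    · simp [h, h.not_gt, h.ne']; ring
  · rw [h3]
    simp [skA, dl, Qe, Del, ee]; ring

lemma Psi_deriv {N : ℕ} (Ut : Matrix (Fin N) (Fin p ⊕ κ) ℝ) (V : Matrix (Fin p) (Fin p) ℝ)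
    (h1 : Utᵀ * Ut = 1) (h2 : Ut * Utᵀ = 1) (h3 : Vᵀ * V = 1) (D : Fin p → ℝ) :
    HasStrictFDerivAt (Psi Ut V D)
      (LinearMap.toContinuousLinearMap
        (((Qe.trans (Re Ut V h1 h2 h3)).toLinearMap).comp (Del (ee D)))) 0 := by
  have H := ((((MD.const Ut (0 : Fin p ⊕ κ → Fin p → ℝ)).mul (MD.exp skA)).mul
    (MD.lin (fr κ D) dl 0)).mul (MD.exp (skB (p := p) (κ := κ))).transpose).mul (MD.const Vᵀ 0)
  refine hasStrictFDerivAt_pi'' fun i => hasStrictFDerivAt_pi'' fun j => ?_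
  obtain ⟨L, hL, hL'⟩ := H i j
  refine hL'.congr_fderiv (ContinuousLinearMap.ext fun X => ?_)
  rw [hL]
  have := deriv_alg D X
  simp only [map_zero, NormedSpace.exp_zero, Matrix.mul_one, Matrix.zero_mul, zero_add, add_zero,
    Matrix.transpose_one, Matrix.mul_zero]
  have e : Ut * skA X * fr κ D + Ut * dl X + Ut * fr κ D * (skB X)ᵀ
     = Ut * Matrix.of (Qe (Del (ee D) X)) := by
    rw [← this]; simp only [Matrix.mul_add, Matrix.mul_assoc]
  rw [e]
  rfl

end

end CSV

namespace CSV

lemma exists_ext {N p : ℕ} (hNp : p ≤ N) (U : Matrix (Fin N) (Fin p) ℝ) (hU : Uᵀ * U = 1) :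
    ∃ Ut : Matrix (Fin N) (Fin p ⊕ Fin (N - p)) ℝ, Utᵀ * Ut = 1 ∧ Ut * Utᵀ = 1 ∧
      Ut * fr (Fin (N - p)) (1 : Fin p → ℝ) = U := by
  let v : Fin p ⊕ Fin (N - p) → EuclideanSpace ℝ (Fin N) :=
    Sum.elim (fun j => WithLp.toLp 2 fun i => U i j) 0
  have hv : Orthonormal ℝ ((Set.range (Sum.inl : Fin p → Fin p ⊕ Fin (N - p))).domRestrict v) := by
    rw [orthonormal_iff_ite]
    rintro ⟨a, ha⟩ ⟨b, hb⟩
    simp only [Subtype.mk.injEq, Set.domRestrict_apply]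
    obtain ⟨i, rfl⟩ := ha
    obtain ⟨j, rfl⟩ := hb
    have := congrFun (congrFun hU j) i
    simp only [Matrix.mul_apply, Matrix.transpose_apply, Matrix.one_apply] at this
    simp [v, PiLp.inner_apply, this, eq_comm]
  obtain ⟨b, hb⟩ := hv.exists_orthonormalBasis_extension_of_card_eq (by simp; omega)
  let Ut : Matrix (Fin N) (Fin p ⊕ Fin (N - p)) ℝ := Matrix.of fun i r => b r i
  have h1 : Utᵀ * Ut = 1 := by
    ext r s
    have := (orthonormal_iff_ite.1 b.orthonormal) s r
    simp only [PiLp.inner_apply] at this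
    simp only [Matrix.mul_apply, Matrix.transpose_apply, Matrix.one_apply, Ut, Matrix.of_apply]
    simpa [eq_comm] using this
  refine ⟨Ut, h1, ?_, ?_⟩
  · exact (Matrix.mul_eq_one_comm_of_card_eq _ _ _ (by simp; omega)).1 h1
  · ext i j
    have := hb (Sum.inl j) ⟨j, rfl⟩
    simp [Matrix.mul_apply, fr, Ut, this, v, Matrix.one_apply]

lemma usv_update {N p : ℕ} (U : Matrix (Fin N) (Fin p) ℝ) (d : Fin p → ℝ)
    (V : Matrix (Fin p) (Fin p) ℝ) (k : Fin p) (c : ℝ) :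
    U * diagonal (Function.update d k (d k + c)) * Vᵀ
      = U * diagonal d * Vᵀ + c • Matrix.of (rk1 U V k) := by
  have : diagonal (Function.update d k (d k + c)) = diagonal d + c • Matrix.single k k (1 : ℝ) := by
    ext i j
    by_cases h : i = j
    · subst h
      by_cases h' : i = k
      · subst h'; simp
      · simp [h', Ne.symm h', Matrix.single_apply]
    · have : ¬ (k = i ∧ k = j) := fun h' => h (h'.1.symm.trans h'.2)
      simp [h, Matrix.single_apply, this]
  rw [this, Matrix.mul_add, Matrix.add_mul, Matrix.mul_smul, Matrix.smul_mul]
  congr 2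
  ext i j
  simp [Matrix.mul_apply, rk1, Matrix.single_apply, ite_and]

lemma Psi_eq {N p : ℕ} {κ : Type*} [Fintype κ] [DecidableEq κ]
    (Ut : Matrix (Fin N) (Fin p ⊕ κ) ℝ) (V : Matrix (Fin p) (Fin p) ℝ)
    (D : Fin p → ℝ) (X : Fin p ⊕ κ → Fin p → ℝ) :
    Matrix.of (Psi Ut V D X) = (Ut * NormedSpace.exp (skA X) * fr κ (1 : Fin p → ℝ)) *
      diagonal (fun i => D i + X (Sum.inl i) i) * (V * NormedSpace.exp (skB X))ᵀ := by
  change Ut * NormedSpace.exp (skA X) * (fr κ D + dl X) * (NormedSpace.exp (skB X))ᵀ * Vᵀ = _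
  rw [fr_add, fr_mul, Matrix.transpose_mul]
  simp only [Matrix.mul_assoc]

lemma Psi_ssvd {N p : ℕ} {κ : Type*} [Fintype κ] [DecidableEq κ]
    (Ut : Matrix (Fin N) (Fin p ⊕ κ) ℝ) (V : Matrix (Fin p) (Fin p) ℝ)
    (h1 : Utᵀ * Ut = 1) (h3 : Vᵀ * V = 1)
    (D : Fin p → ℝ) (X : Fin p ⊕ κ → Fin p → ℝ) (ha : StrictAnti fun i => D i + X (Sum.inl i) i)
    (hp : ∀ i, 0 < D i + X (Sum.inl i) i) :
    SSVD (Matrix.of (Psi Ut V D X)) (Ut * NormedSpace.exp (skA X) * fr κ (1 : Fin p → ℝ))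
      (fun i => D i + X (Sum.inl i) i) (V * NormedSpace.exp (skB X)) := by
  refine ⟨Psi_eq _ _ _ _, ?_, ?_, ha, hp⟩
  · have e := exp_skew_orth _ (skA_skew X)
    set A := NormedSpace.exp (skA X)
    calc (Ut * A * fr κ (1 : Fin p → ℝ))ᵀ * (Ut * A * fr κ (1 : Fin p → ℝ))
        = (fr κ (1 : Fin p → ℝ))ᵀ * (Aᵀ * (Utᵀ * Ut) * A) * fr κ (1 : Fin p → ℝ) := by
          simp only [Matrix.transpose_mul, Matrix.mul_assoc]
      _ = 1 := by rw [h1, Matrix.mul_one, e, Matrix.mul_one, fr_one]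
  · have e := exp_skew_orth _ (skB_skew X)
    set A := NormedSpace.exp (skB X)
    calc (V * A)ᵀ * (V * A)
        = (Aᵀ * (Vᵀ * V) * A) := by
          simp only [Matrix.transpose_mul, Matrix.mul_assoc]
      _ = 1 := by rw [h3, Matrix.mul_one, e]

open Classical in
/-- singular values -/
noncomputable def dd {N p : ℕ} (Y : Fin N → Fin p → ℝ) : Fin p → ℝ :=
  if h : qpoly (Matrix.of Y) ≠ 0 then (exists_ssvd _ h).choose_spec.choose else 0

open Classical in
/-- rank one factors -/
noncomputable def QQ {N p : ℕ} (k : Fin p) (Y : Fin N → Fin p → ℝ) : Fin N → Fin p → ℝ :=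
  if h : qpoly (Matrix.of Y) ≠ 0 then rk1 (exists_ssvd _ h).choose
    (exists_ssvd _ h).choose_spec.choose_spec.choose k else 0

lemma SSVD.dd {N p : ℕ} {Y : Fin N → Fin p → ℝ} {U : Matrix (Fin N) (Fin p) ℝ} {d : Fin p → ℝ}
    {V : Matrix (Fin p) (Fin p) ℝ} (h : SSVD (Matrix.of Y) U d V) : CSV.dd Y = d := by
  have hq := h.q
  have := (exists_ssvd _ hq).choose_spec.choose_spec.choose_spec
  rw [CSV.dd, dif_pos hq]
  exact (this.unique h).1

lemma SSVD.QQ {N p : ℕ} {Y : Fin N → Fin p → ℝ} {U : Matrix (Fin N) (Fin p) ℝ} {d : Fin p → ℝ}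
    {V : Matrix (Fin p) (Fin p) ℝ} (h : SSVD (Matrix.of Y) U d V) (k : Fin p) :
    CSV.QQ k Y = rk1 U V k := by
  have hq := h.q
  have := (exists_ssvd _ hq).choose_spec.choose_spec.choose_spec
  rw [CSV.QQ, dif_pos hq]
  exact (this.unique h).2 k

lemma ee_ne {p : ℕ} {κ : Type*} {d : Fin p → ℝ} (ha : StrictAnti d) (hp : ∀ i, 0 < d i)
    (r : Fin p ⊕ κ) (j : Fin p) : ee d r j ≠ 0 := by
  rcases r with i | a
  · simp only [ee]
    split_ifs with h h'
    · exact (sub_neg.2 (ha h)).ne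
    · have := hp i; have := hp j; positivity
    · exact one_ne_zero
  · exact ne_of_gt (hp j)

/-- scaling as an equivalence -/
noncomputable def DelE {p : ℕ} {κ : Type*} (c : Fin p ⊕ κ → Fin p → ℝ) (hc : ∀ r j, c r j ≠ 0) :
    (Fin p ⊕ κ → Fin p → ℝ) ≃ₗ[ℝ] (Fin p ⊕ κ → Fin p → ℝ) :=
  LinearEquiv.ofLinearMap (Del c) (Del fun r j => (c r j)⁻¹)
    (by ext; simp [Del, hc]) (by ext; simp [Del, hc])

open Filter Topology in
lemma chart {N p : ℕ} (hNp : p ≤ N) {Y0 : Fin N → Fin p → ℝ} {U : Matrix (Fin N) (Fin p) ℝ}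
    {d : Fin p → ℝ} {V : Matrix (Fin p) (Fin p) ℝ} (h : SSVD (Matrix.of Y0) U d V) :
    ∃ (R : (Fin p ⊕ Fin (N - p) → Fin p → ℝ) ≃ₗ[ℝ] (Fin N → Fin p → ℝ))
      (X : (Fin N → Fin p → ℝ) → (Fin p ⊕ Fin (N - p) → Fin p → ℝ))
      (Ps : (Fin p → ℝ) → (Fin p ⊕ Fin (N - p) → Fin p → ℝ) → (Fin N → Fin p → ℝ)),
      X Y0 = 0 ∧
      HasStrictFDerivAt X (((DelE (ee d) (ee_ne h.anti h.pos)).trans R).toContinuousLinearEquiv.symm :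
        (Fin N → Fin p → ℝ) →L[ℝ] (Fin p ⊕ Fin (N - p) → Fin p → ℝ)) Y0 ∧
      (∀ D, HasStrictFDerivAt (Ps D)
        (LinearMap.toContinuousLinearMap (R.toLinearMap.comp (Del (ee D)))) 0) ∧
      ∀ᶠ Y in 𝓝 Y0, qpoly (Matrix.of Y) ≠ 0 ∧ dd Y = (fun i => d i + X Y (Sum.inl i) i) ∧
        ∀ k c, Y + c • QQ k Y = Ps (Function.update d k (d k + c)) (X Y) := by
  obtain ⟨Ut, h1, h2, h4⟩ := exists_ext hNp U h.hU
  have h3 := h.hV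
  let R := Qe.trans (Re Ut V h1 h2 h3)
  let LE := ((DelE (ee d) (ee_ne h.anti h.pos)).trans R).toContinuousLinearEquiv
  have hD : HasStrictFDerivAt (Psi Ut V d) (LE : _ →L[ℝ] _) 0 := Psi_deriv Ut V h1 h2 h3 d
  have h0 : Psi Ut V d 0 = Y0 := by
    have e := Psi_eq Ut V d 0
    simp only [map_zero, NormedSpace.exp_zero, Matrix.mul_one, h4] at e
    simp only [Pi.zero_apply, add_zero] at e
    rw [← h.eq] at e
    exact e
  let X := hD.localInverse (Psi Ut V d) LE 0
  have hX0 : X Y0 = 0 := by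
    have := hD.localInverse_apply_image
    rwa [h0] at this
  have hXd : HasStrictFDerivAt X (LE.symm : _ →L[ℝ] _) Y0 := by
    have := hD.to_localInverse
    rwa [h0] at this
  refine ⟨R, X, Psi Ut V, hX0, hXd, fun D => Psi_deriv Ut V h1 h2 h3 D, ?_⟩
  have hr : ∀ᶠ Y in 𝓝 Y0, Psi Ut V d (X Y) = Y := by
    have := hD.eventually_right_inverse
    rwa [h0] at this
  have hcont : Tendsto X (𝓝 Y0) (𝓝 0) := by
    have := hXd.continuousAt.tendsto
    rwa [hX0] at this
  have hent : ∀ i : Fin p, Tendsto (fun Y => d i + X Y (Sum.inl i) i) (𝓝 Y0) (𝓝 (d i)) := by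
    intro i
    have h5 : Continuous fun Z : Fin p ⊕ Fin (N - p) → Fin p → ℝ => d i + Z (Sum.inl i) i := by
      fun_prop
    have := (h5.tendsto 0).comp hcont
    simpa [Function.comp_def] using this
  have hpos : ∀ᶠ Y in 𝓝 Y0, ∀ i, 0 < d i + X Y (Sum.inl i) i :=
    eventually_all.2 fun i => (hent i).eventually (lt_mem_nhds (h.pos i))
  have hanti : ∀ᶠ Y in 𝓝 Y0, ∀ i j, i < j → d j + X Y (Sum.inl j) j < d i + X Y (Sum.inl i) i := by
    refine eventually_all.2 fun i => eventually_all.2 fun j => ?_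
    by_cases hij : i < j
    · filter_upwards [(hent j).eventually_lt (hent i) (h.anti hij)] with Y hY _
      exact hY
    · exact Eventually.of_forall fun Y hh => absurd hh hij
  filter_upwards [hr, hpos, hanti] with Y e1 e2 e3
  have hs := Psi_ssvd Ut V h1 h3 d (X Y) (fun i j hij => e3 i j hij) e2
  rw [e1] at hs
  refine ⟨hs.q, hs.dd, fun k c => ?_⟩
  have e := Psi_eq Ut V (Function.update d k (d k + c)) (X Y)
  have e' : (fun i => Function.update d k (d k + c) i + X Y (Sum.inl i) i) =
      Function.update (fun i => d i + X Y (Sum.inl i) i) k (d k + X Y (Sum.inl k) k + c) := by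
    ext i
    by_cases hi : i = k
    · subst hi; simp; ring
    · simp [hi]
  rw [e'] at e
  have e4 := usv_update (Ut * NormedSpace.exp (skA (X Y)) * fr (Fin (N - p)) (1 : Fin p → ℝ))
    (fun i => d i + X Y (Sum.inl i) i) (V * NormedSpace.exp (skB (X Y))) k c
  rw [e4, ← hs.eq, ← hs.QQ] at e
  exact e.symm

end CSV

namespace CSV

/-- the weight in the Jacobian -/
noncomputable def JJ {p : ℕ} (m : ℕ) (k : Fin p) (δ : Fin p → ℝ) : ℝ :=
  δ k ^ m * ∏ j ∈ Finset.univ.erase k, |δ k ^ 2 - δ j ^ 2|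

lemma ee_pair {p : ℕ} {κ : Type*} (d : Fin p → ℝ) (i j : Fin p) (h : i ≠ j) :
    |ee d (Sum.inl i : Fin p ⊕ κ) j| * |ee d (Sum.inl j : Fin p ⊕ κ) i| = |d i ^ 2 - d j ^ 2| := by
  rw [← abs_mul]
  rcases lt_or_gt_of_ne h with h | h
  · simp only [ee, h, h.not_gt, if_true, if_false]
    rw [← abs_neg]; congr 1; ring
  · simp only [ee, h, h.not_gt, if_true, if_false]
    congr 1; ring

lemma prod_ee {p m : ℕ} (k : Fin p) (d : Fin p → ℝ) (ha : StrictAnti d) (hp : ∀ i, 0 < d i)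
    (t : ℝ) (ht : 0 < t) :
    |∏ r : Fin p ⊕ Fin m, ∏ j, ee (Function.update d k t) r j / ee d r j|
      = JJ m k (Function.update d k t) / JJ m k d := by
  set D := Function.update d k t with hD
  have hDk : D k = t := by simp [hD]
  have hDj : ∀ j, j ≠ k → D j = d j := by intro j hj; simp [hD, hj]
  rw [Fintype.prod_sum_type, abs_mul]
  have e2 : |∏ a : Fin m, ∏ j, ee D (Sum.inr a : Fin p ⊕ Fin m) j / ee d (Sum.inr a : Fin p ⊕ Fin m) j|
      = D k ^ m / d k ^ m := by
    have : ∀ a : Fin m, ∏ j, ee D (Sum.inr a : Fin p ⊕ Fin m) j / ee d (Sum.inr a : Fin p ⊕ Fin m) j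
        = D k / d k := by
      intro a
      rw [Finset.prod_eq_single k]
      · rfl
      · intro j _ hj
        simp only [ee]
        rw [hDj j hj, div_self (hp j).ne']
      · simp
    rw [Finset.prod_congr rfl fun a _ => this a]
    simp only [Finset.prod_const, Finset.card_univ, Fintype.card_fin, ← div_pow]
    rw [abs_of_pos]
    rw [hDk]
    have := hp k
    positivity
  have e1 : |∏ i : Fin p, ∏ j, ee D (Sum.inl i : Fin p ⊕ Fin m) j / ee d (Sum.inl i : Fin p ⊕ Fin m) j|
      = ∏ j ∈ Finset.univ.erase k, (|D k ^ 2 - D j ^ 2| / |d k ^ 2 - d j ^ 2|) := by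
    set g : Fin p → Fin p → ℝ := fun i j =>
      |ee D (Sum.inl i : Fin p ⊕ Fin m) j / ee d (Sum.inl i : Fin p ⊕ Fin m) j| with hg
    have g1 : ∀ i j, i ≠ k → j ≠ k → g i j = 1 := by
      intro i j hi hj
      have : ee D (Sum.inl i : Fin p ⊕ Fin m) j = ee d (Sum.inl i : Fin p ⊕ Fin m) j := by
        simp only [ee, hDj i hi, hDj j hj]
      simp only [hg]
      rw [this, div_self (ee_ne ha hp _ _), abs_one]
    have gk : g k k = 1 := by simp [hg, ee]
    have e3 : ∀ i, i ≠ k → ∏ j, g i j = g i k := by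
      intro i hi
      rw [Finset.prod_eq_single k]
      · intro j _ hj; exact g1 i j hi hj
      · simp
    calc _ = ∏ i, ∏ j, g i j := by
          rw [Finset.abs_prod]
          refine Finset.prod_congr rfl fun i _ => ?_
          rw [Finset.abs_prod]
      _ = (∏ j, g k j) * ∏ i ∈ Finset.univ.erase k, ∏ j, g i j :=
          (Finset.mul_prod_erase _ _ (Finset.mem_univ k)).symm
      _ = (∏ j ∈ Finset.univ.erase k, g k j) * ∏ i ∈ Finset.univ.erase k, g i k := by
          rw [← Finset.mul_prod_erase _ (fun j => g k j) (Finset.mem_univ k), gk, one_mul]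
          congr 1
          exact Finset.prod_congr rfl fun i hi => e3 i (Finset.ne_of_mem_erase hi)
      _ = _ := by
          rw [← Finset.prod_mul_distrib]
          refine Finset.prod_congr rfl fun j hj => ?_
          have hj := Finset.ne_of_mem_erase hj
          rw [← ee_pair (κ := Fin m) D k j hj.symm, ← ee_pair (κ := Fin m) d k j hj.symm]
          simp only [hg, abs_div]
          rw [div_mul_div_comm]
  rw [e1, e2, Finset.prod_div_distrib, JJ, JJ, mul_comm, div_mul_div_comm]

lemma jac {N p : ℕ} (hNp : p ≤ N) {Y0 : Fin N → Fin p → ℝ} {U : Matrix (Fin N) (Fin p) ℝ}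
    {d : Fin p → ℝ} {V : Matrix (Fin p) (Fin p) ℝ} (h : SSVD (Matrix.of Y0) U d V)
    (k : Fin p) (c : ℝ) (hc : 0 < d k + c) :
    ∃ L : (Fin N → Fin p → ℝ) →L[ℝ] (Fin N → Fin p → ℝ),
      HasFDerivAt (fun Y => Y + c • QQ k Y) L Y0 ∧
      |L.det| = JJ (N - p) k (Function.update d k (d k + c)) / JJ (N - p) k d := by
  obtain ⟨R, X, Ps, hX0, hX, hPs, hev⟩ := chart hNp h
  set D := Function.update d k (d k + c) with hD
  have h1 := hPs D
  rw [← hX0] at h1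
  have h2 := h1.comp Y0 hX
  refine ⟨_, h2.hasFDerivAt.congr_of_eventuallyEq ?_, ?_⟩
  · filter_upwards [hev] with Y hY
    exact hY.2.2 k c
  · rw [← prod_ee k d h.anti h.pos (d k + c) hc, ← hD, ← Del_det]
    congr 1
    rw [← LinearMap.det_conj _ R]
    rw [ContinuousLinearMap.det]
    congr 1
    refine LinearMap.ext fun Y => ?_
    change R (Del (ee D) (Del (fun r j => (ee d r j)⁻¹) (R.symm Y))) = R (Del _ (R.symm Y))
    congr 1
    ext r j
    simp only [Del, LinearMap.coe_mk, AddHom.coe_mk]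
    ring

open Filter Topology in
lemma cont_dd {N p : ℕ} (hNp : p ≤ N) {Y0 : Fin N → Fin p → ℝ} (hq : qpoly (Matrix.of Y0) ≠ 0) :
    ContinuousAt dd Y0 := by
  obtain ⟨U, d, V, h⟩ := exists_ssvd _ hq
  obtain ⟨R, X, Ps, hX0, hX, hPs, hev⟩ := chart hNp h
  have : ContinuousAt (fun Y => fun i => d i + X Y (Sum.inl i) i) Y0 := by
    have h5 : Continuous fun Z : Fin p ⊕ Fin (N - p) → Fin p → ℝ => fun i => d i + Z (Sum.inl i) i := by
      fun_prop
    exact h5.continuousAt.comp hX.continuousAt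
  refine this.congr ?_
  filter_upwards [hev] with Y hY
  exact hY.2.1.symm

lemma cont_QQ {N p : ℕ} (hNp : p ≤ N) {Y0 : Fin N → Fin p → ℝ} (hq : qpoly (Matrix.of Y0) ≠ 0)
    (k : Fin p) : ContinuousAt (QQ k) Y0 := by
  obtain ⟨U, d, V, h⟩ := exists_ssvd _ hq
  obtain ⟨L, hL, -⟩ := jac hNp h k 1 (by have := h.pos k; positivity)
  have := hL.continuousAt.sub continuousAt_id
  refine this.congr (Filter.Eventually.of_forall fun Y => ?_)
  simp

lemma meas_M {N p : ℕ} : IsOpen {Y : Fin N → Fin p → ℝ | qpoly (Matrix.of Y) ≠ 0} :=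
  isOpen_ne_fun qpoly_cont continuous_const

open Classical in
lemma meas_aux {N p : ℕ} {F : Type*} [TopologicalSpace F] [MeasurableSpace F] [BorelSpace F] [Zero F]
    (f : (Fin N → Fin p → ℝ) → F)
    (hf : ∀ Y, qpoly (Matrix.of Y) ≠ 0 → ContinuousAt f Y)
    (h0 : ∀ Y, ¬ qpoly (Matrix.of Y) ≠ 0 → f Y = 0) : Measurable f := by
  have : f = Set.piecewise {Y : Fin N → Fin p → ℝ | qpoly (Matrix.of Y) ≠ 0} f (fun _ => 0) := by
    ext Y
    by_cases h : qpoly (Matrix.of Y) ≠ 0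
    · rw [Set.piecewise_eq_of_mem _ _ _ h]
    · rw [Set.piecewise_eq_of_notMem _ _ _ h, h0 Y h]
  rw [this]
  exact ContinuousOn.measurable_piecewise (fun Y hY => (hf Y hY).continuousWithinAt)
    continuousOn_const meas_M.measurableSet

lemma meas_dd {N p : ℕ} (hNp : p ≤ N) : Measurable (dd : (Fin N → Fin p → ℝ) → _) :=
  meas_aux _ (fun _ h => cont_dd hNp h) fun Y h => by rw [dd, dif_neg h]

lemma meas_QQ {N p : ℕ} (hNp : p ≤ N) (k : Fin p) :
    Measurable (QQ k : (Fin N → Fin p → ℝ) → _) :=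
  meas_aux _ (fun _ h => cont_QQ hNp h k) fun Y h => by rw [QQ, dif_neg h]

end CSV

namespace CSV

lemma integrable_poly_gauss (b : ℝ) (hb : 0 < b) (q : Polynomial ℝ) :
    Integrable fun x : ℝ => Real.exp (-b * x ^ 2) * q.eval x := by
  induction q using Polynomial.induction_on' with
  | add q r hq hr =>
    simp only [Polynomial.eval_add, mul_add]
    exact hq.add hr
  | monomial n a =>
    have := integrable_rpow_mul_exp_neg_mul_sq hb (s := (n : ℝ)) (by
      have : (0 : ℝ) ≤ n := n.cast_nonneg
      linarith)
    simp only [Real.rpow_natCast] at this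
    simp only [Polynomial.eval_monomial]
    refine (this.const_mul a).congr (Filter.Eventually.of_forall fun x => ?_)
    simp only; ring

/-- the one dimensional density -/
noncomputable def ff {p : ℕ} (σ : ℝ) (m : ℕ) (K : Fin p) (δ : Fin p → ℝ) (Λ z : ℝ) : ℝ :=
  Real.exp (-(z - Λ) ^ 2 / (2 * σ ^ 2)) * z ^ m *
    ∏ j ∈ Finset.univ.erase K, |z ^ 2 - δ j ^ 2|

/-- the admissible interval -/
def GG {p : ℕ} (K K1 : Fin p) (δ : Fin p → ℝ) : Set ℝ :=
  {z | δ K1 < z ∧ ∀ j : Fin p, (j : ℕ) < K → z < δ j}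

section
variable {p : ℕ} (σ : ℝ) (m : ℕ) (K K1 : Fin p) (δ : Fin p → ℝ) (Λ : ℝ)

lemma ff_cont : Continuous (ff σ m K δ Λ) := by
  unfold ff
  fun_prop

lemma ff_meas : Measurable fun x : ((Fin p → ℝ) × ℝ) × ℝ => ff σ m K x.1.1 x.1.2 x.2 := by
  unfold ff
  fun_prop

lemma ff_int (hσ : 0 < σ) : Integrable (ff σ m K δ Λ) := by
  let q : Polynomial ℝ := Polynomial.X ^ m *
    ∏ j ∈ Finset.univ.erase K, (Polynomial.X ^ 2 - Polynomial.C (δ j ^ 2))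
  have h := integrable_poly_gauss (1 / (2 * σ ^ 2)) (by positivity)
    (q.comp (Polynomial.X + Polynomial.C Λ))
  have h2 := h.comp_sub_right Λ
  refine h2.mono (ff_cont σ m K δ Λ).aestronglyMeasurable (Filter.Eventually.of_forall fun z => ?_)
  simp only [q, Polynomial.eval_comp, Polynomial.eval_add, Polynomial.eval_X, Polynomial.eval_C,
    sub_add_cancel, Polynomial.eval_mul, Polynomial.eval_pow, Polynomial.eval_prod,
    Polynomial.eval_sub, ff, norm_mul, norm_prod, Real.norm_eq_abs, abs_abs, Finset.abs_prod]
  rw [mul_assoc]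
  apply le_of_eq
  congr 3
  field_simp

lemma GG_open : IsOpen (GG K K1 δ) := by
  have : GG K K1 δ = Set.Ioi (δ K1) ∩ ⋂ j : {j : Fin p // (j : ℕ) < K}, Set.Iio (δ j) := by
    ext z; simp [GG]
  rw [this]
  exact isOpen_Ioi.inter (isOpen_iInter_of_finite fun j => isOpen_Iio)

lemma GG_ord : (GG K K1 δ).OrdConnected := by
  refine ⟨fun x hx y hy z hz => ⟨hx.1.trans_le hz.1, fun j hj => hz.2.trans_lt (hy.2 j hj)⟩⟩

lemma ff_update (t : ℝ) : ff σ m K (Function.update δ K t) Λ = ff σ m K δ Λ := by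
  ext z
  unfold ff
  congr 1
  refine Finset.prod_congr rfl fun j hj => ?_
  rw [Function.update_of_ne (Finset.ne_of_mem_erase hj)]

lemma ff_JJ : ff σ m K δ Λ (δ K) = Real.exp (-(δ K - Λ) ^ 2 / (2 * σ ^ 2)) * JJ m K δ := by
  unfold ff JJ
  ring

variable {K K1}

lemma GG_update (hK : (K1 : ℕ) = K + 1) (t : ℝ) : GG K K1 (Function.update δ K t) = GG K K1 δ := by
  have h1 : K1 ≠ K := fun h => by rw [h] at hK; omega
  ext z
  unfold GG
  simp only [Set.mem_ofPred_eq, Function.update_of_ne h1]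
  refine and_congr_right fun _ => forall_congr' fun j => forall_congr' fun hj => ?_
  rw [Function.update_of_ne (fun h => by rw [h] at hj; omega)]

variable {δ}

lemma mem_GG (hK : (K1 : ℕ) = K + 1) (ha : StrictAnti δ) : δ K ∈ GG K K1 δ :=
  ⟨ha (Fin.lt_def.2 (by omega)), fun j hj => ha (Fin.lt_def.2 hj)⟩

lemma GG_inter (hK : (K1 : ℕ) = K + 1) (ha : StrictAnti δ) : {z : ℝ | δ K < z ∧ ∀ j : Fin p, (j : ℕ) < K → z < δ j}
    = GG K K1 δ ∩ Set.Ioi (δ K) := by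
  ext z
  simp only [Set.mem_ofPred_eq, GG, Set.mem_inter_iff, Set.mem_Ioi]
  have : δ K1 < δ K := ha (Fin.lt_def.2 (by omega))
  constructor
  · rintro ⟨h1, h2⟩; exact ⟨⟨this.trans h1, h2⟩, h1⟩
  · rintro ⟨⟨h1, h2⟩, h3⟩; exact ⟨h3, h2⟩

lemma update_anti (hK : (K1 : ℕ) = K + 1) (ha : StrictAnti δ) (t : ℝ) (ht : t ∈ GG K K1 δ) : StrictAnti (Function.update δ K t) := by
  intro i j hij
  by_cases hi : i = K
  · subst hi
    have : j ≠ i := hij.ne'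
    rw [Function.update_self, Function.update_of_ne this]
    have : K1 ≤ j := Fin.le_def.2 (by have := Fin.lt_def.1 hij; omega)
    exact (ha.antitone this).trans_lt ht.1
  · by_cases hj : j = K
    · subst hj
      rw [Function.update_self, Function.update_of_ne hi]
      exact ht.2 i hij
    · rw [Function.update_of_ne hi, Function.update_of_ne hj]
      exact ha hij

lemma update_pos (hK : (K1 : ℕ) = K + 1) (ha : StrictAnti δ) (hp : ∀ i, 0 < δ i) (t : ℝ) (ht : t ∈ GG K K1 δ) : ∀ i, 0 < Function.update δ K t i := by
  intro i
  by_cases hi : i = K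
  · subst hi
    rw [Function.update_self]
    exact (hp K1).trans ht.1
  · rw [Function.update_of_ne hi]; exact hp i

lemma JJ_pos (hK : (K1 : ℕ) = K + 1) (ha : StrictAnti δ) (hp : ∀ i, 0 < δ i) : 0 < JJ m K δ := by
  unfold JJ
  have := hp K
  refine mul_pos (by positivity) (Finset.prod_pos fun j hj => ?_)
  have hj := Finset.ne_of_mem_erase hj
  rw [abs_pos, sub_ne_zero]
  intro h
  have := (pow_left_inj₀ (hp K).le (hp j).le two_ne_zero).1 h
  exact hj (ha.injective this).symm

lemma ff_pos (hK : (K1 : ℕ) = K + 1) (ha : StrictAnti δ) (hp : ∀ i, 0 < δ i) : ∀ z ∈ GG K K1 δ, 0 < ff σ m K δ Λ z := by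
  intro z hz
  have h := ff_JJ σ m K (Function.update δ K z) Λ
  rw [ff_update, Function.update_self] at h
  rw [h]
  exact mul_pos (Real.exp_pos _) (JJ_pos m hK (update_anti hK ha z hz) (update_pos hK ha hp z hz))

end

/-- the statistic -/
noncomputable def st {p : ℕ} (σ : ℝ) (m : ℕ) (K K1 : Fin p) (δ : Fin p → ℝ) (Λ : ℝ) : ℝ :=
  (∫ z in GG K K1 δ ∩ Set.Ioi (δ K), ff σ m K δ Λ z) / (∫ z in GG K K1 δ, ff σ m K δ Λ z)

lemma meas_GG {p : ℕ} (K K1 : Fin p) :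
    MeasurableSet {x : ((Fin p → ℝ) × ℝ) × ℝ | x.2 ∈ GG K K1 x.1.1} := by
  have : {x : ((Fin p → ℝ) × ℝ) × ℝ | x.2 ∈ GG K K1 x.1.1}
      = {x | x.1.1 K1 < x.2} ∩ ⋂ j : {j : Fin p // (j : ℕ) < K}, {x | x.2 < x.1.1 j} := by
    ext z; simp [GG]
  rw [this]
  refine (measurableSet_lt (by fun_prop) (by fun_prop)).inter
    (MeasurableSet.iInter fun j => measurableSet_lt (by fun_prop) (by fun_prop))

lemma meas_int {p : ℕ} (σ : ℝ) (m : ℕ) (K : Fin p) (S : (Fin p → ℝ) → Set ℝ)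
    (hS : MeasurableSet {x : ((Fin p → ℝ) × ℝ) × ℝ | x.2 ∈ S x.1.1}) (hS' : ∀ δ, MeasurableSet (S δ)) :
    Measurable fun x : (Fin p → ℝ) × ℝ => ∫ z in S x.1, ff σ m K x.1 x.2 z := by
  have h1 : Measurable fun x : ((Fin p → ℝ) × ℝ) × ℝ =>
      {x : ((Fin p → ℝ) × ℝ) × ℝ | x.2 ∈ S x.1.1}.indicator
        (fun x => ff σ m K x.1.1 x.1.2 x.2) x := (ff_meas σ m K).indicator hS
  have h2 := (h1.stronglyMeasurable.integral_prod_right' (ν := volume)).measurable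
  convert h2 using 2 with x
  rw [← integral_indicator (hS' _)]
  rfl

lemma meas_st {p : ℕ} (σ : ℝ) (m : ℕ) (K K1 : Fin p) :
    Measurable fun x : (Fin p → ℝ) × ℝ => st σ m K K1 x.1 x.2 := by
  unfold st
  refine (meas_int σ m K (fun δ => GG K K1 δ ∩ Set.Ioi (δ K)) ?_ ?_).div
    (meas_int σ m K (fun δ => GG K K1 δ) (meas_GG K K1) fun δ => (GG_open K K1 δ).measurableSet)
  · exact (meas_GG K K1).inter (measurableSet_lt (by fun_prop) (by fun_prop))
  · exact fun δ => (GG_open K K1 δ).measurableSet.inter measurableSet_Ioi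

end CSV

namespace CSV
open scoped ENNReal

lemma SSVD.inner_QY {N p : ℕ} {Y U : Matrix (Fin N) (Fin p) ℝ} {d : Fin p → ℝ}
    {V : Matrix (Fin p) (Fin p) ℝ} (h : SSVD Y U d V) (k : Fin p) :
    ∑ i, ∑ j, rk1 U V k i j * Y i j = d k := by
  have e : Uᵀ * Y * V = diagonal d := by
    rw [h.eq]
    calc Uᵀ * (U * diagonal d * Vᵀ) * V = (Uᵀ * U) * diagonal d * (Vᵀ * V) := by
          simp only [Matrix.mul_assoc]
      _ = _ := by rw [h.hU, h.hV, Matrix.one_mul, Matrix.mul_one]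
  have := congrFun (congrFun e k) k
  simp only [Matrix.mul_apply, Matrix.transpose_apply, diagonal_apply_eq] at this
  rw [← this, Finset.sum_comm]
  refine Finset.sum_congr rfl fun j _ => ?_
  rw [Finset.sum_mul]
  refine Finset.sum_congr rfl fun i _ => ?_
  simp only [rk1]; ring

lemma SSVD.inner_QQ {N p : ℕ} {Y U : Matrix (Fin N) (Fin p) ℝ} {d : Fin p → ℝ}
    {V : Matrix (Fin p) (Fin p) ℝ} (h : SSVD Y U d V) (k : Fin p) :
    ∑ i, ∑ j, rk1 U V k i j ^ 2 = 1 := by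
  have h1 := congrFun (congrFun h.hU k) k
  have h2 := congrFun (congrFun h.hV k) k
  simp only [Matrix.mul_apply, Matrix.transpose_apply, Matrix.one_apply_eq] at h1 h2
  calc ∑ i, ∑ j, rk1 U V k i j ^ 2 = (∑ i, U i k * U i k) * ∑ j, V j k * V j k := by
        rw [Finset.sum_mul_sum]
        simp only [rk1]
        refine Finset.sum_congr rfl fun i _ => Finset.sum_congr rfl fun j _ => ?_
        ring
    _ = 1 := by rw [h1, h2, one_mul]

/-- the drift -/
def lam {N p : ℕ} (B : Fin N → Fin p → ℝ) (Q : Fin N → Fin p → ℝ) : ℝ := ∑ i, ∑ j, Q i j * B i j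

lemma SSVD.shift {N p : ℕ} {Y : Fin N → Fin p → ℝ} {U : Matrix (Fin N) (Fin p) ℝ} {d : Fin p → ℝ}
    {V : Matrix (Fin p) (Fin p) ℝ} (h : SSVD (Matrix.of Y) U d V) {K K1 : Fin p}
    (hK : (K1 : ℕ) = K + 1) (c : ℝ) (hc : d K + c ∈ GG K K1 d) :
    SSVD (Matrix.of (Y + c • CSV.QQ K Y)) U (Function.update d K (d K + c)) V := by
  refine ⟨?_, h.hU, h.hV, update_anti hK h.anti _ hc, update_pos hK h.anti h.pos _ hc⟩
  rw [usv_update, ← h.eq, h.QQ]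
  rfl

lemma energy {N p : ℕ} {Y : Fin N → Fin p → ℝ} {U : Matrix (Fin N) (Fin p) ℝ} {d : Fin p → ℝ}
    {V : Matrix (Fin p) (Fin p) ℝ} (h : SSVD (Matrix.of Y) U d V) (K : Fin p) (c : ℝ)
    (B : Fin N → Fin p → ℝ) :
    (∑ i, ∑ j, ((Y + c • QQ K Y) i j - B i j) ^ 2) + (d K - lam B (QQ K Y)) ^ 2
      = (∑ i, ∑ j, (Y i j - B i j) ^ 2) + (d K + c - lam B (QQ K Y)) ^ 2 := by
  have h1 := h.inner_QY K
  have h2 := h.inner_QQ K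
  rw [← h.QQ] at h1 h2
  simp only [Matrix.of_apply] at h1
  have e : ∑ i, ∑ j, ((Y + c • QQ K Y) i j - B i j) ^ 2 = (∑ i, ∑ j, (Y i j - B i j) ^ 2)
      + 2 * c * (∑ i, ∑ j, QQ K Y i j * Y i j) - 2 * c * lam B (QQ K Y)
      + c ^ 2 * ∑ i, ∑ j, QQ K Y i j ^ 2 := by
    simp only [lam, Finset.mul_sum, ← Finset.sum_add_distrib, ← Finset.sum_sub_distrib]
    refine Finset.sum_congr rfl fun i _ => Finset.sum_congr rfl fun j _ => ?_
    simp only [Pi.add_apply, Pi.smul_apply, smul_eq_mul]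
    ring
  rw [e, h1, h2]
  ring

/-- the density -/
noncomputable def pdf {N p : ℕ} (B : Fin N → Fin p → ℝ) (v : NNReal) (Y : Fin N → Fin p → ℝ) : ℝ≥0∞ :=
  ∏ i, ∏ j, gaussianPDF (B i j) v (Y i j)

lemma pdf_eq {N p : ℕ} (B : Fin N → Fin p → ℝ) (v : NNReal) (Y : Fin N → Fin p → ℝ) :
    pdf B v Y = ENNReal.ofReal ((∏ _i : Fin N, ∏ _j : Fin p, (√(2 * Real.pi * v))⁻¹) *
      Real.exp (-(∑ i, ∑ j, (Y i j - B i j) ^ 2) / (2 * v))) := by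
  have : (∏ _i : Fin N, ∏ _j : Fin p, (√(2 * Real.pi * v))⁻¹) *
      Real.exp (-(∑ i, ∑ j, (Y i j - B i j) ^ 2) / (2 * v)) =
      ∏ i, ∏ j, gaussianPDFReal (B i j) v (Y i j) := by
    simp only [gaussianPDFReal, Finset.prod_mul_distrib, ← Real.exp_sum, neg_div, Finset.sum_div,
      Finset.sum_neg_distrib]
  rw [this, pdf, ENNReal.ofReal_prod_of_nonneg
    fun i _ => Finset.prod_nonneg fun j _ => gaussianPDFReal_nonneg _ _ _]
  refine Finset.prod_congr rfl fun i _ => ?_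
  rw [ENNReal.ofReal_prod_of_nonneg fun j _ => gaussianPDFReal_nonneg _ _ _]
  rfl

lemma meas_pdf {N p : ℕ} (B : Fin N → Fin p → ℝ) (v : NNReal) : Measurable (pdf B v) := by
  unfold pdf
  refine Finset.measurable_prod _ fun i _ => Finset.measurable_prod _ fun j _ => ?_
  exact (measurable_gaussianPDF _ _).comp (by fun_prop)

lemma meas_lam {N p : ℕ} (B : Fin N → Fin p → ℝ) : Measurable (lam B) := by
  unfold lam
  fun_prop

theorem main {N p : ℕ} (hNp : p ≤ N) (B : Fin N → Fin p → ℝ) (σ : ℝ) (hσ : 0 < σ) (K K1 : Fin p)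
    (hK : (K1 : ℕ) = K + 1) (A : Set ℝ) (hA : MeasurableSet A) (v : NNReal) (hv : (v : ℝ) = σ ^ 2) :
    ∫⁻ Y in {Y : Fin N → Fin p → ℝ | qpoly (Matrix.of Y) ≠ 0}, pdf B v Y *
      A.indicator 1 (st σ (N - p) K K1 (dd Y) (lam B (QQ K Y))) =
    (∫⁻ Y in {Y : Fin N → Fin p → ℝ | qpoly (Matrix.of Y) ≠ 0}, pdf B v Y) *
      volume (A ∩ Set.Ioo 0 1) := by
  set M := {Y : Fin N → Fin p → ℝ | qpoly (Matrix.of Y) ≠ 0} with hMdef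
  have mdd := meas_dd (N := N) (p := p) hNp
  have mQQ := meas_QQ (N := N) (p := p) hNp K
  have mlam : Measurable fun Y : Fin N → Fin p → ℝ => lam B (QQ K Y) := (meas_lam B).comp mQQ
  have hMm : MeasurableSet M := meas_M.measurableSet
  let Mc : ℝ → Set (Fin N → Fin p → ℝ) := fun c => {Y | Y ∈ M ∧ dd Y K + c ∈ GG K K1 (dd Y)}
  let Φ : ℝ → (Fin N → Fin p → ℝ) → (Fin N → Fin p → ℝ) := fun c Y => Y + c • QQ K Y
  let T : (Fin N → Fin p → ℝ) → ℝ≥0∞ := fun Y =>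
    A.indicator 1 (st σ (N - p) K K1 (dd Y) (lam B (QQ K Y)))
  let f : (Fin N → Fin p → ℝ) → ℝ≥0∞ := fun Y =>
    ENNReal.ofReal (ff σ (N - p) K (dd Y) (lam B (QQ K Y)) (dd Y K))
  let C : (Fin N → Fin p → ℝ) → ℝ≥0∞ := fun Y =>
    ENNReal.ofReal (∫ z in GG K K1 (dd Y), ff σ (N - p) K (dd Y) (lam B (QQ K Y)) z)
  let w : ℝ → (Fin N → Fin p → ℝ) → ℝ≥0∞ := fun c Y =>
    ENNReal.ofReal (JJ (N - p) K (Function.update (dd Y) K (dd Y K + c)) / JJ (N - p) K (dd Y))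
  have hss : ∀ Y ∈ M, ∃ U V, SSVD (Matrix.of Y) U (dd Y) V := by
    intro Y hY
    obtain ⟨U, d, V, h⟩ := exists_ssvd _ hY
    refine ⟨U, V, ?_⟩
    rw [h.dd]; exact h
  have hΦs : ∀ c, ∀ Y ∈ Mc c, Φ c Y ∈ M ∧
      dd (Φ c Y) = Function.update (dd Y) K (dd Y K + c) ∧ QQ K (Φ c Y) = QQ K Y := by
    rintro c Y ⟨hY, hYc⟩
    obtain ⟨U, V, h⟩ := hss Y hY
    have h' := h.shift hK c hYc
    exact ⟨h'.q, h'.dd, (h'.QQ K).trans (h.QQ K).symm⟩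
  have hinv : ∀ c, ∀ Y ∈ Mc c, Φ (-c) (Φ c Y) = Y := by
    intro c Y hY
    change Φ c Y + (-c) • QQ K (Φ c Y) = Y
    rw [(hΦs c Y hY).2.2]
    simp [Φ]
  have hmaps : ∀ c, ∀ Y ∈ Mc c, Φ c Y ∈ Mc (-c) := by
    intro c Y hY
    obtain ⟨h1, h2, h3⟩ := hΦs c Y hY
    obtain ⟨U, V, h⟩ := hss Y hY.1
    refine ⟨h1, ?_⟩
    rw [h2, GG_update _ hK, Function.update_self, add_neg_cancel_right]
    exact mem_GG hK h.anti
  have himg : ∀ c, Φ c '' Mc c = Mc (-c) := by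
    intro c
    apply Set.Subset.antisymm
    · rintro _ ⟨Y, hY, rfl⟩; exact hmaps c Y hY
    · intro Y hY
      refine ⟨Φ (-c) Y, ?_, ?_⟩
      · have := hmaps (-c) Y hY; rwa [neg_neg] at this
      · have := hinv (-c) Y hY; rwa [neg_neg] at this
  have hMcm : MeasurableSet {x : (Fin N → Fin p → ℝ) × ℝ | x.1 ∈ Mc x.2} := by
    have h1 : Measurable fun x : (Fin N → Fin p → ℝ) × ℝ =>
        (((dd x.1, 0), dd x.1 K + x.2) : ((Fin p → ℝ) × ℝ) × ℝ) := by fun_prop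
    exact (measurable_fst hMm).inter (h1 (meas_GG K K1))
  have hcov : ∀ (c : ℝ) (g : (Fin N → Fin p → ℝ) → ℝ≥0∞), ∫⁻ Y in Mc (-c), g Y =
      ∫⁻ Y in Mc c, w c Y * g (Φ c Y) := by
    intro c g
    have hm : MeasurableSet (Mc c) := measurable_prodMk_right (y := c) hMcm
    have hj : ∀ Y ∈ Mc c, ∃ L : (Fin N → Fin p → ℝ) →L[ℝ] (Fin N → Fin p → ℝ),
        HasFDerivAt (Φ c) L Y ∧ |L.det| =
          JJ (N - p) K (Function.update (dd Y) K (dd Y K + c)) / JJ (N - p) K (dd Y) := by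
      rintro Y ⟨hY, hYc⟩
      obtain ⟨U, V, h⟩ := hss Y hY
      exact jac hNp h K c ((h.pos K1).trans hYc.1)
    choose! L hL using hj
    rw [← himg c, lintegral_image_eq_lintegral_abs_det_fderiv_mul volume hm
      (fun Y hY => (hL Y hY).1.hasFDerivWithinAt)
      (fun Y hY Y' hY' e => by
        have := hinv c Y hY
        rw [e, hinv c Y' hY'] at this
        exact this.symm)]
    refine setLIntegral_congr_fun hm fun Y hY => ?_
    simp only [w]
    rw [(hL Y hY).2]
  have hind : ∀ Y ∈ M, ∀ H : (Fin N → Fin p → ℝ) → ℝ≥0∞, ∀ h : ℝ → ℝ≥0∞,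
      (∀ c, Y ∈ Mc c → H (Φ c Y) = h (dd Y K + c)) →
      ∫⁻ c, (Mc c).indicator (fun Y => H (Φ c Y)) Y = ∫⁻ z in GG K K1 (dd Y), h z := by
    intro Y hY H h hh
    rw [← lintegral_indicator (GG_open _ _ _).measurableSet,
      ← lintegral_add_left_eq_self ((GG K K1 (dd Y)).indicator h) (dd Y K)]
    refine lintegral_congr fun c => ?_
    by_cases hc : Y ∈ Mc c
    · rw [Set.indicator_of_mem hc, Set.indicator_of_mem hc.2, hh c hc]
    · rw [Set.indicator_of_notMem hc, Set.indicator_of_notMem fun h' => hc ⟨hY, h'⟩]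
  have hfΦ : ∀ Y c, Y ∈ Mc c → f (Φ c Y) =
      ENNReal.ofReal (ff σ (N - p) K (dd Y) (lam B (QQ K Y)) (dd Y K + c)) := by
    intro Y c hc
    obtain ⟨h1, h2, h3⟩ := hΦs c Y hc
    simp only [f]
    rw [h2, h3, Function.update_self, ff_update]
  have hTΦ : ∀ Y c, Y ∈ Mc c → T (Φ c Y) =
      A.indicator 1 ((∫ t in GG K K1 (dd Y) ∩ Set.Ioi (dd Y K + c),
          ff σ (N - p) K (dd Y) (lam B (QQ K Y)) t) /
        (∫ t in GG K K1 (dd Y), ff σ (N - p) K (dd Y) (lam B (QQ K Y)) t)) := by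
    intro Y c hc
    obtain ⟨h1, h2, h3⟩ := hΦs c Y hc
    simp only [T, st]
    rw [h2, h3, Function.update_self, ff_update, GG_update _ hK]
  have hCpos : ∀ Y ∈ M, 0 < ∫ z in GG K K1 (dd Y), ff σ (N - p) K (dd Y) (lam B (QQ K Y)) z := by
    intro Y hY
    obtain ⟨U, V, h⟩ := hss Y hY
    exact oneD_pos _ (GG_open _ _ _) ⟨_, mem_GG hK h.anti⟩ _ (ff_pos _ _ _ hK h.anti h.pos)
      (ff_int _ _ _ _ _ hσ).integrableOn
  have hmeasC : Measurable C := by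
    have := (meas_int σ (N - p) K (fun δ => GG K K1 δ) (meas_GG K K1)
      fun δ => (GG_open K K1 δ).measurableSet).comp (mdd.prodMk mlam)
    exact this.ennreal_ofReal
  have hmeasf : Measurable f := by
    have := (ff_meas σ (N - p) K).comp ((mdd.prodMk mlam).prodMk ((measurable_pi_apply K).comp mdd))
    exact this.ennreal_ofReal
  have hmeasT : Measurable T := by
    have := (meas_st σ (N - p) K K1).comp (mdd.prodMk mlam)
    exact (measurable_one.indicator hA).comp this
  have hcore := core volume M hMm Mc hMcm (fun c Y hY => hY.1) Φ (by fun_prop) (pdf B v) f T C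
    (meas_pdf B v) hmeasf hmeasT hmeasC w hcov hinv ?_ ?_ ?_ ?_ ?_
  · change ∫⁻ Y in M, pdf B v Y * T Y = _
    rw [hcore, ← lintegral_mul_const _ (meas_pdf B v)]
    refine setLIntegral_congr_fun hMm fun Y hY => ?_
    obtain ⟨U, V, h⟩ := hss Y hY
    rw [hind Y hY (fun Y => f Y * T Y) (fun z => ENNReal.ofReal (ff σ (N - p) K (dd Y) (lam B (QQ K Y)) z) *
      A.indicator 1 ((∫ t in GG K K1 (dd Y) ∩ Set.Ioi z,
          ff σ (N - p) K (dd Y) (lam B (QQ K Y)) t) /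
        (∫ t in GG K K1 (dd Y), ff σ (N - p) K (dd Y) (lam B (QQ K Y)) t)))
        (fun c hc => by rw [hfΦ Y c hc, hTΦ Y c hc])]
    rw [oneD _ (GG_open _ _ _) (GG_ord _ _ _) _ (ff_cont _ _ _ _ _) (ff_pos _ _ _ hK h.anti h.pos)
      (ff_int _ _ _ _ _ hσ).integrableOn ⟨_, mem_GG hK h.anti⟩ A hA]
    have h1 : C Y ≠ 0 := (ENNReal.ofReal_pos.2 (hCpos Y hY)).ne'
    have h2 : C Y ≠ ∞ := ENNReal.ofReal_ne_top
    change pdf B v Y * (C Y)⁻¹ * (C Y * _) = _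
    rw [mul_assoc, ← mul_assoc (C Y)⁻¹, ENNReal.inv_mul_cancel h1 h2, one_mul]
  · intro c Y hY
    obtain ⟨h1, h2, h3⟩ := hΦs c Y hY
    simp only [C]
    rw [h2, h3, ff_update, GG_update _ hK]
  · intro c Y hY
    obtain ⟨U, V, h⟩ := hss Y hY.1
    have hE := energy h K c B
    have hpos := JJ_pos (N - p) hK h.anti h.pos
    obtain ⟨h1, h2, h3⟩ := hΦs c Y hY
    have hpos2 := JJ_pos (N - p) hK (update_anti hK h.anti _ hY.2) (update_pos hK h.anti h.pos _ hY.2)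
    have ef : f Y = ENNReal.ofReal (Real.exp (-(dd Y K - lam B (QQ K Y)) ^ 2 / (2 * σ ^ 2)) *
      JJ (N - p) K (dd Y)) := by simp only [f]; rw [ff_JJ]
    have efΦ : f (Φ c Y) = ENNReal.ofReal (Real.exp (-(dd Y K + c - lam B (QQ K Y)) ^ 2 / (2 * σ ^ 2)) *
      JJ (N - p) K (Function.update (dd Y) K (dd Y K + c))) := by
      simp only [f]; rw [ff_JJ, h2, h3, Function.update_self]
    rw [ef, efΦ, pdf_eq, pdf_eq, hv]
    simp only [w]
    set c0 := (∏ _i : Fin N, ∏ _j : Fin p, (√(2 * Real.pi * σ ^ 2))⁻¹) with hc0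
    have hc0 : 0 ≤ c0 := by positivity
    rw [← ENNReal.ofReal_mul (by positivity), ← ENNReal.ofReal_mul (by positivity),
      ← ENNReal.ofReal_mul (by positivity)]
    congr 1
    change _ / _ * (c0 * Real.exp (-(∑ i, ∑ j, ((Y + c • QQ K Y) i j - B i j) ^ 2) / _)) * _ = _
    generalize (∑ i, ∑ j, ((Y + c • QQ K Y) i j - B i j) ^ 2) = S1 at hE ⊢
    generalize (∑ i, ∑ j, (Y i j - B i j) ^ 2) = S0 at hE ⊢
    have e1 : Real.exp (-S1 / (2 * σ ^ 2)) *
        Real.exp (-(dd Y K - lam B (QQ K Y)) ^ 2 / (2 * σ ^ 2)) =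
        Real.exp (-S0 / (2 * σ ^ 2)) *
        Real.exp (-(dd Y K + c - lam B (QQ K Y)) ^ 2 / (2 * σ ^ 2)) := by
      rw [← Real.exp_add, ← Real.exp_add, ← add_div, ← add_div]
      congr 2
      linarith
    generalize JJ (N - p) K (dd Y) = J0 at *
    generalize JJ (N - p) K (Function.update (dd Y) K (dd Y K + c)) = J1 at *
    have e2 : ∀ a b : ℝ, J1 / J0 * (c0 * a) * (b * J0) = c0 * J1 * (a * b) := by
      intro a b; field_simp
    rw [e2, e1]
    ring
  · intro Y hY
    rw [hind Y hY f (fun z => ENNReal.ofReal (ff σ (N - p) K (dd Y) (lam B (QQ K Y)) z))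
      (fun c hc => hfΦ Y c hc)]
    obtain ⟨U, V, h⟩ := hss Y hY
    refine ofReal_integral_eq_lintegral_ofReal (ff_int _ _ _ _ _ hσ).integrableOn ?_
    filter_upwards [ae_restrict_mem (GG_open _ _ _).measurableSet] with z hz
    exact (ff_pos _ _ _ hK h.anti h.pos z hz).le
  · intro Y hY
    exact (ENNReal.ofReal_pos.2 (hCpos Y hY)).ne'
  · intro Y hY
    exact ENNReal.ofReal_ne_top

end CSV

/-- **Theorem 2.3 (pivot for the k-th signal).**
Model: `Y = B + E ∈ ℝ^{N×p}` (`N > p ≥ 1`) with i.i.d. `N(0,σ²)` entries of `E`; `Y = U D Vᵀ`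
a measurably chosen SVD with decreasing nonnegative singular values `d`.  Fix a zero-based
index `k` with `k + 1 < p` (one-based `k+1 ∈ {1,…,p-1}`), and let
`Λ̃ = ⟨U_k V_kᵀ, B⟩ = U_kᵀ B V_k` (with `U_k, V_k` the k-th columns).  Then
`S_{k,Λ̃} = (∫_{d_k}^{d_{k-1}} e^{-(z-Λ̃)²/(2σ²)} z^{N-p} ∏_{j≠k} |z²-d_j²| dz) /
           (∫_{d_{k+1}}^{d_{k-1}} e^{-(z-Λ̃)²/(2σ²)} z^{N-p} ∏_{j≠k} |z²-d_j²| dz)`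
is uniform on `(0,1)`.  The upper limit `d_{k-1}` (convention `d_{-1} = ∞`) is encoded by
`∀ j < k, z < d j`. -/
theorem shifted_csv_statistic_uniform
    (N p : ℕ) (hNp : p < N) (hp : 1 ≤ p)
    (σ : ℝ) (hσ : 0 < σ)
    (B : Matrix (Fin N) (Fin p) ℝ)
    (k : ℕ) (hk : k + 1 < p)
    {Ω : Type} [MeasurableSpace Ω] (P : Measure Ω) [IsProbabilityMeasure P]
    (Y U : Ω → Fin N → Fin p → ℝ) (V : Ω → Fin p → Fin p → ℝ) (d : Ω → Fin p → ℝ)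
    (hYm : Measurable Y) (hUm : Measurable U) (hVm : Measurable V) (hdm : Measurable d)
    (hlaw : Measure.map Y P =
      Measure.pi (fun i : Fin N => Measure.pi (fun j : Fin p =>
        gaussianReal (B i j) ⟨σ ^ 2, sq_nonneg σ⟩)))
    (hSVD : ∀ ω, Matrix.of (Y ω) =
      Matrix.of (U ω) * Matrix.diagonal (d ω) * (Matrix.of (V ω))ᵀ)
    (hUorth : ∀ ω, (Matrix.of (U ω))ᵀ * Matrix.of (U ω) = 1)
    (hVorth : ∀ ω, (Matrix.of (V ω))ᵀ * Matrix.of (V ω) = 1)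
    (hanti : ∀ ω, Antitone (d ω))
    (hnonneg : ∀ ω i, 0 ≤ d ω i) :
    Measure.map (fun ω =>
      (∫ z in {z : ℝ | d ω ⟨k, by omega⟩ < z ∧ ∀ j : Fin p, (j : ℕ) < k → z < d ω j},
        Real.exp (-(z - ∑ i : Fin N, ∑ j : Fin p,
            U ω i ⟨k, by omega⟩ * B i j * V ω j ⟨k, by omega⟩) ^ 2 / (2 * σ ^ 2)) *
          z ^ (N - p) *
          ∏ j ∈ Finset.univ.erase (⟨k, by omega⟩ : Fin p), |z ^ 2 - d ω j ^ 2|) /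
      (∫ z in {z : ℝ | d ω ⟨k + 1, by omega⟩ < z ∧ ∀ j : Fin p, (j : ℕ) < k → z < d ω j},
        Real.exp (-(z - ∑ i : Fin N, ∑ j : Fin p,
            U ω i ⟨k, by omega⟩ * B i j * V ω j ⟨k, by omega⟩) ^ 2 / (2 * σ ^ 2)) *
          z ^ (N - p) *
          ∏ j ∈ Finset.univ.erase (⟨k, by omega⟩ : Fin p), |z ^ 2 - d ω j ^ 2|)) P
      = volume.restrict (Set.Ioo (0 : ℝ) 1) := by
  set K : Fin p := ⟨k, by omega⟩ with hKdef
  set K1 : Fin p := ⟨k + 1, by omega⟩ with hK1def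
  have hK : (K1 : ℕ) = K + 1 := rfl
  set v : NNReal := ⟨σ ^ 2, sq_nonneg σ⟩ with hvdef
  have hv : (v : ℝ) = σ ^ 2 := rfl
  have hv0 : v ≠ 0 := by
    intro h
    have h2 : (v : ℝ) = 0 := by rw [h]; rfl
    rw [hv] at h2
    have : 0 < σ ^ 2 := by positivity
    linarith
  have hlaw2 : Measure.map Y P = volume.withDensity (CSV.pdf (fun i j => B i j) v) := by
    rw [hlaw]
    exact CSV.gauss_law (fun i j => B i j) v hv0
  let M : Set (Fin N → Fin p → ℝ) := {Y | CSV.qpoly (Matrix.of Y) ≠ 0}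
  have hMm : MeasurableSet M := CSV.meas_M.measurableSet
  have hMc : volume Mᶜ = 0 := by
    have := CSV.q_generic (N := N) (p := p) hNp.le
    refine measure_mono_null (fun Y hY => ?_) this
    exact not_not.1 hY
  have hmM : ∀ᵐ Y ∂(volume : Measure (Fin N → Fin p → ℝ)), Y ∈ M := by
    rw [ae_iff]; exact hMc
  let St : (Fin N → Fin p → ℝ) → ℝ := fun Y =>
    CSV.st σ (N - p) K K1 (CSV.dd Y) (CSV.lam (fun i j => B i j) (CSV.QQ K Y))
  have hSt : Measurable St :=
    (CSV.meas_st σ (N - p) K K1).comp ((CSV.meas_dd hNp.le).prodMk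
      ((CSV.meas_lam _).comp (CSV.meas_QQ hNp.le K)))
  have haeM : ∀ᵐ ω ∂P, Y ω ∈ M := by
    have h1 : ∀ᵐ Z ∂(Measure.map Y P), Z ∈ M := by
      rw [hlaw2]
      exact (withDensity_absolutelyContinuous _ _).ae_le hmM
    exact ae_of_ae_map hYm.aemeasurable h1
  have hmap : Measure.map Y P Set.univ = 1 := by
    rw [Measure.map_apply hYm MeasurableSet.univ]; simp
  have htot : ∫⁻ Z in M, CSV.pdf (fun i j => B i j) v Z = 1 := by
    rw [← hmap, hlaw2, withDensity_apply _ MeasurableSet.univ, Measure.restrict_univ,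
      setLIntegral_congr (t := Set.univ), Measure.restrict_univ]
    exact Filter.eventuallyEq_univ.2 hmM
  calc _ = Measure.map (fun ω => St (Y ω)) P := by
        refine Measure.map_congr ?_
        filter_upwards [haeM] with ω hω
        have hs : CSV.SSVD (Matrix.of (Y ω)) (Matrix.of (U ω)) (d ω) (Matrix.of (V ω)) :=
          CSV.strict_of_qpoly (hSVD ω) (hUorth ω) (hVorth ω) (hanti ω) (hnonneg ω) hω
        have hl : ∑ i : Fin N, ∑ j : Fin p, U ω i K * B i j * V ω j K
            = CSV.lam (fun i j => B i j) (CSV.QQ K (Y ω)) := by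
          rw [hs.QQ]
          unfold CSV.lam CSV.rk1
          refine Finset.sum_congr rfl fun i _ => Finset.sum_congr rfl fun j _ => ?_
          simp only [Matrix.of_apply]
          ring
        simp only [St, CSV.st]
        rw [hs.dd, ← CSV.GG_inter hK hs.anti, ← hl]
        rfl
    _ = Measure.map St (Measure.map Y P) := (Measure.map_map hSt hYm).symm
    _ = volume.restrict (Set.Ioo (0 : ℝ) 1) := by
        ext A hA
        rw [Measure.map_apply hSt hA, Measure.restrict_apply hA, hlaw2,
          withDensity_apply _ (hSt hA)]
        have hmain := CSV.main hNp.le (fun i j => B i j) σ hσ K K1 hK A hA v hv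
        have e : ∫⁻ Z in St ⁻¹' A, CSV.pdf (fun i j => B i j) v Z =
            ∫⁻ Z in M, CSV.pdf (fun i j => B i j) v Z * A.indicator 1 (St Z) := by
          rw [← lintegral_indicator (hSt hA), Measure.restrict_eq_self_of_ae_mem hmM]
          refine lintegral_congr fun Z => ?_
          by_cases hZ : St Z ∈ A
          · rw [Set.indicator_of_mem hZ, Set.indicator_of_mem (show Z ∈ St ⁻¹' A from hZ)]; simp
          · rw [Set.indicator_of_notMem hZ, Set.indicator_of_notMem (show Z ∉ St ⁻¹' A from hZ)]
            simp
        rw [e]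
        refine hmain.trans ?_
        change (∫⁻ Z in M, CSV.pdf (fun i j => B i j) v Z) * _ = _
        rw [htot, one_mul]
end

section
/- Let Y ∈ ℝ^{N×p} have i.i.d. N(0,1) entries and let s(Y) = (d₁,…,d_p) be its singular values arranged in decreasing order. Then there exists a constant C_{N,p} > 0 such that the law of s(Y) (the pushforward of the Gaussian matrix law under s) has density with respect to p-dimensional Lebesgue measure given by F_{N,p}(y₁,…,y_p) = C_{N,p} · e^{−(Σ_{i=1}^{p} y_i²)/2} · ∏_{i=1}^{p} y_i^{N−p} · ∏_{1 ≤ i < j ≤ p} (y_i² − y_j²) on the region {y₁ > y₂ > ⋯ > y_p > 0}, and density 0 outside the closure of that region. -/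
open MeasureTheory ProbabilityTheory Matrix

set_option linter.unusedSectionVars false
set_option linter.unusedSimpArgs false
namespace SVG
/-- determinacy in dimension one -/
lemma ext_moments {m₁ m₂ : Measure ℝ} [IsFiniteMeasure m₁] [IsFiniteMeasure m₂] {c : ℝ}
    (hc : 0 < c) (h₁ : Integrable (fun x : ℝ => Real.exp (c * |x|)) m₁)
    (h₂ : Integrable (fun x : ℝ => Real.exp (c * |x|)) m₂)
    (h : ∀ n : ℕ, ∫ x, x ^ n ∂m₁ = ∫ x, x ^ n ∂m₂) : m₁ = m₂ := by
  have key : ∀ m : Measure ℝ, IsFiniteMeasure m →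
      Integrable (fun x : ℝ => Real.exp (c * |x|)) m →
      Set.Ioo (-c) c ⊆ interior (integrableExpSet id m) := by
    intro m hm hi
    apply interior_maximal _ isOpen_Ioo
    intro t ht
    refine hi.mono' (by fun_prop) (Filter.Eventually.of_forall fun x => ?_)
    rw [Real.norm_eq_abs, abs_of_pos (Real.exp_pos _)]
    apply Real.exp_le_exp.2
    calc t * x ≤ |t * x| := le_abs_self _
      _ = |t| * |x| := abs_mul _ _
      _ ≤ c * |x| := by gcongr; exact (abs_lt.2 ht).le
  have k₁ := key m₁ inferInstance h₁
  have k₂ := key m₂ inferInstance h₂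
  have z0 : (0:ℝ) ∈ Set.Ioo (-c) c := ⟨by linarith, hc⟩
  set S : Set ℂ := Complex.re ⁻¹' Set.Ioo (-c) c
  have a₁ : AnalyticOnNhd ℂ (complexMGF id m₁) S :=
    fun z hz => analyticAt_complexMGF (k₁ hz)
  have a₂ : AnalyticOnNhd ℂ (complexMGF id m₂) S :=
    fun z hz => analyticAt_complexMGF (k₂ hz)
  have hS : IsPreconnected S :=
    ((convex_Ioo (-c) c).is_linear_preimage Complex.reLm.isLinear).isPreconnected
  have h0S : (0:ℂ) ∈ S := by simpa [S] using z0
  have hd : ∀ n, iteratedDeriv n (complexMGF id m₁) 0 = iteratedDeriv n (complexMGF id m₂) 0 := by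
    intro n
    rw [iteratedDeriv_complexMGF (k₁ (by simpa using z0)),
      iteratedDeriv_complexMGF (k₂ (by simpa using z0))]
    have := congrArg (fun r : ℝ => (r : ℂ)) (h n)
    simp only [← integral_complex_ofReal] at this
    simpa using this
  have he : complexMGF id m₁ =ᶠ[nhds 0] complexMGF id m₂ := by
    have b₁ := (a₁ 0 h0S).hasFPowerSeriesAt
    have b₂ := (a₂ 0 h0S).hasFPowerSeriesAt
    simp_rw [hd] at b₁
    have := (b₁.sub b₂)
    rw [sub_self] at this
    filter_upwards [this.eventually_eq_zero] with z hz
    simpa [sub_eq_zero] using hz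
  have hE := a₁.eqOn_of_preconnected_of_eventuallyEq a₂ hS h0S he
  apply Measure.ext_of_charFun
  ext t
  rw [← complexMGF_id_mul_I, ← complexMGF_id_mul_I]
  apply hE
  simpa [S] using hc

lemma integrable_poly_gauss (P : Polynomial ℝ) :
    Integrable (fun t => P.eval t) (gaussianReal 0 1) := by
  induction P using Polynomial.induction_on' with
  | add p q hp hq => simpa using hp.fun_add hq
  | monomial n a =>
    simp only [Polynomial.eval_monomial]
    apply Integrable.const_mul
    have := (memLp_id_gaussianReal (μ := 0) (v := 1) n)
    have h2 := this.integrable_norm_pow'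
    refine (integrable_norm_iff (by fun_prop)).1 ?_
    simpa [norm_pow] using h2

lemma poly_tendsto_top (P : Polynomial ℝ) :
    Filter.Tendsto (fun t => P.eval t * gaussianPDFReal 0 1 t) Filter.atTop (nhds 0) := by
  have h := (P.tendsto_div_exp_atTop).norm.mul_const ((√(2 * Real.pi))⁻¹ * Real.exp 1)
  rw [norm_zero, zero_mul] at h
  refine squeeze_zero_norm (fun t => ?_) h
  rw [norm_mul, norm_div, gaussianPDFReal_def]
  simp only [NNReal.coe_one, mul_one, sub_zero, norm_mul, Real.norm_eq_abs, Real.abs_exp]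
  rw [abs_of_nonneg (by positivity : 0 ≤ (√(2 * Real.pi))⁻¹)]
  have : Real.exp (-t ^ 2 / 2) ≤ Real.exp 1 / Real.exp t := by
    rw [← Real.exp_sub]
    apply Real.exp_le_exp.2
    nlinarith [sq_nonneg (t-1)]
  calc _ ≤ |P.eval t| * ((√(2 * Real.pi))⁻¹ * (Real.exp 1 / Real.exp t)) := by gcongr
    _ = _ := by ring

lemma poly_tendsto_bot (P : Polynomial ℝ) :
    Filter.Tendsto (fun t => P.eval (-t) * gaussianPDFReal 0 1 (-t)) Filter.atTop (nhds 0) := by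
  have := poly_tendsto_top (P.comp (-Polynomial.X))
  simpa [gaussianPDFReal_def] using this

lemma gaussianPDF_hasDerivAt (t : ℝ) :
    HasDerivAt (gaussianPDFReal 0 1) (- t * gaussianPDFReal 0 1 t) t := by
  have : HasDerivAt (fun t : ℝ => (√(2 * Real.pi))⁻¹ * Real.exp (-t ^ 2 / 2))
      ((√(2 * Real.pi))⁻¹ * (Real.exp (-t ^ 2 / 2) * (-(2 * t) / 2))) t := by
    apply HasDerivAt.const_mul
    apply HasDerivAt.exp
    apply HasDerivAt.div_const
    simpa using (hasDerivAt_pow 2 t).fun_neg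
  rw [gaussianPDFReal_def]
  simp only [NNReal.coe_one, mul_one, sub_zero]
  convert this using 1
  ring

lemma ibp_one (R : Polynomial ℝ) (s : ℝ → ℝ) (hs : Measurable s) (hb : ∀ t, |s t| ≤ 1)
    (hl : ∀ t, R.eval t ≠ 0 → ∀ᶠ u in nhds t, s u = s t) :
    ∫ t, s t * (R.derivative.eval t - t * R.eval t) ∂gaussianReal 0 1 = 0 := by
  by_cases hR : R = 0
  · simp [hR]
  rw [integral_gaussianReal_eq_integral_smul one_ne_zero]
  set f : ℝ → ℝ := fun t => s t * (R.eval t * gaussianPDFReal 0 1 t) with hf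
  set f' : ℝ → ℝ := fun t => gaussianPDFReal 0 1 t • (s t * (R.derivative.eval t - t * R.eval t))
  have hfint : Integrable f' := by
    have h1 := integrable_poly_gauss (R.derivative - Polynomial.X * R)
    rw [gaussianReal_of_var_ne_zero 0 one_ne_zero, gaussianPDF_def,
      integrable_withDensity_iff_integrable_smul₀' (by fun_prop) (by simp)] at h1
    refine Integrable.mono h1 ?_ (Filter.Eventually.of_forall fun t => ?_)
    · apply Measurable.aestronglyMeasurable
      have := measurable_gaussianPDFReal 0 1
      fun_prop
    · simp only [f', norm_smul, norm_mul, Polynomial.eval_sub, Polynomial.eval_mul,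
        Polynomial.eval_X, Real.norm_eq_abs, ENNReal.toReal_ofReal (gaussianPDFReal_nonneg 0 1 t)]
      have := hb t
      gcongr
      exact mul_le_of_le_one_left (abs_nonneg _) this
  have hbound : ∀ t, ‖f t‖ ≤ ‖R.eval t * gaussianPDFReal 0 1 t‖ := by
    intro t
    simp only [f]
    rw [norm_mul]
    exact mul_le_of_le_one_left (norm_nonneg _) (hb t)
  have hgc : Continuous (gaussianPDFReal 0 1) :=
    continuous_iff_continuousAt.2 fun t => (gaussianPDF_hasDerivAt t).continuousAt
  have hcont : Continuous f := by
    rw [continuous_iff_continuousAt]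
    intro t
    by_cases ht : R.eval t = 0
    · have h0 : f t = 0 := by simp [f, ht]
      rw [ContinuousAt, h0]
      refine squeeze_zero_norm hbound ?_
      have : Continuous fun t => ‖R.eval t * gaussianPDFReal 0 1 t‖ := by fun_prop
      simpa [ht] using this.tendsto t
    · have : f =ᶠ[nhds t] fun u => s t * (R.eval u * gaussianPDFReal 0 1 u) := by
        filter_upwards [hl t ht] with u hu
        simp [f, hu]
      rw [continuousAt_congr this]
      fun_prop
  have hder : ∀ t, R.eval t ≠ 0 → HasDerivAt f (f' t) t := by
    intro t ht
    have : f =ᶠ[nhds t] fun u => s t * (R.eval u * gaussianPDFReal 0 1 u) := by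
      filter_upwards [hl t ht] with u hu
      simp [f, hu]
    refine HasDerivAt.congr_of_eventuallyEq ?_ this
    have h9 := ((R.hasDerivAt t).fun_mul (gaussianPDF_hasDerivAt t)).const_mul (s t)
    refine h9.congr_deriv ?_
    simp only [f', smul_eq_mul]; ring
  have hfin : Set.Countable {t | R.eval t = 0} := by
    apply Set.Finite.countable
    exact (R.roots.toFinset.finite_toSet).subset (fun t ht => by simpa [hR] using ht)
  have hFTC : ∀ r : ℝ, ∫ t in (-r)..r, f' t = f r - f (-r) := by
    intro r
    refine integral_eq_of_hasDerivAt_off_countable f f' hfin hcont.continuousOn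
      (fun x hx => hder x hx.2) hfint.intervalIntegrable
  have l1 := intervalIntegral_tendsto_integral hfint Filter.tendsto_neg_atTop_atBot
    (Filter.tendsto_id (α := ℝ) (x := Filter.atTop))
  have t1 : Filter.Tendsto f Filter.atTop (nhds 0) :=
    squeeze_zero_norm hbound (by simpa using (poly_tendsto_top R).norm)
  have t2 : Filter.Tendsto (fun r => f (-r)) Filter.atTop (nhds 0) :=
    squeeze_zero_norm (fun r => hbound (-r)) (by simpa using (poly_tendsto_bot R).norm)
  have l2 := t1.sub t2
  simp only [id] at l1
  simp_rw [hFTC] at l1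
  rw [sub_zero] at l2
  exact tendsto_nhds_unique l1 l2
end SVG

namespace SVG

/-- standard Gaussian measure on `ι → ℝ` -/
noncomputable def gam (ι : Type) [Fintype ι] : Measure (ι → ℝ) :=
  Measure.pi (fun _ : ι => gaussianReal 0 1)

instance (ι : Type) [Fintype ι] : IsProbabilityMeasure (gam ι) := by
  unfold gam; infer_instance

section
variable {ι : Type} [Fintype ι] [DecidableEq ι]

lemma update_mp (i : ι) : MeasurePreserving (fun z : (ι → ℝ) × ℝ => Function.update z.1 i z.2)
    ((gam ι).prod (gaussianReal 0 1)) (gam ι) := by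
  have hm : Measurable (fun z : (ι → ℝ) × ℝ => Function.update z.1 i z.2) := by
    rw [measurable_pi_iff]
    intro j
    by_cases h : j = i
    · subst h; simp; fun_prop
    · simp [h]; fun_prop
  refine ⟨hm, ?_⟩
  symm
  unfold gam
  apply Measure.pi_eq
  intro s hs
  rw [Measure.map_apply hm (MeasurableSet.univ_pi hs)]
  have : (fun z : (ι → ℝ) × ℝ => Function.update z.1 i z.2) ⁻¹' (Set.univ.pi s)
      = (Set.univ.pi (Function.update s i Set.univ)) ×ˢ (s i) := by
    ext z
    simp only [Set.mem_preimage, Set.mem_pi, Set.mem_univ, true_implies, Set.mem_prod]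
    constructor
    · intro h
      refine ⟨fun j => ?_, by simpa using h i⟩
      by_cases hj : j = i
      · subst hj; simp
      · simpa [hj] using h j
    · rintro ⟨h1, h2⟩ j
      by_cases hj : j = i
      · subst hj; simpa using h2
      · simpa [hj] using h1 j
  rw [this, Measure.prod_prod, Measure.pi_pi]
  rw [← Finset.mul_prod_erase _ _ (Finset.mem_univ i),
    ← Finset.mul_prod_erase Finset.univ (fun j => gaussianReal 0 1 (s j)) (Finset.mem_univ i)]
  simp only [Function.update_self, measure_univ, one_mul]
  rw [mul_comm]
  congr 1
  apply Finset.prod_congr rfl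
  intro j hj
  rw [Function.update_of_ne (Finset.ne_of_mem_erase hj)]

lemma integrable_mvpoly (q : MvPolynomial ι ℝ) :
    Integrable (fun x => MvPolynomial.eval x q) (gam ι) := by
  induction q using MvPolynomial.induction_on' with
  | add p q hp hq => simpa using hp.fun_add hq
  | monomial n a =>
    simp only [MvPolynomial.eval_monomial]
    apply Integrable.const_mul
    simp only [Finsupp.prod_pow]
    unfold gam
    refine Integrable.fintype_prod (f := fun i t => t ^ n i) (fun i => ?_)
    simpa using integrable_poly_gauss (Polynomial.X ^ n i)

lemma measurable_mvpoly (q : MvPolynomial ι ℝ) : Measurable (fun x => MvPolynomial.eval x q) :=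
  (MvPolynomial.continuous_eval q).measurable

lemma integrable_s_mvpoly (s : (ι → ℝ) → ℝ) (hs : Measurable s) (hb : ∀ t, |s t| ≤ 1)
    (q : MvPolynomial ι ℝ) :
    Integrable (fun x => s x * MvPolynomial.eval x q) (gam ι) := by
  refine (integrable_mvpoly q).bdd_mul (c := 1) hs.aestronglyMeasurable ?_
  exact Filter.Eventually.of_forall hb

/-- slicing -/
noncomputable def slice (x : ι → ℝ) (i : ι) : MvPolynomial ι ℝ →ₐ[ℝ] Polynomial ℝ :=
  MvPolynomial.aeval (Function.update (fun j => Polynomial.C (x j)) i Polynomial.X)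

lemma slice_eval (x : ι → ℝ) (i : ι) (q : MvPolynomial ι ℝ) (t : ℝ) :
    (slice x i q).eval t = MvPolynomial.eval (Function.update x i t) q := by
  induction q using MvPolynomial.induction_on with
  | C a => simp [slice]
  | add p q hp hq => simp [hp, hq]
  | mul_X p j hp =>
    rw [map_mul, Polynomial.eval_mul, hp, map_mul]
    congr 1
    by_cases h : j = i
    · subst h; simp [slice]
    · simp [slice, h]

lemma slice_deriv (x : ι → ℝ) (i : ι) (q : MvPolynomial ι ℝ) :
    (slice x i q).derivative = slice x i (MvPolynomial.pderiv i q) := by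
  induction q using MvPolynomial.induction_on with
  | C a => simp [slice]
  | add p q hp hq => simp [hp, hq]
  | mul_X p j hp =>
    rw [map_mul, Polynomial.derivative_mul, hp, MvPolynomial.pderiv_mul, map_add, map_mul, map_mul]
    congr 2
    by_cases h : j = i
    · subst h; simp [slice]
    · rw [MvPolynomial.pderiv_X_of_ne h]
      simp [slice, h]

lemma ibp_multi (s : (ι → ℝ) → ℝ) (hs : Measurable s) (hb : ∀ t, |s t| ≤ 1)
    (R : MvPolynomial ι ℝ)
    (hl : ∀ x, MvPolynomial.eval x R ≠ 0 → ∀ᶠ u in nhds x, s u = s x) (i : ι) :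
    ∫ x, s x * MvPolynomial.eval x (MvPolynomial.pderiv i R - MvPolynomial.X i * R) ∂(gam ι)
      = 0 := by
  have hi := integrable_s_mvpoly s hs hb (MvPolynomial.pderiv i R - MvPolynomial.X i * R)
  have mp := update_mp i
  rw [← mp.map_eq] at hi ⊢
  rw [integral_map mp.measurable.aemeasurable hi.aestronglyMeasurable]
  have hi2 := hi.comp_measurable mp.measurable
  refine (integral_prod _ hi2).trans ?_
  apply integral_eq_zero_of_ae
  refine Filter.Eventually.of_forall fun x => ?_
  simp only [Pi.zero_apply, Function.comp_apply]
  have hc : Continuous (fun t : ℝ => Function.update x i t) :=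
    continuous_const.update i continuous_id
  have := ibp_one (slice x i R) (fun t => s (Function.update x i t)) (hs.comp hc.measurable)
    (fun t => hb _) (fun t ht => by
      rw [slice_eval] at ht
      exact hc.continuousAt.eventually (hl _ ht))
  refine Eq.trans ?_ this
  congr 1
  ext t
  rw [slice_deriv, slice_eval, slice_eval]
  simp

/-- the derivation attached to a polynomial vector field -/
noncomputable def vf (v : ι → MvPolynomial ι ℝ) :
    Derivation ℝ (MvPolynomial ι ℝ) (MvPolynomial ι ℝ) := MvPolynomial.mkDerivation ℝ v

lemma vf_eq (v : ι → MvPolynomial ι ℝ) (q : MvPolynomial ι ℝ) :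
    vf v q = ∑ i, v i * MvPolynomial.pderiv i q := by
  induction q using MvPolynomial.induction_on with
  | C a => simp [vf]
  | add p q hp hq => simp [hp, hq, mul_add, Finset.sum_add_distrib]
  | mul_X p j hp =>
    rw [Derivation.leibniz, hp]
    simp only [Derivation.leibniz, smul_eq_mul, mul_add, Finset.sum_add_distrib]
    congr 1
    · simp [vf, MvPolynomial.pderiv_X, Pi.single_apply, mul_comm]
    · rw [Finset.mul_sum]; apply Finset.sum_congr rfl; intros; ring

lemma loop (s : (ι → ℝ) → ℝ) (hs : Measurable s) (hb : ∀ t, |s t| ≤ 1)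
    (D : MvPolynomial ι ℝ)
    (hl : ∀ x, MvPolynomial.eval x D ≠ 0 → ∀ᶠ u in nhds x, s u = s x)
    (v : ι → MvPolynomial ι ℝ) (c : MvPolynomial ι ℝ) (hD : vf v D = c * D)
    (q : MvPolynomial ι ℝ) :
    ∫ x, s x * MvPolynomial.eval x (D * ((∑ i, MvPolynomial.X i * v i) * q)) ∂(gam ι)
     = ∫ x, s x * MvPolynomial.eval x
        (D * (vf v q + ((∑ i, MvPolynomial.pderiv i (v i)) + c) * q)) ∂(gam ι) := by
  rw [eq_comm, ← sub_eq_zero, ← integral_sub (integrable_s_mvpoly s hs hb _)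
    (integrable_s_mvpoly s hs hb _)]
  have h : ∀ i, ∫ x, s x * MvPolynomial.eval x (MvPolynomial.pderiv i (v i * (D * q))
      - MvPolynomial.X i * (v i * (D * q))) ∂(gam ι) = 0 := by
    intro i
    apply ibp_multi s hs hb
    intro x hx
    apply hl
    intro h0
    simp [h0] at hx
  have h2 := Finset.sum_congr rfl (fun i (_ : i ∈ Finset.univ) => h i)
  rw [← integral_finsetSum _ (fun i _ => integrable_s_mvpoly s hs hb _),
    Finset.sum_const_zero] at h2
  rw [← h2]
  congr 1
  ext x
  rw [← mul_sub, ← map_sub, ← Finset.mul_sum, ← map_sum]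
  congr 2
  have e1 : ∀ i, MvPolynomial.pderiv i (v i * (D * q)) - MvPolynomial.X i * (v i * (D * q))
    = D * q * MvPolynomial.pderiv i (v i) + q * (v i * MvPolynomial.pderiv i D)
      + D * (v i * MvPolynomial.pderiv i q) - D * q * (MvPolynomial.X i * v i) := by
    intro i
    simp only [Derivation.leibniz, smul_eq_mul]
    ring
  simp_rw [e1]
  rw [Finset.sum_sub_distrib, Finset.sum_add_distrib, Finset.sum_add_distrib, ← Finset.mul_sum,
    ← Finset.mul_sum, ← Finset.mul_sum, ← Finset.mul_sum, ← vf_eq, ← vf_eq, hD]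
  ring
end
end SVG

namespace SVG
open MvPolynomial in
noncomputable def wk (k : ℕ) : Derivation ℝ (MvPolynomial ℕ ℝ) (MvPolynomial ℕ ℝ) :=
  mkDerivation ℝ (fun j => C (2 * j : ℝ) * X (j + k))

open MvPolynomial in
noncomputable def ck (a k : ℕ) : MvPolynomial ℕ ℝ :=
  C ((k + a : ℕ) : ℝ) * X k + ∑ l ∈ Finset.range (k + 1), X l * X (k - l)

open MvPolynomial in
lemma wk_hom (k n : ℕ) (m : ℕ →₀ ℕ) (hm : Finsupp.weight (id : ℕ → ℕ) m = n) :
    IsWeightedHomogeneous (id : ℕ → ℕ) (wk k (monomial m 1)) (n + k) := by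
  rw [wk, mkDerivation_monomial, Finsupp.sum, one_smul]
  apply IsWeightedHomogeneous.sum
  intro i hi
  have hi' : m i ≠ 0 := by simpa using hi
  have hle : Finsupp.single i 1 ≤ m := by
    rw [Finsupp.single_le_iff]; omega
  have e : m = (m - Finsupp.single i 1) + Finsupp.single i 1 := (tsub_add_cancel_of_le hle).symm
  have hw : Finsupp.weight (id : ℕ → ℕ) (m - Finsupp.single i 1) + i = n := by
    rw [← hm]; conv_rhs => rw [e, map_add, Finsupp.weight_single]
    simp
  rw [smul_eq_mul]
  have h1 := (isWeightedHomogeneous_monomial (id : ℕ → ℕ) (m - Finsupp.single i 1)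
    ((m i : ℝ)) rfl)
  have h2 := (isWeightedHomogeneous_C (id : ℕ → ℕ) (2 * i : ℝ)).mul
    (isWeightedHomogeneous_X ℝ (id : ℕ → ℕ) (i + k))
  convert h1.mul h2 using 1
  simp only [id]; omega

open MvPolynomial in
lemma ck_hom (a k : ℕ) : IsWeightedHomogeneous (id : ℕ → ℕ) (ck a k) k := by
  unfold ck
  apply IsWeightedHomogeneous.add
  · have := (isWeightedHomogeneous_C (id : ℕ → ℕ) (((k + a : ℕ) : ℝ))).mul
      (isWeightedHomogeneous_X ℝ (id : ℕ → ℕ) k)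
    simpa using this
  · apply IsWeightedHomogeneous.sum
    intro l hl
    have := (isWeightedHomogeneous_X ℝ (id : ℕ → ℕ) l).mul
      (isWeightedHomogeneous_X ℝ (id : ℕ → ℕ) (k - l))
    convert this using 1
    simp only [id]; have := Finset.mem_range.1 hl; omega

open MvPolynomial in
lemma rec_unique (a : ℕ) (r : ℝ) (L : MvPolynomial ℕ ℝ →ₗ[ℝ] ℝ)
    (h0 : ∀ Q, L (X 0 * Q) = r * L Q)
    (hk : ∀ k Q, L (X (k + 1) * Q) = L (wk k Q + ck a k * Q)) (h1 : L 1 = 0) : L = 0 := by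
  have main : ∀ n : ℕ, ∀ Q, IsWeightedHomogeneous (id : ℕ → ℕ) Q n → L Q = 0 := by
    intro n
    induction n using Nat.strong_induction_on with
    | _ n ih =>
    have mon : ∀ m : ℕ →₀ ℕ, Finsupp.weight (id : ℕ → ℕ) m = n → L (monomial m 1) = 0 := by
      intro m hm
      by_cases hex : ∃ k, m (k + 1) ≠ 0
      · obtain ⟨k, hk1⟩ := hex
        have hle : Finsupp.single (k + 1) 1 ≤ m := by
          rw [Finsupp.single_le_iff]; omega
        set m' := m - Finsupp.single (k + 1) 1
        have e : m = Finsupp.single (k + 1) 1 + m' := (add_tsub_cancel_of_le hle).symm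
        have hw : Finsupp.weight (id : ℕ → ℕ) m' + k + 1 = n := by
          rw [← hm]; conv_rhs => rw [e, map_add, Finsupp.weight_single]
          simp; omega
        have e2 : monomial m (1 : ℝ) = X (k + 1) * monomial m' 1 := by
          rw [e, X, monomial_mul, one_mul]
        rw [e2, hk]
        refine ih (n - 1) (by omega) _ ?_
        apply IsWeightedHomogeneous.add
        · have := wk_hom k _ m' rfl
          convert this using 1
          omega
        · have := (ck_hom a k).mul (isWeightedHomogeneous_monomial (id : ℕ → ℕ) m' (1:ℝ) rfl)
          convert this using 1
          omega
      · push Not at hex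
        have e : m = Finsupp.single 0 (m 0) := by
          ext j
          cases j with
          | zero => simp
          | succ j => simp [hex j]
        have : ∀ j : ℕ, L (monomial (Finsupp.single 0 j) 1) = 0 := by
          intro j
          induction j with
          | zero => simpa using h1
          | succ j ihj =>
            have : (monomial (Finsupp.single 0 (j + 1)) (1:ℝ) : MvPolynomial ℕ ℝ)
              = X 0 * monomial (Finsupp.single 0 j) 1 := by
              rw [X, monomial_mul, one_mul, ← Finsupp.single_add, add_comm]
            rw [this, h0, ihj, mul_zero]
        rw [e]; exact this _
    intro Q hQ
    rw [Q.as_sum, map_sum]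
    apply Finset.sum_eq_zero
    intro m hm
    have : monomial m (coeff m Q) = (coeff m Q) • monomial m (1:ℝ) := by
      rw [smul_monomial]; simp
    rw [this, map_smul, mon m (hQ (by simpa using hm)), smul_zero]
  ext m
  exact main _ (monomial m 1) (isWeightedHomogeneous_monomial (id : ℕ → ℕ) m (1:ℝ) rfl)

section
variable {ι : Type} [Fintype ι] [DecidableEq ι]

open MvPolynomial in
lemma vf_aeval (v : ι → MvPolynomial ι ℝ) (t : ℕ → MvPolynomial ι ℝ) (k : ℕ)
    (h : ∀ j, vf v (t j) = C (2 * j : ℝ) * t (j + k)) (Q : MvPolynomial ℕ ℝ) :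
    vf v (aeval t Q) = aeval t (wk k Q) := by
  induction Q using MvPolynomial.induction_on with
  | C a => simp [algebraMap_eq, derivation_C]
  | add p q hp hq => rw [map_add, map_add, hp, hq, map_add, map_add]
  | mul_X p j hp =>
    rw [map_mul, Derivation.leibniz, Derivation.leibniz, hp, aeval_X, h]
    simp [wk, algebraMap_eq]

end
end SVG

namespace SVG
section vec
open MvPolynomial
variable (p a k : ℕ)

noncomputable def tv (j : ℕ) : MvPolynomial (Fin p) ℝ := ∑ i, X i ^ (2 * j)

noncomputable def vv (i : Fin p) : MvPolynomial (Fin p) ℝ := X i ^ (2 * k + 1)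

noncomputable def DD : MvPolynomial (Fin p) ℝ :=
  (∏ i, X i ^ a) * ∏ i, ∏ j ∈ Finset.Ioi i, (X i ^ 2 - X j ^ 2)

noncomputable def gg (i j : Fin p) : MvPolynomial (Fin p) ℝ :=
  ∑ l ∈ Finset.range (k + 1), X i ^ (2 * l) * X j ^ (2 * (k - l))

lemma gg_symm (i j : Fin p) : gg p k i j = gg p k j i := by
  unfold gg
  rw [← Finset.sum_range_reflect]
  apply Finset.sum_congr rfl
  intro l hl
  have := Finset.mem_range.1 hl
  rw [mul_comm]
  congr 3 <;> omega

lemma eig_prod {ι κ : Type} [Fintype ι] [DecidableEq ι]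
    (V : Derivation ℝ (MvPolynomial ι ℝ) (MvPolynomial ι ℝ)) (s : Finset κ)
    (f c : κ → MvPolynomial ι ℝ) (h : ∀ i ∈ s, V (f i) = c i * f i) :
    V (∏ i ∈ s, f i) = (∑ i ∈ s, c i) * ∏ i ∈ s, f i := by
  classical
  induction s using Finset.induction_on with
  | empty => simp
  | insert x s hx ih =>
    rw [Finset.prod_insert hx, Finset.sum_insert hx, Derivation.leibniz,
      ih (fun i hi => h i (Finset.mem_insert_of_mem hi)), h x (Finset.mem_insert_self _ _)]
    simp only [smul_eq_mul]; ring

lemma vf_X_pow (i : Fin p) (n : ℕ) :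
    vf (vv p k) (X i ^ n) = C (n : ℝ) * X i ^ (2 * k) * X i ^ n := by
  rw [Derivation.leibniz_pow]
  simp only [vf, mkDerivation_X, vv, smul_eq_mul, nsmul_eq_mul]
  cases n with
  | zero => simp
  | succ n => simp; ring

lemma vf_DD : vf (vv p k) (DD p a)
    = (C (a : ℝ) * tv p k + ∑ i, ∑ j ∈ Finset.Ioi i, 2 * gg p k i j) * DD p a := by
  have h1 : vf (vv p k) (∏ i : Fin p, X i ^ a)
      = (∑ i : Fin p, C (a : ℝ) * X i ^ (2 * k)) * ∏ i : Fin p, X i ^ a :=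
    eig_prod _ _ _ _ (fun i _ => vf_X_pow p k i a)
  have h2 : ∀ i j : Fin p, vf (vv p k) (X i ^ 2 - X j ^ 2)
      = (2 * gg p k i j) * (X i ^ 2 - X j ^ 2) := by
    intro i j
    rw [map_sub, vf_X_pow, vf_X_pow]
    have := (Commute.all ((X i : MvPolynomial (Fin p) ℝ) ^ 2) (X j ^ 2)).geom_sum₂_mul (k + 1)
    have e : gg p k i j = ∑ l ∈ Finset.range (k + 1), (X i ^ 2) ^ l * (X j ^ 2) ^ (k + 1 - 1 - l) := by
      unfold gg
      apply Finset.sum_congr rfl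
      intro l hl
      rw [← pow_mul, ← pow_mul]; simp
    rw [mul_assoc 2, e, this]
    simp only [Nat.cast_ofNat, map_ofNat]
    ring
  have h3 := eig_prod (vf (vv p k)) Finset.univ _ _ (fun i _ =>
    eig_prod (vf (vv p k)) (Finset.Ioi i) _ _ (fun j _ => h2 i j))
  unfold DD
  rw [Derivation.leibniz, h1, h3, ← Finset.mul_sum]
  simp only [smul_eq_mul, tv]
  ring

lemma vv_div : (∑ i, pderiv i (vv p k i))
    + (C (a : ℝ) * tv p k + ∑ i, ∑ j ∈ Finset.Ioi i, 2 * gg p k i j)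
    = aeval (tv p) (ck a k) := by
  have h1 : ∀ i, pderiv i (vv p k i) = C ((2 * k + 1 : ℕ) : ℝ) * X i ^ (2 * k) := by
    intro i
    rw [vv, Derivation.leibniz_pow]
    simp [map_ofNat C 2]
  have h2 : ∑ i, ∑ j ∈ Finset.Ioi i, 2 * gg p k i j = ∑ i, ∑ j ∈ ({i} : Finset (Fin p))ᶜ, gg p k j i := by
    rw [← Finset.sum_sum_Ioi_add_eq_sum_sum_off_diag]
    refine Finset.sum_congr rfl fun i _ => Finset.sum_congr rfl fun j _ => ?_
    rw [gg_symm p k j i]; ring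
  have h3 : ∑ l ∈ Finset.range (k + 1), tv p l * tv p (k - l)
      = C ((k + 1 : ℕ) : ℝ) * tv p k + ∑ i, ∑ j ∈ ({i} : Finset (Fin p))ᶜ, gg p k j i := by
    have h4 : ∀ i : Fin p, gg p k i i = C ((k + 1 : ℕ) : ℝ) * X i ^ (2 * k) := by
      intro i
      unfold gg
      rw [Finset.sum_congr rfl (g := fun _ => (X i : MvPolynomial (Fin p) ℝ) ^ (2 * k))]
      · simp
      · intro l hl
        have := Finset.mem_range.1 hl
        rw [← pow_add]; congr 1; omega
    have h5 : ∑ l ∈ Finset.range (k + 1), tv p l * tv p (k - l) = ∑ i, ∑ j, gg p k j i := by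
      unfold gg tv
      simp_rw [Finset.sum_mul_sum]
      symm
      rw [Finset.sum_comm, Finset.sum_congr rfl (fun j _ => Finset.sum_comm), Finset.sum_comm]
    rw [h5, tv, Finset.mul_sum, ← Finset.sum_add_distrib]
    refine Finset.sum_congr rfl fun i _ => ?_
    rw [← h4, ← Finset.sum_add_sum_compl {i}, Finset.sum_singleton]
  simp_rw [h1]
  rw [h2, ck, map_add, map_mul, map_sum]
  simp only [map_mul, aeval_X]
  rw [h3, ← Finset.mul_sum, ← tv]
  simp only [algHom_C, algebraMap_eq]
  push_cast
  simp only [map_add, map_mul, map_natCast, map_one, map_ofNat]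
  ring

lemma vv_X : ∑ i, X i * vv p k i = tv p (k + 1) := by
  unfold vv tv
  refine Finset.sum_congr rfl fun i _ => ?_
  ring

lemma vf_tv (j : ℕ) : vf (vv p k) (tv p j) = C (2 * j : ℝ) * tv p (j + k) := by
  unfold tv
  rw [map_sum, Finset.mul_sum]
  refine Finset.sum_congr rfl fun i _ => ?_
  rw [vf_X_pow]; push_cast; ring
end vec

section mat
open MvPolynomial
variable (N p k : ℕ)

noncomputable def YY : Matrix (Fin N) (Fin p) (MvPolynomial (Fin N × Fin p) ℝ) :=
  Matrix.of fun i j => X (i, j)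

noncomputable def MM : Matrix (Fin p) (Fin p) (MvPolynomial (Fin N × Fin p) ℝ) :=
  (YY N p)ᵀ * YY N p

noncomputable def tm (j : ℕ) : MvPolynomial (Fin N × Fin p) ℝ := (MM N p ^ j).trace

noncomputable def vm (z : Fin N × Fin p) : MvPolynomial (Fin N × Fin p) ℝ :=
  (YY N p * MM N p ^ k) z.1 z.2

lemma map_deriv_mul {ι l m n : Type} [Fintype m]
    (V : Derivation ℝ (MvPolynomial ι ℝ) (MvPolynomial ι ℝ))
    (A : Matrix l m (MvPolynomial ι ℝ)) (B : Matrix m n (MvPolynomial ι ℝ)) :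
    (A * B).map V = A.map V * B + A * B.map V := by
  ext1 i j
  simp only [Matrix.map_apply, Matrix.mul_apply, Matrix.add_apply, map_sum, Derivation.leibniz,
    smul_eq_mul]
  rw [← Finset.sum_add_distrib]
  refine Finset.sum_congr rfl fun _ _ => ?_
  ring

lemma vf_YY : (YY N p).map (vf (vm N p k)) = YY N p * MM N p ^ k := by
  ext1 i j
  simp [YY, vf, vm]

lemma MM_symm : (MM N p)ᵀ = MM N p := by
  simp [MM, Matrix.transpose_mul]

lemma vf_MM : (MM N p).map (vf (vm N p k)) = 2 * MM N p ^ (k + 1) := by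
  rw [MM, map_deriv_mul, Matrix.transpose_map, vf_YY, Matrix.transpose_mul, Matrix.transpose_pow,
    MM_symm, Matrix.mul_assoc, ← MM, ← Matrix.mul_assoc, ← MM, ← pow_succ, ← pow_succ', two_mul]

lemma vf_MM_pow (j : ℕ) : (MM N p ^ j).map (vf (vm N p k)) = (2 * j : ℕ) • MM N p ^ (j + k) := by
  induction j with
  | zero =>
    ext1 i j
    simp [Matrix.one_apply, apply_ite]
  | succ j ih =>
    rw [pow_succ, map_deriv_mul, ih, vf_MM]
    simp only [two_mul, mul_add, ← pow_succ', ← pow_succ, ← pow_add, smul_mul_assoc]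
    rw [show j + k + 1 = j + 1 + k by ring, show j + (k + 1) = j + 1 + k by ring]
    module

lemma vf_tm (j : ℕ) : vf (vm N p k) (tm N p j) = C (2 * j : ℝ) * tm N p (j + k) := by
  have h := congrArg Matrix.trace (vf_MM_pow N p k j)
  rw [Matrix.trace_smul] at h
  have e : ((MM N p ^ j).map (vf (vm N p k))).trace = vf (vm N p k) (tm N p j) := by
    simp [tm, Matrix.trace]
  rw [← e, h, tm]
  simp [map_ofNat C 2]

lemma vm_X : ∑ z, X z * vm N p k z = tm N p (k + 1) := by
  have : MM N p ^ (k + 1) = (YY N p)ᵀ * (YY N p * MM N p ^ k) := by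
    rw [pow_succ', MM, Matrix.mul_assoc]
  rw [tm, this, Matrix.trace, Fintype.sum_prod_type, Finset.sum_comm]
  simp [Matrix.mul_apply, YY, vm]

/-- partial divergence -/
noncomputable def SS : Matrix (Fin p) (Fin p) (MvPolynomial (Fin N × Fin p) ℝ) :=
  Matrix.of fun b c => ∑ r, pderiv (r, b) ((YY N p * MM N p ^ k) r c)

lemma SS_zero : SS N p 0 = (N : MvPolynomial (Fin N × Fin p) ℝ) • 1 := by
  ext1 b c
  simp [SS, YY, pderiv_X, Pi.single_apply, Matrix.one_apply, eq_comm]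

lemma pderiv_MM (r : Fin N) (b e c : Fin p) : pderiv (r, b) (MM N p e c)
    = (if b = e then YY N p r c else 0) + (if b = c then YY N p r e else 0) := by
  rw [MM, Matrix.mul_apply, map_sum]
  simp only [Derivation.leibniz, Finset.sum_add_distrib, Matrix.transpose_apply, YY, Matrix.of_apply,
    pderiv_X, Pi.single_apply, Prod.mk.injEq]
  rw [add_comm]
  congr 1
  · by_cases h : e = b
    · subst h; simp
    · simp [h, Ne.symm h]
  · by_cases h : c = b
    · subst h; simp
    · simp [h, Ne.symm h]

lemma SS_succ : SS N p (k + 1) = SS N p k * MM N p + MM N p ^ (k + 1) + tm N p (k + 1) • 1 := by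
  ext1 b c
  have e0 : ∀ r, (YY N p * MM N p ^ (k + 1)) r c = ∑ e, (YY N p * MM N p ^ k) r e * MM N p e c := by
    intro r
    rw [pow_succ, ← Matrix.mul_assoc, Matrix.mul_apply]
  have e1 : (MM N p ^ (k + 1)) b c = ∑ r, (YY N p * MM N p ^ k) r b * YY N p r c := by
    have : MM N p ^ (k + 1) = (YY N p * MM N p ^ k)ᵀ * YY N p := by
      rw [Matrix.transpose_mul, Matrix.transpose_pow, MM_symm, Matrix.mul_assoc, ← MM, pow_succ]
    rw [this, Matrix.mul_apply]; rfl
  have e2 : tm N p (k + 1) = ∑ r, ∑ e, (YY N p * MM N p ^ k) r e * YY N p r e := by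
    rw [← vm_X, Fintype.sum_prod_type]
    refine Finset.sum_congr rfl fun r _ => Finset.sum_congr rfl fun e _ => ?_
    simp only [vm, YY, Matrix.of_apply]; ring
  have e3 : SS N p (k + 1) b c = ∑ r, pderiv (r, b) ((YY N p * MM N p ^ (k + 1)) r c) := rfl
  have e4 : ∀ e, SS N p k b e = ∑ r, pderiv (r, b) ((YY N p * MM N p ^ k) r e) := fun e => rfl
  rw [e3, Matrix.add_apply, Matrix.add_apply, Matrix.mul_apply, Matrix.smul_apply]
  simp only [e4, e0]
  generalize YY N p * MM N p ^ k = Z at *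
  simp only [map_sum, Derivation.leibniz, pderiv_MM, e1, e2, smul_eq_mul]
  simp only [Finset.sum_mul, mul_add, Finset.sum_add_distrib, mul_ite, mul_zero,
    Finset.sum_ite_eq, Finset.mem_univ, if_true, Matrix.one_apply]
  have e5 : ∑ x, ∑ y, MM N p y c * (pderiv (x, b)) (Z x y)
      = ∑ x, ∑ i, (pderiv (i, b)) (Z i x) * MM N p x c := by
    rw [Finset.sum_comm]
    refine Finset.sum_congr rfl fun _ _ => Finset.sum_congr rfl fun _ _ => mul_comm _ _
  rw [e5]
  by_cases h : b = c
  · simp only [h, if_true, mul_one]; ring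
  · simp only [h, if_false, Finset.sum_const_zero]; ring

lemma SS_eq : SS N p k = ((N + k : ℕ) : MvPolynomial (Fin N × Fin p) ℝ) • MM N p ^ k
    + ∑ l ∈ Finset.range k, tm N p (l + 1) • MM N p ^ (k - (l + 1)) := by
  induction k with
  | zero => simp [SS_zero]
  | succ k ih =>
    rw [SS_succ, ih, Finset.sum_range_succ, add_mul, Finset.sum_mul]
    have : ∀ l ∈ Finset.range k, tm N p (l + 1) • MM N p ^ (k - (l + 1)) * MM N p
       = tm N p (l + 1) • MM N p ^ (k + 1 - (l + 1)) := by
      intro l hl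
      have := Finset.mem_range.1 hl
      rw [smul_mul_assoc, ← pow_succ]
      congr 2; omega
    rw [Finset.sum_congr rfl this, smul_mul_assoc, ← pow_succ]
    simp only [le_refl, tsub_self, pow_zero]
    push_cast
    module

lemma tm_zero : tm N p 0 = (p : MvPolynomial (Fin N × Fin p) ℝ) := by
  simp [tm]

lemma vm_div (h : p ≤ N) : (∑ z, pderiv z (vm N p k z)) + 0 = aeval (tm N p) (ck (N - p) k) := by
  have h1 : (∑ z, pderiv z (vm N p k z)) = (SS N p k).trace := by
    rw [Fintype.sum_prod_type, Finset.sum_comm]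
    rfl
  rw [h1, SS_eq, Matrix.trace_add, Matrix.trace_smul, Matrix.trace_sum, add_zero]
  simp only [Matrix.trace_smul, smul_eq_mul]
  have ht : ∀ j, (MM N p ^ j).trace = tm N p j := fun j => rfl
  simp only [ht]
  rw [ck, map_add, map_mul, map_sum]
  simp only [map_mul, aeval_X]
  rw [Finset.sum_range_succ', tm_zero]
  simp only [algHom_C, algebraMap_eq, map_natCast, Nat.sub_zero]
  have : (N : MvPolynomial (Fin N × Fin p) ℝ) = ((N - p : ℕ) : MvPolynomial (Fin N × Fin p) ℝ) + p := by
    rw [← Nat.cast_add]; congr 1; omega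
  push_cast
  rw [this]
  ring
end mat
end SVG

namespace SVG
section det
variable {p : ℕ}

open MvPolynomial in
lemma esymm_psum (k : ℕ) :
    esymm (Fin p) ℝ k ∈ (aeval (R := ℝ) (fun j : ℕ => psum (Fin p) ℝ j)).range := by
  induction k using Nat.strong_induction_on with
  | _ k ih =>
  rcases Nat.eq_zero_or_pos k with h | h
  · subst h; rw [esymm_zero]; exact one_mem _
  have hk : (k : ℝ) ≠ 0 := by positivity
  have e : esymm (Fin p) ℝ k = (k : ℝ)⁻¹ • ((k : MvPolynomial (Fin p) ℝ) * esymm (Fin p) ℝ k) := by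
    rw [← nsmul_eq_mul, ← Nat.cast_smul_eq_nsmul ℝ, smul_smul, inv_mul_cancel₀ hk, one_smul]
  rw [e, mul_esymm_eq_sum]
  apply Subalgebra.smul_mem
  apply Subalgebra.mul_mem
  · exact Subalgebra.pow_mem _ (Subalgebra.neg_mem _ (one_mem _)) _
  · apply Subalgebra.sum_mem
    intro x hx
    have hx2 := (Finset.mem_filter.1 hx).2
    refine Subalgebra.mul_mem _ (Subalgebra.mul_mem _ ?_ (ih _ hx2)) ?_
    · exact Subalgebra.pow_mem _ (Subalgebra.neg_mem _ (one_mem _)) _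
    · exact ⟨X x.2, by simp⟩

open MvPolynomial in
lemma symm_psum (f : MvPolynomial (Fin p) ℝ) (hf : f.IsSymmetric) :
    ∃ Q : MvPolynomial ℕ ℝ, aeval (fun j : ℕ => psum (Fin p) ℝ j) Q = f := by
  obtain ⟨g, hg⟩ := esymmAlgHom_fin_surjective ℝ (le_refl p) ⟨f, hf⟩
  have h2 := congrArg Subtype.val hg
  rw [esymmAlgHom_apply] at h2
  simp only at h2
  have key : ∀ g : MvPolynomial (Fin p) ℝ,
      aeval (fun i : Fin p => esymm (Fin p) ℝ (i + 1)) g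
        ∈ (aeval (R := ℝ) (fun j : ℕ => psum (Fin p) ℝ j)).range := by
    intro g
    induction g using MvPolynomial.induction_on with
    | C a => simp only [algHom_C]; exact Subalgebra.algebraMap_mem _ _
    | add q r hq hr =>
      rw [map_add]
      exact Subalgebra.add_mem _ hq hr
    | mul_X q i hq =>
      rw [map_mul, aeval_X]
      exact Subalgebra.mul_mem _ hq (esymm_psum _)
  have := key g
  rw [h2] at this
  exact this

open MvPolynomial in
lemma eval_sq_psum (Q : MvPolynomial ℕ ℝ) (x : Fin p → ℝ) :
    eval (fun i => x i ^ 2) (aeval (fun j : ℕ => psum (Fin p) ℝ j) Q) = eval x (aeval (tv p) Q) := by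
  induction Q using MvPolynomial.induction_on with
  | C a => simp
  | add q r hq hr => rw [map_add, map_add, hq, hr, map_add, map_add]
  | mul_X q i hq =>
    rw [map_mul, map_mul, hq, map_mul, map_mul]
    simp [psum, tv, pow_mul]

instance permMS : MeasurableSpace (Equiv.Perm (Fin p)) := ⊤

instance : DiscreteMeasurableSpace (Equiv.Perm (Fin p)) := ⟨fun _ => trivial⟩

/-- permuted squares -/
def psq (z : Equiv.Perm (Fin p) × (Fin p → ℝ)) : Fin p → ℝ := fun i => z.2 (z.1 i) ^ 2

lemma measurable_psq : Measurable (psq (p := p)) := by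
  apply measurable_from_prod_countable_right
  intro σ
  rw [measurable_pi_iff]
  intro i
  exact (measurable_pi_apply (σ i)).pow_const 2

noncomputable def symm (μ : Measure (Fin p → ℝ)) : Measure (Fin p → ℝ) :=
  (Measure.count.prod μ).map psq

instance (μ : Measure (Fin p → ℝ)) [IsFiniteMeasure μ] : IsFiniteMeasure (symm μ) := by
  unfold symm; infer_instance

open MvPolynomial in
noncomputable def fL (L : StrongDual ℝ (Fin p → ℝ)) (n : ℕ) : MvPolynomial (Fin p) ℝ :=
  ∑ σ : Equiv.Perm (Fin p), (∑ i, C (L (Pi.single i 1)) * X (σ i)) ^ n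

open MvPolynomial in
lemma fL_symm (L : StrongDual ℝ (Fin p → ℝ)) (n : ℕ) : (fL L n).IsSymmetric := by
  intro τ
  unfold fL
  rw [map_sum]
  simp only [map_pow, map_sum, map_mul, rename_C, rename_X]
  exact Fintype.sum_equiv (Equiv.mulLeft τ) _ _ (fun σ => by simp)

lemma L_apply (L : StrongDual ℝ (Fin p → ℝ)) (x : Fin p → ℝ) :
    L x = ∑ i, L (Pi.single i 1) * x i := by
  conv_lhs => rw [pi_eq_sum_univ' x, map_sum]
  refine Finset.sum_congr rfl fun i _ => ?_
  rw [map_smul, smul_eq_mul, mul_comm]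

lemma fL_eval (L : StrongDual ℝ (Fin p → ℝ)) (n : ℕ) (x : Fin p → ℝ) :
    MvPolynomial.eval (fun i => x i ^ 2) (fL L n) = ∑ σ : Equiv.Perm (Fin p), (L (psq (σ, x))) ^ n := by
  unfold fL
  rw [map_sum]
  refine Finset.sum_congr rfl fun σ _ => ?_
  rw [L_apply]
  simp [psq]

lemma L_psq_le (L : StrongDual ℝ (Fin p → ℝ)) (z) : |L (psq z)| ≤ ‖L‖ * ∑ i, z.2 i ^ 2 := by
  refine (L.le_opNorm _).trans ?_
  gcongr
  rw [pi_norm_le_iff_of_nonneg (Finset.sum_nonneg fun i _ => sq_nonneg _)]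
  intro i
  simp only [psq, norm_pow, Real.norm_eq_abs, sq_abs]
  exact Finset.single_le_sum (f := fun i => z.2 i ^ 2) (fun i _ => sq_nonneg _) (Finset.mem_univ (z.1 i))

lemma int_exp (μ : Measure (Fin p → ℝ)) [IsFiniteMeasure μ] {c : ℝ} (hc : 0 < c)
    (h : Integrable (fun x => Real.exp (c * ∑ i, x i ^ 2)) μ) (L : StrongDual ℝ (Fin p → ℝ)) :
    Integrable (fun t : ℝ => Real.exp ((c / (‖L‖ + 1)) * |t|)) ((symm μ).map L) := by
  have hm : Measurable (fun t : ℝ => Real.exp ((c / (‖L‖ + 1)) * |t|)) := by fun_prop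
  rw [integrable_map_measure hm.aestronglyMeasurable (by fun_prop), symm,
    integrable_map_measure (hm.comp L.measurable).aestronglyMeasurable measurable_psq.aemeasurable]
  refine (h.comp_snd Measure.count).mono'
    ((hm.comp L.measurable).comp measurable_psq).aestronglyMeasurable ?_
  refine Filter.Eventually.of_forall fun z => ?_
  simp only [Function.comp_apply, Real.norm_eq_abs, Real.abs_exp]
  apply Real.exp_le_exp.2
  have h1 := L_psq_le L z
  have h2 : 0 ≤ ∑ i, z.2 i ^ 2 := Finset.sum_nonneg fun i _ => sq_nonneg _
  have h3 : 0 < ‖L‖ + 1 := by positivity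
  calc c / (‖L‖ + 1) * |L (psq z)| ≤ c / (‖L‖ + 1) * ((‖L‖ + 1) * ∑ i, z.2 i ^ 2) := by
        gcongr
        nlinarith
    _ = _ := by field_simp

lemma moment_symm (μ : Measure (Fin p → ℝ)) [IsFiniteMeasure μ] {c : ℝ} (hc : 0 < c)
    (h : Integrable (fun x => Real.exp (c * ∑ i, x i ^ 2)) μ) (L : StrongDual ℝ (Fin p → ℝ)) (n : ℕ) :
    ∫ t, t ^ n ∂((symm μ).map L) = ∫ x, MvPolynomial.eval (fun i => x i ^ 2) (fL L n) ∂μ := by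
  have he := int_exp μ hc h L
  set b := c / (‖L‖ + 1) with hb
  have hb0 : 0 < b := by positivity
  have hi : Integrable (fun t : ℝ => t ^ n) ((symm μ).map L) := by
    refine integrable_pow_of_integrable_exp_mul (X := fun t : ℝ => t) hb0.ne' ?_ ?_ n
    · refine he.mono' (by fun_prop) (Filter.Eventually.of_forall fun t => ?_)
      rw [Real.norm_eq_abs, Real.abs_exp]
      apply Real.exp_le_exp.2
      have := le_abs_self t
      gcongr
    · refine he.mono' (by fun_prop) (Filter.Eventually.of_forall fun t => ?_)
      rw [Real.norm_eq_abs, Real.abs_exp]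
      apply Real.exp_le_exp.2
      have := neg_abs_le t
      nlinarith
  have hi0 := hi
  have hm : Measurable (fun t : ℝ => t ^ n) := by fun_prop
  rw [integrable_map_measure hm.aestronglyMeasurable (by fun_prop), symm,
    integrable_map_measure (hm.comp L.measurable).aestronglyMeasurable measurable_psq.aemeasurable]
    at hi
  rw [integral_map (by fun_prop) hm.aestronglyMeasurable, symm]
  refine (integral_map (f := fun x => L x ^ n) measurable_psq.aemeasurable
    (hm.comp L.measurable).aestronglyMeasurable).trans ?_
  refine (integral_prod_symm _ hi).trans ?_
  congr 1
  ext x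
  rw [fL_eval, integral_count]
  rfl

lemma symm_apply (μ : Measure (Fin p → ℝ)) [IsFiniteMeasure μ]
    (hμ : ∀ᵐ x ∂μ, Antitone x ∧ ∀ i, 0 ≤ x i) (A : Set (Fin p → ℝ)) (hA : MeasurableSet A)
    (hAC : ∀ x ∈ A, Antitone x) :
    symm μ (⋃ τ : Equiv.Perm (Fin p), {x | x ∘ τ ∈ A})
      = (Fintype.card (Equiv.Perm (Fin p)) : ENNReal) * μ {x | (fun i => x i ^ 2) ∈ A} := by
  have hB : MeasurableSet (⋃ τ : Equiv.Perm (Fin p), {x | x ∘ τ ∈ A}) := by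
    refine MeasurableSet.iUnion fun τ => ?_
    have : Measurable (fun x : Fin p → ℝ => x ∘ τ) := by
      rw [measurable_pi_iff]; intro i; exact measurable_pi_apply _
    exact this hA
  rw [symm, Measure.map_apply measurable_psq hB, Measure.prod_apply (measurable_psq hB),
    lintegral_count, tsum_fintype]
  rw [Finset.sum_congr rfl (g := fun _ => μ {x | (fun i => x i ^ 2) ∈ A})]
  · simp [Finset.sum_const]
  intro σ _
  apply measure_congr
  filter_upwards [hμ] with x hx
  apply propext
  have hanti : Antitone (fun i => x i ^ 2) := fun i j hij =>
    pow_le_pow_left₀ (hx.2 j) (hx.1 hij) 2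
  change psq (σ, x) ∈ (⋃ τ : Equiv.Perm (Fin p), {x | x ∘ τ ∈ A}) ↔ (fun i => x i ^ 2) ∈ A
  simp only [Set.mem_iUnion, Set.mem_ofPred_eq]
  constructor
  · rintro ⟨τ, hτ⟩
    have h1 := hAC _ hτ
    have h2 := Tuple.unique_antitone (f := fun i => x i ^ 2) (σ := σ * τ) (τ := 1)
      (by exact h1) (by exact hanti)
    have h3 : psq (σ, x) ∘ τ = (fun i => x i ^ 2) := h2
    rwa [h3] at hτ
  · intro h
    refine ⟨σ⁻¹, ?_⟩
    have : psq (σ, x) ∘ ⇑σ⁻¹ = fun i => x i ^ 2 := by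
      ext i; simp [psq]
    rwa [this]

theorem determined (μ ν : Measure (Fin p → ℝ)) [IsFiniteMeasure μ] [IsFiniteMeasure ν]
    (hμ : ∀ᵐ x ∂μ, Antitone x ∧ ∀ i, 0 ≤ x i) (hν : ∀ᵐ x ∂ν, Antitone x ∧ ∀ i, 0 ≤ x i)
    {c : ℝ} (hc : 0 < c)
    (h1 : Integrable (fun x => Real.exp (c * ∑ i, x i ^ 2)) μ)
    (h2 : Integrable (fun x => Real.exp (c * ∑ i, x i ^ 2)) ν)
    (h : ∀ Q : MvPolynomial ℕ ℝ, ∫ x, MvPolynomial.eval x (MvPolynomial.aeval (tv p) Q) ∂μ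
      = ∫ x, MvPolynomial.eval x (MvPolynomial.aeval (tv p) Q) ∂ν) : μ = ν := by
  have hs : symm μ = symm ν := by
    apply Measure.ext_of_charFunDual
    ext L
    rw [charFunDual_eq_charFun_map_one, charFunDual_eq_charFun_map_one]
    congr 1
    refine ext_moments (c := c / (‖L‖ + 1)) (by positivity) (int_exp μ hc h1 L) (int_exp ν hc h2 L) ?_
    intro n
    rw [moment_symm μ hc h1, moment_symm ν hc h2]
    obtain ⟨Q, hQ⟩ := symm_psum _ (fL_symm L n)
    simp_rw [← hQ, eval_sq_psum]
    exact h Q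
  have hsqm : Measurable (fun (x : Fin p → ℝ) i => x i ^ 2) := by fun_prop
  have hsq : μ.map (fun x i => x i ^ 2) = ν.map (fun x i => x i ^ 2) := by
    ext A hA
    have hC : MeasurableSet {x : Fin p → ℝ | Antitone x} := by
      have : {x : Fin p → ℝ | Antitone x} = ⋂ i, ⋂ j, {x | i ≤ j → x j ≤ x i} := by
        ext x; simp [Antitone]
      rw [this]
      refine MeasurableSet.iInter fun i => MeasurableSet.iInter fun j => ?_
      by_cases hij : i ≤ j
      · simp only [hij, true_implies]
        exact measurableSet_le (measurable_pi_apply _) (measurable_pi_apply _)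
      · simp [hij]
    have key : ∀ m : Measure (Fin p → ℝ), (∀ᵐ x ∂m, Antitone x ∧ ∀ i, 0 ≤ x i) →
        m {x | (fun i => x i ^ 2) ∈ A} = m {x | (fun i => x i ^ 2) ∈ A ∩ {x | Antitone x}} := by
      intro m hm
      apply measure_congr
      filter_upwards [hm] with x hx
      apply propext
      change (fun i => x i ^ 2) ∈ A ↔ (fun i => x i ^ 2) ∈ A ∧ Antitone (fun i => x i ^ 2)
      have hanti : Antitone (fun i => x i ^ 2) := fun i j hij =>
        pow_le_pow_left₀ (hx.2 j) (hx.1 hij) 2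
      tauto
    rw [Measure.map_apply hsqm hA, Measure.map_apply hsqm hA]
    have e1 := symm_apply μ hμ _ (hA.inter hC) (fun x hx => hx.2)
    have e2 := symm_apply ν hν _ (hA.inter hC) (fun x hx => hx.2)
    rw [hs, e2, ← key ν hν, ← key μ hμ] at e1
    exact ((ENNReal.mul_right_inj (by simp) (by simp)).1 e1).symm
  have hrm : Measurable (fun (x : Fin p → ℝ) i => √(x i)) := by fun_prop
  have back : ∀ m : Measure (Fin p → ℝ), (∀ᵐ x ∂m, Antitone x ∧ ∀ i, 0 ≤ x i) →
      (m.map (fun x i => x i ^ 2)).map (fun x i => √(x i)) = m := by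
    intro m hm
    rw [Measure.map_map hrm hsqm]
    conv_rhs => rw [← Measure.map_id (μ := m)]
    apply Measure.map_congr
    filter_upwards [hm] with x hx
    ext i
    simp [Real.sqrt_sq (hx.2 i)]
  rw [← back μ hμ, hsq, back ν hν]
end det
end SVG

namespace SVG
section fin
variable {ι : Type} [Fintype ι] [DecidableEq ι]

lemma gam_density : gam ι = volume.withDensity (fun x : ι → ℝ =>
    ENNReal.ofReal ((√(2 * Real.pi))⁻¹ ^ Fintype.card ι * Real.exp (-(∑ i, x i ^ 2) / 2))) := by
  have hpdf : ∀ x : ι → ℝ, (√(2 * Real.pi))⁻¹ ^ Fintype.card ι * Real.exp (-(∑ i, x i ^ 2) / 2)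
      = ∏ i, gaussianPDFReal 0 1 (x i) := by
    intro x
    simp only [gaussianPDFReal, Finset.prod_mul_distrib, Finset.prod_const, Finset.card_univ,
      ← Real.exp_sum]
    congr 2
    · simp
    · rw [← Finset.sum_neg_distrib, Finset.sum_div]; simp
  simp_rw [hpdf]
  unfold gam
  apply Measure.pi_eq
  intro s hs
  rw [withDensity_apply _ (MeasurableSet.univ_pi hs), volume_pi, Measure.restrict_pi_pi]
  have hi : Integrable (fun x : ι → ℝ => ∏ i, gaussianPDFReal 0 1 (x i))
      (Measure.pi fun i => (volume : Measure ℝ).restrict (s i)) := by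
    refine Integrable.fintype_prod (f := fun i t => gaussianPDFReal 0 1 t) (fun i => ?_)
    exact (integrable_gaussianPDFReal 0 1).restrict
  rw [← ofReal_integral_eq_lintegral_ofReal hi (Filter.Eventually.of_forall fun x =>
    Finset.prod_nonneg fun i _ => gaussianPDFReal_nonneg _ _ _)]
  rw [integral_fintype_prod_eq_prod (fun _ t => gaussianPDFReal 0 1 t),
    ENNReal.ofReal_prod_of_nonneg (fun i _ => integral_nonneg fun t => gaussianPDFReal_nonneg _ _ _)]
  refine Finset.prod_congr rfl fun i _ => ?_
  rw [gaussianReal_apply_eq_integral 0 one_ne_zero]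

lemma int_exp_one {c : ℝ} (hc : c < 1 / 2) :
    Integrable (fun t : ℝ => Real.exp (c * t ^ 2)) (gaussianReal 0 1) := by
  rw [gaussianReal_of_var_ne_zero 0 one_ne_zero, gaussianPDF_def]
  rw [integrable_withDensity_iff_integrable_smul' (by fun_prop) (by simp)]
  have := (integrable_exp_neg_mul_sq (b := 1 / 2 - c) (by linarith)).const_mul (√(2 * Real.pi))⁻¹
  refine this.congr (Filter.Eventually.of_forall fun t => ?_)
  simp only [smul_eq_mul]
  rw [ENNReal.toReal_ofReal (gaussianPDFReal_nonneg _ _ _), gaussianPDFReal, mul_assoc,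
    ← Real.exp_add]
  simp
  left; ring

lemma int_exp_gam {c : ℝ} (hc : c < 1 / 2) :
    Integrable (fun x : ι → ℝ => Real.exp (c * ∑ i, x i ^ 2)) (gam ι) := by
  simp_rw [Finset.mul_sum, Real.exp_sum]
  exact Integrable.fintype_prod (f := fun i t => Real.exp (c * t ^ 2)) (fun i => int_exp_one hc)

lemma gam_curry (N p : ℕ) : (gam (Fin N × Fin p)).map (fun x i j => x (i, j))
    = Measure.pi (fun _ : Fin N => Measure.pi (fun _ : Fin p => gaussianReal 0 1)) := by
  have h := Measure.infinitePi_map_curry (fun (_ : Fin N) (_ : Fin p) => gaussianReal 0 1)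
  simp only [Measure.infinitePi_eq_pi] at h
  exact h

lemma int_exp_poly (s : (ι → ℝ) → ℝ) (hs : Measurable s) (hb : ∀ t, |s t| ≤ 1)
    (q : MvPolynomial ι ℝ) : Integrable (fun x => Real.exp (1 / 8 * ∑ i, x i ^ 2) *
      (s x * MvPolynomial.eval x q)) (gam ι) := by
  have h1 : MemLp (fun x : ι → ℝ => Real.exp (1 / 8 * ∑ i, x i ^ 2)) 2 (gam ι) := by
    rw [memLp_two_iff_integrable_sq (Measurable.aestronglyMeasurable (by fun_prop))]
    refine (int_exp_gam (c := 1 / 4) (by norm_num)).congr (Filter.Eventually.of_forall fun x => ?_)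
    simp only
    rw [← Real.exp_nat_mul]; congr 1; push_cast; ring
  have h2 : MemLp (fun x : ι → ℝ => s x * MvPolynomial.eval x q) 2 (gam ι) := by
    rw [memLp_two_iff_integrable_sq (hs.fun_mul (measurable_mvpoly q)).aestronglyMeasurable]
    refine (integrable_s_mvpoly (fun x => s x ^ 2) (hs.pow_const 2) (fun t => ?_) (q ^ 2)).congr
      (Filter.Eventually.of_forall fun x => ?_)
    · rw [abs_pow]; exact pow_le_one₀ (abs_nonneg _) (hb t)
    · simp [mul_pow]
  exact h1.integrable_mul h2
end fin

section chamber
variable (p a : ℕ)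

/-- the open chamber -/
def Ch : Set (Fin p → ℝ) := {x | StrictAnti x ∧ ∀ i, 0 < x i}

lemma Ch_open : IsOpen (Ch p) := by
  have : Ch p = (⋂ i, ⋂ j, {x | i < j → x j < x i}) ∩ ⋂ i, {x | 0 < x i} := by
    ext x; simp [Ch, StrictAnti]
  rw [this]
  refine IsOpen.inter (isOpen_iInter_of_finite fun i => isOpen_iInter_of_finite fun j => ?_)
    (isOpen_iInter_of_finite fun i => isOpen_lt continuous_const (continuous_apply i))
  by_cases hij : i < j
  · simp only [hij, true_implies]
    exact isOpen_lt (continuous_apply j) (continuous_apply i)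
  · simp [hij]

open Classical in
noncomputable def ss : (Fin p → ℝ) → ℝ := Set.indicator (Ch p) (fun _ => 1)

lemma ss_meas : Measurable (ss p) := measurable_const.indicator (Ch_open p).measurableSet

lemma ss_bd (t) : |ss p t| ≤ 1 := by
  unfold ss Set.indicator; split_ifs <;> simp

lemma ss_mem {x} (h : x ∈ Ch p) : ss p x = 1 := Set.indicator_of_mem h _
lemma ss_notMem {x} (h : x ∉ Ch p) : ss p x = 0 := Set.indicator_of_notMem h _

lemma eval_DD (x : Fin p → ℝ) : MvPolynomial.eval x (DD p a)
    = (∏ i, x i ^ a) * ∏ i, ∏ j ∈ Finset.Ioi i, (x i ^ 2 - x j ^ 2) := by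
  simp [DD, map_prod]

lemma DD_pos {x} (h : x ∈ Ch p) : 0 < MvPolynomial.eval x (DD p a) := by
  rw [eval_DD]
  refine mul_pos (Finset.prod_pos fun i _ => pow_pos (h.2 i) _)
    (Finset.prod_pos fun i _ => Finset.prod_pos fun j hj => ?_)
  have := h.1 (Finset.mem_Ioi.1 hj)
  have := h.2 j
  nlinarith

lemma ss_loc (ha : 1 ≤ a) (x : Fin p → ℝ) (hx : MvPolynomial.eval x (DD p a) ≠ 0) :
    ∀ᶠ u in nhds x, ss p u = ss p x := by
  rw [eval_DD, mul_ne_zero_iff] at hx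
  have h1 : ∀ i, x i ≠ 0 := fun i h0 => by
    have := Finset.prod_ne_zero_iff.1 hx.1 i (Finset.mem_univ i)
    rw [h0, zero_pow (by omega)] at this
    exact this rfl
  have h2 : ∀ i j, i < j → x i ≠ x j := fun i j hij h0 => by
    have := Finset.prod_ne_zero_iff.1 (Finset.prod_ne_zero_iff.1 hx.2 i (Finset.mem_univ i)) j
      (Finset.mem_Ioi.2 hij)
    rw [h0] at this
    simp at this
  by_cases h : x ∈ Ch p
  · filter_upwards [(Ch_open p).mem_nhds h] with u hu
    rw [ss_mem p hu, ss_mem p h]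
  · have : (∃ i, x i < 0) ∨ ∃ i j, i < j ∧ x i < x j := by
      by_contra hcon
      push Not at hcon
      exact h ⟨fun i j hij => lt_of_le_of_ne (hcon.2 i j hij) (h2 i j hij).symm,
        fun i => lt_of_le_of_ne (hcon.1 i) (h1 i).symm⟩
    rcases this with ⟨i, hi⟩ | ⟨i, j, hij, hi⟩
    · filter_upwards [(isOpen_lt (continuous_apply i) continuous_const).mem_nhds hi] with u hu
      rw [ss_notMem p h, ss_notMem p]
      intro h3
      exact absurd (h3.2 i) (not_lt.2 (le_of_lt hu))
    · filter_upwards [(isOpen_lt (continuous_apply (A := fun _ => ℝ) i)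
        (continuous_apply j)).mem_nhds (Set.mem_ofPred_eq ▸ hi)] with u hu
      rw [ss_notMem p h, ss_notMem p]
      intro h3
      exact absurd (h3.1 hij) (not_lt.2 (le_of_lt hu))

noncomputable def ZZ : ℝ := ∫ x, ss p x * MvPolynomial.eval x (DD p a) ∂(gam (Fin p))

lemma sD_nonneg (x) : 0 ≤ ss p x * MvPolynomial.eval x (DD p a) := by
  by_cases h : x ∈ Ch p
  · rw [ss_mem p h, one_mul]; exact (DD_pos p a h).le
  · rw [ss_notMem p h, zero_mul]

instance : (gaussianReal 0 1).IsOpenPosMeasure :=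
  (gaussianReal_absolutelyContinuous' 0 one_ne_zero).isOpenPosMeasure

lemma ZZ_pos : 0 < ZZ p a := by
  unfold ZZ
  rw [integral_pos_iff_support_of_nonneg (sD_nonneg p a)
    (integrable_s_mvpoly _ (ss_meas p) (ss_bd p) _)]
  have : Ch p ⊆ Function.support (fun x => ss p x * MvPolynomial.eval x (DD p a)) := by
    intro x hx
    rw [Function.mem_support, ss_mem p hx, one_mul]
    exact (DD_pos p a hx).ne'
  refine lt_of_lt_of_le ?_ (measure_mono this)
  have hne : (Ch p).Nonempty := by
    refine ⟨fun i => (p : ℝ) - i, ?_, ?_⟩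
    · intro i j hij
      have : (i : ℝ) < j := by exact_mod_cast hij
      simp only; linarith
    · intro i
      have : (i : ℝ) < p := by exact_mod_cast i.2
      linarith
  unfold gam
  exact (Ch_open p).measure_pos _ hne
end chamber

section moments
open MvPolynomial
variable {ι : Type} [Fintype ι] [DecidableEq ι]

/-- weighted moment functional -/
noncomputable def LL (s : (ι → ℝ) → ℝ) (hs : Measurable s) (hb : ∀ t, |s t| ≤ 1)
    (D : MvPolynomial ι ℝ) (t : ℕ → MvPolynomial ι ℝ) : MvPolynomial ℕ ℝ →ₗ[ℝ] ℝ where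
  toFun Q := ∫ x, s x * eval x (D * aeval t Q) ∂(gam ι)
  map_add' P Q := by
    rw [← integral_add (integrable_s_mvpoly s hs hb _) (integrable_s_mvpoly s hs hb _)]
    congr 1; ext x; simp; ring
  map_smul' r Q := by
    rw [RingHom.id_apply, smul_eq_mul, ← integral_const_mul]
    congr 1; ext x; simp [smul_eval]; ring

lemma LL_zero (s : (ι → ℝ) → ℝ) (hs : Measurable s) (hb : ∀ t, |s t| ≤ 1)
    (D : MvPolynomial ι ℝ) (t : ℕ → MvPolynomial ι ℝ) (r : ℝ) (h0 : t 0 = C r) (Q) :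
    LL s hs hb D t (X 0 * Q) = r * LL s hs hb D t Q := by
  change ∫ x, s x * eval x (D * aeval t (X 0 * Q)) ∂(gam ι) = r * ∫ x, s x * eval x (D * aeval t Q) ∂(gam ι)
  rw [← integral_const_mul]
  congr 1; ext x; simp [h0]; ring

lemma LL_succ (s : (ι → ℝ) → ℝ) (hs : Measurable s) (hb : ∀ t, |s t| ≤ 1)
    (D : MvPolynomial ι ℝ) (hl : ∀ x, MvPolynomial.eval x D ≠ 0 → ∀ᶠ u in nhds x, s u = s x)
    (t : ℕ → MvPolynomial ι ℝ) (a k : ℕ)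
    (v : ι → MvPolynomial ι ℝ) (c : MvPolynomial ι ℝ) (hD : vf v D = c * D)
    (hX : ∑ i, X i * v i = t (k + 1)) (ht : ∀ j, vf v (t j) = C (2 * j : ℝ) * t (j + k))
    (hd : (∑ i, pderiv i (v i)) + c = aeval t (ck a k)) (Q) :
    LL s hs hb D t (X (k + 1) * Q) = LL s hs hb D t (wk k Q + ck a k * Q) := by
  have := loop s hs hb D hl v c hD (aeval t Q)
  rw [hX, hd, vf_aeval v t k ht] at this
  change ∫ x, s x * eval x (D * aeval t _) ∂(gam ι) = ∫ x, s x * eval x (D * aeval t _) ∂(gam ι)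
  rw [map_mul, aeval_X, this, map_add, map_mul]

lemma moments (N p : ℕ) (h : p < N) (Q : MvPolynomial ℕ ℝ) :
    ∫ x, ss p x * eval x (DD p (N - p) * aeval (tv p) Q) ∂(gam (Fin p))
      = ZZ p (N - p) * ∫ x, eval x (aeval (tm N p) Q) ∂(gam (Fin N × Fin p)) := by
  set L1 := LL (ss p) (ss_meas p) (ss_bd p) (DD p (N - p)) (tv p) with hL1
  set L2 := LL (ι := Fin N × Fin p) (fun _ => 1) measurable_const (by simp) 1 (tm N p) with hL2
  have key : L1 - ZZ p (N - p) • L2 = 0 := by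
    apply rec_unique (N - p) p
    · intro Q
      simp only [LinearMap.sub_apply, LinearMap.smul_apply, smul_eq_mul]
      rw [hL1, hL2, LL_zero _ _ _ _ _ p (by simp [tv]), LL_zero _ _ _ _ _ p (by simp [tm_zero])]
      ring
    · intro k Q
      simp only [LinearMap.sub_apply, LinearMap.smul_apply, smul_eq_mul]
      rw [hL1, hL2, LL_succ _ _ _ _ (ss_loc p (N - p) (by omega)) _ (N - p) k (vv p k) _
        (vf_DD p (N - p) k) (vv_X p k) (vf_tv p k) (vv_div p (N - p) k),
        LL_succ _ _ _ _ (by simp) _ (N - p) k (vm N p k) 0 (by simp) (vm_X N p k) (vf_tm N p k)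
          (vm_div N p k h.le)]
    · simp only [LinearMap.sub_apply, LinearMap.smul_apply, smul_eq_mul]
      have e1 : L1 1 = ZZ p (N - p) := by
        change ∫ x, ss p x * eval x (DD p (N - p) * aeval (tv p) 1) ∂(gam (Fin p)) = _
        simp [ZZ]
      have e2 : L2 1 = 1 := by
        change ∫ x, 1 * eval x (1 * aeval (tm N p) 1) ∂(gam (Fin N × Fin p)) = _
        simp
      rw [e1, e2]; ring
  have := LinearMap.congr_fun key Q
  simp only [LinearMap.sub_apply, LinearMap.smul_apply, smul_eq_mul, LinearMap.zero_apply] at this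
  have e2 : L2 Q = ∫ x, eval x (aeval (tm N p) Q) ∂(gam (Fin N × Fin p)) := by
    change ∫ x, 1 * eval x (1 * aeval (tm N p) Q) ∂(gam (Fin N × Fin p)) = _
    simp
  rw [← e2]
  exact sub_eq_zero.1 this

lemma eval_tm (N p : ℕ) (y : Fin N → Fin p → ℝ) (j : ℕ) :
    eval (fun z : Fin N × Fin p => y z.1 z.2) (tm N p j)
      = (((Matrix.of y)ᵀ * Matrix.of y) ^ j).trace := by
  have h1 : (MM N p).map (eval (fun z : Fin N × Fin p => y z.1 z.2)) = (Matrix.of y)ᵀ * Matrix.of y := by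
    rw [MM, Matrix.map_mul]
    congr 1 <;> (ext a b; simp [YY])
  rw [tm, ← h1]
  have := map_pow (RingHom.mapMatrix (m := Fin p) (eval (fun z : Fin N × Fin p => y z.1 z.2))) (MM N p) j
  simp only [RingHom.mapMatrix_apply] at this
  rw [← this]
  simp [Matrix.trace, map_sum]

lemma trace_svd (N p : ℕ) (y : Matrix (Fin N) (Fin p) ℝ) (d : Fin p → ℝ)
    (U : Matrix (Fin N) (Fin p) ℝ) (V : Matrix (Fin p) (Fin p) ℝ)
    (h : y = U * Matrix.diagonal d * Vᵀ) (hU : Uᵀ * U = 1) (hV : Vᵀ * V = 1) (j : ℕ) :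
    ((yᵀ * y) ^ j).trace = ∑ i, d i ^ (2 * j) := by
  have e : yᵀ * y = V * Matrix.diagonal (fun i => d i ^ 2) * Vᵀ := by
    rw [h]
    simp only [Matrix.transpose_mul, Matrix.transpose_transpose, Matrix.diagonal_transpose]
    calc V * (diagonal d * Uᵀ) * (U * diagonal d * Vᵀ)
        = V * (diagonal d * (Uᵀ * U) * diagonal d) * Vᵀ := by simp only [Matrix.mul_assoc]
      _ = _ := by
        rw [hU, Matrix.mul_one, Matrix.diagonal_mul_diagonal]
        simp [sq]
  have hp : ∀ j, (yᵀ * y) ^ j = V * (Matrix.diagonal (fun i => d i ^ 2)) ^ j * Vᵀ := by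
    intro j
    induction j with
    | zero => simp [mul_eq_one_comm.1 hV]
    | succ j ih =>
      rw [pow_succ, ih, e, pow_succ]
      calc _ = V * (diagonal (fun i => d i ^ 2) ^ j * ((Vᵀ * V) * diagonal (fun i => d i ^ 2))) * Vᵀ := by
            simp only [Matrix.mul_assoc]
        _ = _ := by rw [hV, Matrix.one_mul]
  rw [hp, Matrix.trace_mul_comm, ← Matrix.mul_assoc, hV, Matrix.one_mul, Matrix.diagonal_pow,
    Matrix.trace_diagonal]
  simp [pow_mul]

lemma eval_aeval_eq {κ : Type} [Fintype κ] (t : ℕ → MvPolynomial ι ℝ) (u : ℕ → MvPolynomial κ ℝ)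
    (x : ι → ℝ) (y : κ → ℝ) (h : ∀ j, eval x (t j) = eval y (u j)) (Q : MvPolynomial ℕ ℝ) :
    eval x (aeval t Q) = eval y (aeval u Q) := by
  induction Q using MvPolynomial.induction_on with
  | C a => simp
  | add q r hq hr => rw [map_add, map_add, hq, hr, map_add, map_add]
  | mul_X q i hq => rw [map_mul, map_mul, hq, map_mul, map_mul, aeval_X, aeval_X, h]
end moments
end SVG

namespace SVG
section final
variable (p a : ℕ)

/-- density with respect to the Gaussian measure -/
noncomputable def rho (x : Fin p → ℝ) : ℝ := (ZZ p a)⁻¹ * (ss p x * MvPolynomial.eval x (DD p a))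

lemma rho_nonneg (x) : 0 ≤ rho p a x :=
  mul_nonneg (inv_nonneg.2 (ZZ_pos p a).le) (sD_nonneg p a x)

lemma rho_meas : Measurable (rho p a) :=
  ((ss_meas p).mul (measurable_mvpoly _)).const_mul _

noncomputable def nu : Measure (Fin p → ℝ) :=
  (gam (Fin p)).withDensity (fun x => ENNReal.ofReal (rho p a x))

instance : IsFiniteMeasure (nu p a) :=
  isFiniteMeasure_withDensity_ofReal
    ((integrable_s_mvpoly _ (ss_meas p) (ss_bd p) _).const_mul _).2

lemma nu_supp : ∀ᵐ x ∂(nu p a), Antitone x ∧ ∀ i, 0 ≤ x i := by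
  rw [nu, ae_withDensity_iff (rho_meas p a).ennreal_ofReal]
  refine Filter.Eventually.of_forall fun x hx => ?_
  have h : x ∈ Ch p := by
    by_contra h
    apply hx
    rw [rho, ss_notMem p h]; simp
  exact ⟨h.1.antitone, fun i => (h.2 i).le⟩

lemma nu_integral (f : (Fin p → ℝ) → ℝ) :
    ∫ x, f x ∂(nu p a) = ∫ x, rho p a x * f x ∂(gam (Fin p)) := by
  rw [nu, integral_withDensity_eq_integral_toReal_smul (rho_meas p a).ennreal_ofReal (by simp)]
  congr 1; ext x
  rw [ENNReal.toReal_ofReal (rho_nonneg p a x), smul_eq_mul]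

lemma nu_int : Integrable (fun x => Real.exp (1 / 8 * ∑ i, x i ^ 2)) (nu p a) := by
  rw [nu, integrable_withDensity_iff_integrable_smul' (rho_meas p a).ennreal_ofReal (by simp)]
  refine ((int_exp_poly (ss p) (ss_meas p) (ss_bd p) (DD p a)).const_mul (ZZ p a)⁻¹).congr
    (Filter.Eventually.of_forall fun x => ?_)
  simp only
  rw [ENNReal.toReal_ofReal (rho_nonneg p a x), smul_eq_mul, rho]
  ring

lemma nu_eq : nu p a = volume.withDensity (fun x : Fin p → ℝ =>
            Set.indicator {x : Fin p → ℝ | StrictAnti x ∧ ∀ i, 0 < x i}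
              (fun x => ENNReal.ofReal
                (((ZZ p a)⁻¹ * (√(2 * Real.pi))⁻¹ ^ p) * Real.exp (-(∑ i : Fin p, x i ^ 2) / 2) *
                  (∏ i : Fin p, x i ^ a) *
                  ∏ i : Fin p, ∏ j ∈ Finset.Ioi i, (x i ^ 2 - x j ^ 2))) x) := by
  rw [nu, gam_density, ← withDensity_mul _ (by fun_prop) (rho_meas p a).ennreal_ofReal]
  congr 1
  ext x
  change _ = Set.indicator (Ch p) _ x
  rw [Pi.mul_apply, ← ENNReal.ofReal_mul (by positivity)]
  by_cases h : x ∈ Ch p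
  · rw [Set.indicator_of_mem h, rho, ss_mem p h, eval_DD, Fintype.card_fin]
    congr 1; ring
  · rw [Set.indicator_of_notMem h, rho, ss_notMem p h]; simp

end final
end SVG

/-- **Joint density of the singular values of a standard Gaussian matrix (Appendix, (A.2)).**
Let `Y ∈ ℝ^{N×p}` (`N > p ≥ 1`) have i.i.d. `N(0,1)` entries and let `d y` be the decreasing
nonnegative singular values of `y` (characterized by an SVD, measurably chosen).  Then there
is a constant `C_{N,p} > 0` such that the law of the singular value vector is absolutely
continuous with respect to Lebesgue measure on `ℝ^p` with density
`F(x) = C e^{-(∑ x_i²)/2} ∏ x_i^{N-p} ∏_{i<j} (x_i² - x_j²)` on the open region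
`{x₁ > x₂ > ⋯ > x_p > 0}` and `0` outside the closure of that region (the chosen density
below vanishes on the boundary, a Lebesgue-null set, so it is `F` on the region and `0` off
the closure). -/
theorem singular_value_density_gaussian
    (N p : ℕ) (hNp : p < N) (hp : 1 ≤ p)
    (d : (Fin N → Fin p → ℝ) → Fin p → ℝ)
    (hdm : Measurable d)
    (hSVD : ∀ y : Fin N → Fin p → ℝ,
      ∃ U : Matrix (Fin N) (Fin p) ℝ, ∃ V : Matrix (Fin p) (Fin p) ℝ,
        Matrix.of y = U * Matrix.diagonal (d y) * Vᵀ ∧ Uᵀ * U = 1 ∧ Vᵀ * V = 1)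
    (hanti : ∀ y, Antitone (d y))
    (hnonneg : ∀ y i, 0 ≤ d y i) :
    ∃ C : ℝ, 0 < C ∧
      Measure.map d (Measure.pi (fun _ : Fin N => Measure.pi (fun _ : Fin p =>
          gaussianReal 0 1)))
        = volume.withDensity (fun x : Fin p → ℝ =>
            Set.indicator {x : Fin p → ℝ | StrictAnti x ∧ ∀ i, 0 < x i}
              (fun x => ENNReal.ofReal
                (C * Real.exp (-(∑ i : Fin p, x i ^ 2) / 2) *
                  (∏ i : Fin p, x i ^ (N - p)) *
                  ∏ i : Fin p, ∏ j ∈ Finset.Ioi i, (x i ^ 2 - x j ^ 2))) x) := by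
  refine ⟨(SVG.ZZ p (N - p))⁻¹ * (√(2 * Real.pi))⁻¹ ^ p,
    mul_pos (inv_pos.2 (SVG.ZZ_pos p (N - p))) (by positivity), ?_⟩
  rw [← SVG.nu_eq, ← SVG.gam_curry]
  have hcm : Measurable (fun (x : Fin N × Fin p → ℝ) (i : Fin N) (j : Fin p) => x (i, j)) := by
    fun_prop
  rw [Measure.map_map hdm hcm]
  have hm := hdm.comp hcm
  set e : (Fin N × Fin p → ℝ) → (Fin p → ℝ) := d ∘ (fun x i j => x (i, j)) with he
  have htr : ∀ x : Fin N × Fin p → ℝ, ∀ j,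
      MvPolynomial.eval (e x) (SVG.tv p j) = MvPolynomial.eval x (SVG.tm N p j) := by
    intro x j
    obtain ⟨U, V, h1, h2, h3⟩ := hSVD (fun i j => x (i, j))
    have : MvPolynomial.eval x (SVG.tm N p j) = _ := SVG.eval_tm N p (fun i j => x (i, j)) j
    rw [this, SVG.trace_svd N p _ _ U V h1 h2 h3 j]
    simp [SVG.tv, he]
  have hQ : ∀ x : Fin N × Fin p → ℝ, ∀ Q, MvPolynomial.eval (e x) (MvPolynomial.aeval (SVG.tv p) Q)
      = MvPolynomial.eval x (MvPolynomial.aeval (SVG.tm N p) Q) :=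
    fun x Q => SVG.eval_aeval_eq _ _ _ _ (htr x) Q
  have hnorm : ∀ x : Fin N × Fin p → ℝ, ∑ i, e x i ^ 2 = ∑ z, x z ^ 2 := by
    intro x
    have h1 := htr x 1
    have h2 : MvPolynomial.eval x (SVG.tm N p 1) = ∑ z, x z ^ 2 := by
      simp only [SVG.tm, pow_one, SVG.MM, SVG.YY, Matrix.trace, Matrix.diag, Matrix.mul_apply,
        Matrix.transpose_apply, Matrix.of_apply, map_sum, map_mul, MvPolynomial.eval_X]
      rw [Fintype.sum_prod_type_right]
      simp [sq]
    rw [← h2, ← h1]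
    simp [SVG.tv]
  have : IsFiniteMeasure (Measure.map e (SVG.gam (Fin N × Fin p))) := by infer_instance
  refine SVG.determined (c := 1 / 8) _ _ ?_ (SVG.nu_supp p (N - p)) (by norm_num) ?_
    (SVG.nu_int p (N - p)) ?_
  · refine (ae_map_iff hm.aemeasurable ?_).2 (Filter.Eventually.of_forall fun x =>
      ⟨hanti _, hnonneg _⟩)
    have : {x : Fin p → ℝ | Antitone x ∧ ∀ i, 0 ≤ x i}
        = (⋂ i, ⋂ j, {x | i ≤ j → x j ≤ x i}) ∩ ⋂ i, {x | 0 ≤ x i} := by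
      ext x; simp [Antitone]
    rw [this]
    refine MeasurableSet.inter (MeasurableSet.iInter fun i => MeasurableSet.iInter fun j => ?_)
      (MeasurableSet.iInter fun i => measurableSet_le measurable_const (measurable_pi_apply _))
    by_cases hij : i ≤ j
    · simp only [hij, true_implies]
      exact measurableSet_le (measurable_pi_apply _) (measurable_pi_apply _)
    · simp [hij]
  · rw [integrable_map_measure (Measurable.aestronglyMeasurable (by fun_prop)) hm.aemeasurable]
    refine (SVG.int_exp_gam (c := 1 / 8) (by norm_num)).congr
      (Filter.Eventually.of_forall fun x => ?_)
    simp only [Function.comp_apply, hnorm]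
  · intro Q
    rw [integral_map hm.aemeasurable (SVG.measurable_mvpoly _).aestronglyMeasurable,
      SVG.nu_integral]
    simp_rw [hQ]
    have h := SVG.moments N p hNp Q
    have hz := (SVG.ZZ_pos p (N - p)).ne'
    have e1 : ∀ x, SVG.rho p (N - p) x * MvPolynomial.eval x (MvPolynomial.aeval (SVG.tv p) Q)
      = (SVG.ZZ p (N - p))⁻¹ * (SVG.ss p x * MvPolynomial.eval x
        (SVG.DD p (N - p) * MvPolynomial.aeval (SVG.tv p) Q)) := by
      intro x; rw [SVG.rho, map_mul]; ring
    simp_rw [e1]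
    rw [integral_const_mul, h, inv_mul_cancel_left₀ hz]
end
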